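/- arXiv:1311.4676 — 4 statements merged into one kernel-verified Lean document; each statement's English description precedes it below -/
import Mathlib

section
/- Let K be a perfect field and F|K an algebraic function field in one variable, i.e., there exists x ∈ F transcendental over K such that F is a finite extension of K(x). Let S be a nonempty finite set of places of F|K, and let O_S be the ring of S-integers. Then for every positive integer N there exists an element r ∈ O_S such that r cannot be written as e_1 + ⋯ + e_k for any 1 ≤ k ≤ N and units e_1, …, e_k of O_S. -/
/-- A place of the function field `F` over `K`: a valuation subring of `F`
containing (the image of) `K` and different from `F`. -/
def IsPlace (K F : Type*) [Field K] [Field F] [Algebra K F]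
    (O : ValuationSubring F) : Prop :=
  (∀ c : K, algebraMap K F c ∈ O) ∧ (O : Set F) ≠ Set.univ

/-- `f` is an `S`-integer: `f` belongs to every place of `F | K` outside of `S`. -/
def SInteger (K F : Type*) [Field K] [Field F] [Algebra K F]
    (S : Finset (ValuationSubring F)) (f : F) : Prop :=
  ∀ O : ValuationSubring F, IsPlace K F O → O ∉ S → f ∈ O

namespace SumUnits
section
open Polynomial

variable {K F : Type*} [Field K] [Field F] [Algebra K F]

/-- polynomial = X^k * q with q(0) ≠ 0 -/
lemma exists_X_pow_mul (p : K[X]) (hp : p ≠ 0) :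
    ∃ (k : ℕ) (q : K[X]), p = X ^ k * q ∧ q.coeff 0 ≠ 0 := by
  obtain ⟨q, hq, hn⟩ := Polynomial.exists_eq_pow_rootMultiplicity_mul_and_not_dvd p hp 0
  refine ⟨p.rootMultiplicity 0, q, by simpa using hq, ?_⟩
  rw [C_0, sub_zero, X_dvd_iff] at hn
  exact hn

lemma val_const {O : ValuationSubring F} (hO : ∀ c : K, algebraMap K F c ∈ O) {c : K}
    (hc : c ≠ 0) : O.valuation (algebraMap K F c) = 1 := by
  apply le_antisymm
  · exact (O.valuation_le_one_iff _).2 (hO c)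
  · have h := (O.valuation_le_one_iff _).2 (hO c⁻¹)
    have h0 : algebraMap K F c ≠ 0 := by simpa using hc
    rw [map_inv₀, map_inv₀] at h
    have hpos : 0 < O.valuation (algebraMap K F c) := by
      rw [zero_lt_iff]; simpa using hc
    exact (inv_le_one₀ hpos).1 h

lemma val_aeval_unit {O : ValuationSubring F} (hO : ∀ c : K, algebraMap K F c ∈ O) {a : F}
    (ha : O.valuation a < 1) {q : K[X]} (hq : q.coeff 0 ≠ 0) :
    O.valuation (aeval a q) = 1 := by
  have hmem : ∀ r : K[X], O.valuation (aeval a r) ≤ 1 := by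
    intro r
    rw [O.valuation_le_one_iff, aeval_eq_sum_range]
    refine sum_mem fun i _ => ?_
    rw [Algebra.smul_def]
    exact mul_mem (hO _) (pow_mem ((O.valuation_le_one_iff _).1 ha.le) _)
  have h1 : aeval a q = a * aeval a q.divX + algebraMap K F (q.coeff 0) := by
    conv_lhs => rw [← X_mul_divX_add q, map_add, map_mul, aeval_X, aeval_C]
  rw [h1]
  have h2 : O.valuation (a * aeval a q.divX) < O.valuation (algebraMap K F (q.coeff 0)) := by
    rw [val_const hO hq, map_mul]
    calc _ ≤ O.valuation a * 1 := by gcongr; exact hmem _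
      _ < 1 := by simpa using ha
  rw [Valuation.map_add_eq_of_lt_right _ h2, val_const hO hq]

lemma exists_val_aeval {p : K[X]} (hp : p ≠ 0) :
    ∃ k : ℕ, ∀ (O : ValuationSubring F), (∀ c : K, algebraMap K F c ∈ O) → ∀ a : F,
      O.valuation a < 1 → O.valuation (aeval a p) = O.valuation a ^ k := by
  obtain ⟨k, q, rfl, hq⟩ := exists_X_pow_mul p hp
  refine ⟨k, fun O hO a ha => ?_⟩
  rw [map_mul, map_mul, val_aeval_unit hO ha hq]
  simp

/-- integral elements over a subset of the place -/
lemma mem_of_isIntegral {O : ValuationSubring F} {A : Type*} [CommRing A] [Algebra A F]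
    (hA : ∀ a : A, algebraMap A F a ∈ O) {f : F} (hf : IsIntegral A f) : f ∈ O := by
  obtain ⟨p, hp, h0⟩ := hf
  have : IsIntegral O f := by
    refine ⟨p.map ((algebraMap A F).codRestrict O.toSubring hA), hp.map _, ?_⟩
    rw [eval₂_map]
    exact h0
  obtain ⟨y, hy⟩ := IsIntegrallyClosed.isIntegral_iff.1 this
  rw [← hy]; exact y.2

lemma transcendental_of_notMem {O : ValuationSubring F} (hO : ∀ c : K, algebraMap K F c ∈ O)
    {f : F} (hf : f ∉ O) : Transcendental K f := by
  intro h
  exact hf (mem_of_isIntegral hO (isAlgebraic_iff_isIntegral.1 h))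

lemma val_lt_one_of_inv {O : ValuationSubring F} {f : F} (hf : f ∉ O) :
    O.valuation f⁻¹ < 1 := by
  rw [← O.valuation_le_one_iff, not_le] at hf
  rw [map_inv₀]; exact inv_lt_one_of_one_lt₀ hf

lemma inv_notMem {O : ValuationSubring F} {f : F} (h0 : f ≠ 0) (hf : O.valuation f < 1) :
    f⁻¹ ∉ O := by
  rw [← O.valuation_le_one_iff, not_le, map_inv₀]
  exact (one_lt_inv₀ (by simpa [zero_lt_iff] using h0)).2 hf

/-- an element in all places is algebraic -/
lemma isAlgebraic_of_forall {f : F} (h : ∀ O : ValuationSubring F, IsPlace K F O → f ∈ O) :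
    IsAlgebraic K f := by
  by_contra hf
  have hR : IsIntegrallyClosedIn (integralClosure K F).toSubring F :=
    inferInstanceAs (IsIntegrallyClosedIn (integralClosure K F) F)
  have hfR : f ∉ (integralClosure K F).toSubring := fun h => hf (IsIntegral.isAlgebraic h)
  obtain ⟨V, hV, hfV⟩ := Subring.exists_le_valuationSubring_of_isIntegrallyClosedIn hfR
  refine hfV (h V ⟨fun c => hV (isIntegral_algebraMap), fun h => hfV ?_⟩)
  have : f ∈ (V : Set F) := h ▸ Set.mem_univ f
  exact this

lemma aeval_mem {O : ValuationSubring F} (hO : ∀ c : K, algebraMap K F c ∈ O)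
    {a : F} (ha : a ∈ O) (r : K[X]) : aeval a r ∈ O := by
  rw [aeval_eq_sum_range]
  refine sum_mem fun i _ => ?_
  rw [Algebra.smul_def]
  exact mul_mem (hO _) (pow_mem ha _)

open scoped IntermediateField.algebraAdjoinAdjoin in
lemma exists_mul_mem (a : F)
    (hfin : FiniteDimensional (IntermediateField.adjoin K ({a} : Set F)) F) (b : F) :
    ∃ r : K[X], r ≠ 0 ∧ aeval a r ≠ 0 ∧ ∀ O : ValuationSubring F,
      (∀ c : K, algebraMap K F c ∈ O) → a ∈ O → aeval a r * b ∈ O := by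
  have halg : IsAlgebraic (Algebra.adjoin K ({a} : Set F)) b := by
    have : IsAlgebraic (IntermediateField.adjoin K ({a} : Set F)) b :=
      Algebra.IsAlgebraic.isAlgebraic b
    exact (IsFractionRing.isAlgebraic_iff (Algebra.adjoin K ({a} : Set F))
      (IntermediateField.adjoin K ({a} : Set F)) F).2 this
  obtain ⟨y, hy0, hy⟩ := halg.exists_integral_multiple
  obtain ⟨y, hy'⟩ := y
  have hl := hy'
  rw [Algebra.adjoin_singleton_eq_range_aeval] at hl
  obtain ⟨r, hr⟩ := hl
  change aeval a r = y at hr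
  have hy0' : y ≠ 0 := fun h => hy0 (Subtype.ext h)
  refine ⟨r, ?_, hr ▸ hy0', fun O hO ha => ?_⟩
  · rintro rfl; exact hy0' (by rw [← hr]; simp)
  · rw [hr]
    refine mem_of_isIntegral (A := Algebra.adjoin K ({a} : Set F)) ?_ hy
    rintro ⟨c, hc⟩
    rw [Algebra.adjoin_singleton_eq_range_aeval] at hc
    obtain ⟨r, rfl⟩ := hc
    exact aeval_mem hO ha r

/-- hypothesis: `F` finite over each `K(y)` -/
def FinHyp (K F : Type*) [Field K] [Field F] [Algebra K F] : Prop :=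
  ∀ y : F, Transcendental K y → FiniteDimensional (IntermediateField.adjoin K ({y} : Set F)) F

lemma transcendental_of_lt {O : ValuationSubring F} (hO : ∀ c : K, algebraMap K F c ∈ O)
    {a : F} (ha : O.valuation a < 1) (ha0 : a ≠ 0) : Transcendental K a := by
  rw [Transcendental, ← IsAlgebraic.inv_iff]
  exact transcendental_of_notMem hO (inv_notMem ha0 ha)

/-- archimedean property -/
lemma arch (H : FinHyp K F)
    {O : ValuationSubring F} (hO : ∀ c : K, algebraMap K F c ∈ O)
    {a : F} (ha : O.valuation a < 1) (ha0 : a ≠ 0) (b : F) :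
    ∃ n : ℕ, O.valuation (a ^ n * b) ≤ 1 := by
  obtain ⟨r, hr0, -, hr⟩ := exists_mul_mem a (H a (transcendental_of_lt hO ha ha0)) b
  obtain ⟨k, hk⟩ := exists_val_aeval (F := F) hr0
  refine ⟨k, ?_⟩
  rw [map_mul, map_pow, ← hk O hO a ha, ← map_mul]
  rw [O.valuation_le_one_iff]
  exact hr O hO ((O.valuation_le_one_iff _).1 ha.le)

/-- strict version, valid for all large exponents -/
lemma arch_lt (H : FinHyp K F)
    {O : ValuationSubring F} (hO : ∀ c : K, algebraMap K F c ∈ O)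
    {a : F} (ha : O.valuation a < 1) (b : F) :
    ∃ n : ℕ, ∀ m, n ≤ m → O.valuation (a ^ m * b) < 1 := by
  by_cases ha0 : a = 0
  · refine ⟨1, fun m hm => ?_⟩
    rw [ha0, zero_pow (by omega)]; simp
  obtain ⟨n, hn⟩ := arch H hO ha ha0 b
  refine ⟨n + 1, fun m hm => ?_⟩
  obtain ⟨j, rfl⟩ := Nat.exists_eq_add_of_le hm
  have : a ^ (n + 1 + j) * b = a ^ (j + 1) * (a ^ n * b) := by ring
  rw [this, map_mul, map_pow]
  calc _ ≤ O.valuation a ^ (j + 1) * 1 := by gcongr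
    _ < 1 := by rw [mul_one]; exact pow_lt_one₀ zero_le' ha (by omega)

lemma IsPlace.exists_notMem {O : ValuationSubring F} (h : IsPlace K F O) : ∃ f, f ∉ O := by
  by_contra hc
  push Not at hc
  exact h.2 (Set.eq_univ_of_forall hc)

lemma eq_of_le (H : FinHyp K F) {O₁ O₀ : ValuationSubring F} (h1 : IsPlace K F O₁)
    (h0 : IsPlace K F O₀) (hle : ∀ f ∈ O₁, f ∈ O₀) : O₁ = O₀ := by
  refine SetLike.ext fun b => ⟨hle b, fun hb => ?_⟩
  by_contra hb1
  obtain ⟨c, hc⟩ := IsPlace.exists_notMem h0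
  have hb0 : b ≠ 0 := by rintro rfl; exact hb1 O₁.zero_mem
  obtain ⟨n, hn⟩ := arch H h1.1 (val_lt_one_of_inv hb1) (inv_ne_zero hb0) c
  rw [O₁.valuation_le_one_iff] at hn
  apply hc
  have : c = b ^ n * (b⁻¹ ^ n * c) := by
    rw [← mul_assoc, ← mul_pow, mul_inv_cancel₀ hb0, one_pow, one_mul]
  rw [this]
  exact mul_mem (pow_mem hb n) (hle _ hn)

/-- weak approximation -/
lemma approx (H : FinHyp K F) (O₀ : ValuationSubring F) (h0 : IsPlace K F O₀)
    (T : Finset (ValuationSubring F)) (hT : ∀ O ∈ T, IsPlace K F O) (hT0 : O₀ ∉ T) :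
    ∃ f : F, f ∉ O₀ ∧ ∀ O ∈ T, O.valuation f < 1 := by
  classical
  induction T using Finset.induction_on with
  | empty =>
    obtain ⟨c, hc⟩ := IsPlace.exists_notMem h0
    exact ⟨c, hc, by simp⟩
  | insert O₁ T hO₁ ih =>
    obtain ⟨f, hf0, hf⟩ := ih (fun O hO => hT O (Finset.mem_insert_of_mem hO))
      (fun h => hT0 (Finset.mem_insert_of_mem h))
    have h1 := hT O₁ (Finset.mem_insert_self _ _)
    have hne : O₁ ≠ O₀ := fun h => hT0 (h ▸ Finset.mem_insert_self _ _)
    obtain ⟨g, hg0, hg1⟩ : ∃ g, g ∉ O₀ ∧ O₁.valuation g < 1 := by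
      obtain ⟨a, ha1, ha0⟩ : ∃ a, a ∈ O₁ ∧ a ∉ O₀ := by
        by_contra hc; push Not at hc; exact hne (eq_of_le H h1 h0 hc)
      obtain ⟨b, hb0, hb1⟩ : ∃ b, b ∈ O₀ ∧ b ∉ O₁ := by
        by_contra hc; push Not at hc; exact hne (eq_of_le H h0 h1 hc).symm
      have hbn : b ≠ 0 := by rintro rfl; exact hb1 O₁.zero_mem
      refine ⟨a * b⁻¹, fun h => ha0 ?_, ?_⟩
      · have : a = a * b⁻¹ * b := by field_simp
        rw [this]; exact mul_mem h hb0
      · rw [map_mul]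
        calc _ ≤ 1 * O₁.valuation b⁻¹ := by
              gcongr; exact (O₁.valuation_le_one_iff _).2 ha1
          _ < 1 := by rw [one_mul]; exact val_lt_one_of_inv hb1
    have hN : ∃ n : ℕ, 1 ≤ n ∧ ∀ O ∈ T, O.valuation (f ^ n * g) < 1 := by
      have : ∀ O : ValuationSubring F, ∃ n : ℕ, O ∈ T → ∀ m, n ≤ m → O.valuation (f ^ m * g) < 1 := by
        intro O
        by_cases hO : O ∈ T
        · obtain ⟨n, hn⟩ := arch_lt H (hT O (Finset.mem_insert_of_mem hO)).1 (hf O hO) g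
          exact ⟨n, fun _ => hn⟩
        · exact ⟨0, fun h => absurd h hO⟩
      choose n hn using this
      refine ⟨T.sup n + 1, by omega, fun O hO => hn O hO _ ?_⟩
      have := Finset.le_sup (f := n) hO
      omega
    obtain ⟨n, hn1, hn⟩ := hN
    have hv0f : 1 < O₀.valuation f := by rwa [← O₀.valuation_le_one_iff, not_le] at hf0
    have hv0g : 1 < O₀.valuation g := by rwa [← O₀.valuation_le_one_iff, not_le] at hg0
    have hunit : ∀ O : ValuationSubring F, 1 < O.valuation f →
        O.valuation (f ^ n * (1 + f ^ n)⁻¹) = 1 := by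
      intro O hO
      have h2 : O.valuation (1 : F) < O.valuation (f ^ n) := by
        rw [map_one, map_pow]; exact one_lt_pow₀ hO (by omega)
      rw [map_mul, map_inv₀, Valuation.map_add_eq_of_lt_right _ h2]
      refine mul_inv_cancel₀ ?_
      rw [map_one] at h2
      exact (zero_lt_one.trans h2).ne'
    by_cases hf1 : f ∈ O₁
    · refine ⟨f ^ n * g, ?_, ?_⟩
      · rw [← O₀.valuation_le_one_iff, not_le, map_mul, map_pow]
        exact one_lt_mul_of_lt_of_le' (one_lt_pow₀ hv0f (by omega)) hv0g.le
      · intro O hO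
        rcases Finset.mem_insert.1 hO with rfl | hO
        · rw [map_mul, map_pow]
          calc _ ≤ 1 * O.valuation g := by
                gcongr; exact pow_le_one₀ zero_le' ((O.valuation_le_one_iff _).2 hf1)
            _ < 1 := by rwa [one_mul]
        · exact hn O hO
    · have hv1f : 1 < O₁.valuation f := by rwa [← O₁.valuation_le_one_iff, not_le] at hf1
      refine ⟨f ^ n * (1 + f ^ n)⁻¹ * g, ?_, ?_⟩
      · rw [← O₀.valuation_le_one_iff, not_le, map_mul, hunit _ hv0f, one_mul]
        exact hv0g
      · intro O hO
        rcases Finset.mem_insert.1 hO with rfl | hO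
        · rwa [map_mul, hunit _ hv1f, one_mul]
        · have h2 : O.valuation (f ^ n) < O.valuation 1 := by
            rw [map_one, map_pow]; exact pow_lt_one₀ zero_le' (hf O hO) (by omega)
          have : f ^ n * (1 + f ^ n)⁻¹ * g = (1 + f ^ n)⁻¹ * (f ^ n * g) := by ring
          rw [this, map_mul, map_inv₀, Valuation.map_add_eq_of_lt_left _ h2, map_one, inv_one,
            one_mul]
          exact hn O hO

end
end SumUnits

namespace SumUnits
section
open Polynomial

variable {K F : Type*} [Field K] [Field F] [Algebra K F]

open scoped IntermediateField.algebraAdjoinAdjoin in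
lemma exists_relation (a : F)
    (hfin : FiniteDimensional (IntermediateField.adjoin K ({a} : Set F)) F)
    {ι : Type*} [Fintype ι]
    (hι : Module.finrank (IntermediateField.adjoin K ({a} : Set F)) F < Fintype.card ι)
    (f : ι → F) :
    ∃ p : ι → K[X], (∃ i, p i ≠ 0) ∧ ∑ i, aeval a (p i) * f i = 0 := by
  have h1 : ¬ LinearIndependent (IntermediateField.adjoin K ({a} : Set F)) f := fun h =>
    absurd h.fintype_card_le_finrank (by omega)
  rw [← LinearIndependent.iff_fractionRing (Algebra.adjoin K ({a} : Set F)),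
    Fintype.not_linearIndependent_iff] at h1
  obtain ⟨g, hg, i, hi⟩ := h1
  have h2 : ∀ i, ∃ p : K[X], aeval a p = (g i : F) := by
    intro i
    obtain ⟨c, hc⟩ := g i
    have hl := hc
    rw [Algebra.adjoin_singleton_eq_range_aeval] at hl
    exact hl
  choose p hp using h2
  refine ⟨p, ⟨i, ?_⟩, ?_⟩
  · intro h
    apply hi
    apply Subtype.ext
    rw [← hp, h]; simp
  · simp_rw [hp]
    exact hg

lemma sum_ne_zero_of_dominant {Γ : Type*} [LinearOrderedCommGroupWithZero Γ] (v : Valuation F Γ)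
    {ι : Type*} [Fintype ι] (t : ι → F) (i₀ : ι) (h0 : t i₀ ≠ 0)
    (h : ∀ i, i ≠ i₀ → v (t i) < v (t i₀)) : ∑ i, t i ≠ 0 := by
  classical
  intro hs
  rw [← Finset.add_sum_erase _ _ (Finset.mem_univ i₀)] at hs
  have h1 : v (∑ i ∈ Finset.univ.erase i₀, t i) < v (t i₀) := by
    refine Valuation.map_sum_lt v ?_ ?_
    · simpa using h0
    · intro i hi
      exact h i (Finset.ne_of_mem_erase hi)
  rw [eq_neg_of_add_eq_zero_left hs, Valuation.map_neg] at h1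
  exact lt_irrefl _ h1

/-- finitely many poles -/
lemma finite_poles (H : FinHyp K F) (y : F) :
    {O : ValuationSubring F | IsPlace K F O ∧ y ∉ O}.Finite := by
  classical
  by_contra hinf
  have hinf : {O : ValuationSubring F | IsPlace K F O ∧ y ∉ O}.Infinite := hinf
  obtain ⟨O, hO, hyO⟩ := hinf.nonempty
  have hy0 : y ≠ 0 := by rintro rfl; exact hyO O.zero_mem
  have htr : Transcendental K y⁻¹ :=
    transcendental_of_lt hO.1 (val_lt_one_of_inv hyO) (inv_ne_zero hy0)
  have hf := H _ htr
  obtain ⟨T, hT, hcard⟩ := hinf.exists_subset_card_eq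
    (Module.finrank (IntermediateField.adjoin K ({y⁻¹} : Set F)) F + 1)
  have happ : ∀ O : T, ∃ f : F, f ∉ O.1 ∧ ∀ O' ∈ T.erase O.1, O'.valuation f < 1 := by
    intro O
    exact approx H O.1 (hT O.2).1 _ (fun O' hO' => (hT (Finset.mem_of_mem_erase hO')).1)
      (Finset.notMem_erase _ _)
  choose f hf0 hf1 using happ
  obtain ⟨p, ⟨i, hi⟩, hsum⟩ := exists_relation y⁻¹ hf (ι := T) (by simp [hcard]) f
  have hk : ∀ i : T, ∃ k : ℕ, p i ≠ 0 → ∀ (O : ValuationSubring F),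
      (∀ c : K, algebraMap K F c ∈ O) → ∀ a : F,
      O.valuation a < 1 → O.valuation (aeval a (p i)) = O.valuation a ^ k := by
    intro i
    by_cases h : p i = 0
    · exact ⟨0, fun h' => absurd h h'⟩
    · obtain ⟨k, hk⟩ := exists_val_aeval (F := F) h
      exact ⟨k, fun _ => hk⟩
  choose k hk using hk
  obtain ⟨i₀, hi₀, hmin⟩ := Finset.exists_min_image (Finset.univ.filter fun i => p i ≠ 0) k
    ⟨i, by simpa using hi⟩
  have hp0 : p i₀ ≠ 0 := by simpa using hi₀
  refine sum_ne_zero_of_dominant i₀.1.valuation (fun i => aeval y⁻¹ (p i) * f i) i₀ ?_ ?_ hsum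
  · refine mul_ne_zero ?_ ?_
    · intro h; exact hp0 ((transcendental_iff.1 htr) _ h)
    · intro h; apply hf0 i₀; rw [h]; exact i₀.1.zero_mem
  · intro i hne
    have hO := (hT i₀.2).1.1
    have hlt := val_lt_one_of_inv (hT i₀.2).2
    have hpos : 0 < i₀.1.valuation y⁻¹ := by
      rw [zero_lt_iff]; simpa using hy0
    have hv0 : 1 < i₀.1.valuation (f i₀) := by
      have := hf0 i₀
      rwa [← i₀.1.valuation_le_one_iff, not_le] at this
    have hvi : i₀.1.valuation (f i) < 1 := by
      refine hf1 i i₀.1 (Finset.mem_erase.2 ⟨fun h => hne (Subtype.ext h.symm), i₀.2⟩)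
    simp only [map_mul]
    rw [hk i₀ hp0 _ hO _ hlt]
    by_cases hpi : p i = 0
    · rw [hpi]
      simp only [map_zero, zero_mul]
      exact mul_pos (pow_pos hpos _) (zero_lt_one.trans hv0)
    · rw [hk i hpi _ hO _ hlt]
      have hkk : k i₀ ≤ k i := hmin i (by simpa using hpi)
      calc _ ≤ i₀.1.valuation y⁻¹ ^ k i₀ * i₀.1.valuation (f i) := by
            gcongr ?_ * _
            exact pow_le_pow_of_le_one zero_le' hlt.le hkk
        _ < _ := by
            apply mul_lt_mul_of_pos_left (hvi.trans hv0) (pow_pos hpos _)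

/-- value groups are finitely generated -/
lemma valueGroup_fg (H : FinHyp K F) (O : ValuationSubring F) (hO : IsPlace K F O) :
    Module.Finite ℤ (Additive (O.ValueGroup)ˣ) := by
  classical
  obtain ⟨y, hy⟩ := IsPlace.exists_notMem hO
  have hy0 : y ≠ 0 := by rintro rfl; exact hy O.zero_mem
  have hlt := val_lt_one_of_inv hy
  have htr : Transcendental K y⁻¹ :=
    transcendental_of_lt hO.1 hlt (inv_ne_zero hy0)
  have hf := H _ htr
  set a := y⁻¹ with ha
  have ha0 : a ≠ 0 := inv_ne_zero hy0
  have hva0 : O.valuation a ≠ 0 := by simpa using ha0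
  let u : (O.ValueGroup)ˣ := Units.mk0 (O.valuation a) hva0
  let Z : AddSubgroup (Additive (O.ValueGroup)ˣ) := AddSubgroup.zmultiples (Additive.ofMul u)
  have hfinq : Finite (Additive (O.ValueGroup)ˣ ⧸ Z) := by
    by_contra hinf
    rw [not_finite_iff_infinite] at hinf
    obtain ⟨T, hT⟩ := Infinite.exists_subset_card_eq (Additive (O.ValueGroup)ˣ ⧸ Z)
      (Module.finrank (IntermediateField.adjoin K ({a} : Set F)) F + 1)
    have hl : ∀ t : T, ∃ f : F, ∃ h : O.valuation f ≠ 0,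
        (QuotientAddGroup.mk (Additive.ofMul (Units.mk0 (O.valuation f) h)) :
          Additive (O.ValueGroup)ˣ ⧸ Z) = t.1 := by
      intro t
      obtain ⟨g, hg⟩ := QuotientAddGroup.mk_surjective t.1
      obtain ⟨f, hf⟩ := O.valuation_surjective (g.toMul : O.ValueGroup)
      have h0 : O.valuation f ≠ 0 := by rw [hf]; exact Units.ne_zero _
      refine ⟨f, h0, ?_⟩
      rw [← hg]
      congr 1
      apply Additive.toMul.injective
      apply Units.ext
      exact hf
    choose f hf0 hft using hl
    obtain ⟨p, ⟨i, hi⟩, hsum⟩ := exists_relation a hf (ι := T) (by simp [hT]) f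
    have hk : ∀ i : T, ∃ k : ℕ, p i ≠ 0 → O.valuation (aeval a (p i)) = O.valuation a ^ k := by
      intro i
      by_cases h : p i = 0
      · exact ⟨0, fun h' => absurd h h'⟩
      · obtain ⟨k, hk⟩ := exists_val_aeval (F := F) h
        exact ⟨k, fun _ => hk O hO.1 a hlt⟩
    choose k hk using hk
    obtain ⟨i₀, hi₀, hmax⟩ := Finset.exists_max_image (Finset.univ.filter fun i => p i ≠ 0)
      (fun i => O.valuation (aeval a (p i) * f i)) ⟨i, by simpa using hi⟩
    have hp0 : p i₀ ≠ 0 := by simpa using hi₀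
    have ht0 : aeval a (p i₀) * f i₀ ≠ 0 := by
      refine mul_ne_zero ?_ ?_
      · intro h; exact hp0 ((transcendental_iff.1 htr) _ h)
      · intro h; apply hf0 i₀; rw [h]; simp
    refine sum_ne_zero_of_dominant O.valuation (fun i => aeval a (p i) * f i) i₀ ht0 ?_ hsum
    intro i hne
    by_cases hpi : p i = 0
    · simp only [hpi, map_zero, zero_mul]
      rw [zero_lt_iff]; simpa using ht0
    refine lt_of_le_of_ne (hmax i (by simpa using hpi)) fun heq => hne ?_
    simp only [map_mul] at heq
    rw [hk i hpi, hk i₀ hp0] at heq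
    apply Subtype.ext
    rw [← hft i, ← hft i₀, QuotientAddGroup.eq]
    refine AddSubgroup.mem_zmultiples_iff.2 ⟨(k i : ℤ) - k i₀, ?_⟩
    apply Additive.toMul.injective
    apply Units.ext
    simp only [toMul_zsmul, toMul_ofMul, toMul_add, toMul_neg, Units.val_mul, u]
    rw [zpow_sub, zpow_natCast, zpow_natCast]
    simp only [Units.val_mul, Units.val_pow_eq_pow_val, Units.val_mk0, Units.val_inv_eq_inv_val]
    have h1 := hf0 i
    have h2 : O.valuation a ^ k i₀ ≠ 0 := pow_ne_zero _ hva0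
    field_simp
    exact heq
  have : Module.Finite ℤ (AddSubgroup.toIntSubmodule Z) := by
    rw [Module.Finite.iff_fg]
    refine ⟨{Additive.ofMul u}, ?_⟩
    apply le_antisymm
    · rw [Submodule.span_le]
      simp [Z]
    · rintro x hx
      obtain ⟨n, rfl⟩ := AddSubgroup.mem_zmultiples_iff.1 (show x ∈ Z from hx)
      exact Submodule.smul_mem _ n (Submodule.subset_span (by simp))
  have : Module.Finite ℤ (Additive (O.ValueGroup)ˣ ⧸ (AddSubgroup.toIntSubmodule Z)) := by
    have : Finite (Additive (O.ValueGroup)ˣ ⧸ (AddSubgroup.toIntSubmodule Z)) := hfinq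
    infer_instance
  exact Module.Finite.of_submodule_quotient (AddSubgroup.toIntSubmodule Z)

end
end SumUnits

namespace SumUnits
section
open Polynomial

variable {K F : Type*} [Field K] [Field F] [Algebra K F]

lemma val_const_le {O : ValuationSubring F} (hO : ∀ c : K, algebraMap K F c ∈ O) (c : K) :
    O.valuation (algebraMap K F c) ≤ 1 := (O.valuation_le_one_iff _).2 (hO c)

lemma val_aeval_le {O : ValuationSubring F} (hO : ∀ c : K, algebraMap K F c ∈ O) {y : F}
    (hy : 1 ≤ O.valuation y) (p : K[X]) {d : ℕ} (hd : p.natDegree ≤ d) :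
    O.valuation (aeval y p) ≤ O.valuation y ^ d := by
  rw [aeval_eq_sum_range]
  refine Valuation.map_sum_le _ fun i hi => ?_
  rw [Algebra.smul_def, map_mul, map_pow]
  calc _ ≤ 1 * O.valuation y ^ i := by gcongr; exact val_const_le hO _
    _ ≤ O.valuation y ^ d := by
      rw [one_mul]
      exact pow_le_pow_right₀ hy (by have := Finset.mem_range.1 hi; omega)

lemma val_aeval_eq {O : ValuationSubring F} (hO : ∀ c : K, algebraMap K F c ∈ O) {y : F}
    (hy : 1 < O.valuation y) (p : K[X]) (hp : p ≠ 0) :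
    O.valuation (aeval y p) = O.valuation y ^ p.natDegree := by
  have hlead : O.valuation (algebraMap K F p.leadingCoeff * y ^ p.natDegree) =
      O.valuation y ^ p.natDegree := by
    rw [map_mul, val_const hO (leadingCoeff_ne_zero.2 hp), one_mul, map_pow]
  have h1 : aeval y p = aeval y p.eraseLead + algebraMap K F p.leadingCoeff * y ^ p.natDegree := by
    conv_lhs => rw [← eraseLead_add_monomial_natDegree_leadingCoeff p, map_add, aeval_monomial]
  by_cases h0 : p.natDegree = 0
  · rw [natDegree_eq_zero] at h0
    obtain ⟨c, rfl⟩ := h0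
    have : c ≠ 0 := by rintro rfl; simp at hp
    simp [val_const hO this]
  · rw [h1, ← hlead]
    apply Valuation.map_add_eq_of_lt_right
    rw [hlead]
    calc _ ≤ O.valuation y ^ (p.natDegree - 1) :=
          val_aeval_le hO hy.le _ (eraseLead_natDegree_le p)
      _ < _ := pow_lt_pow_right₀ hy (by omega)

lemma div_mem {O : ValuationSubring F} (hO : ∀ c : K, algebraMap K F c ∈ O) {y : F}
    (hy : y ∉ O) (p q : K[X]) (hq : q ≠ 0) (h : p.natDegree ≤ q.natDegree) :
    aeval y p / aeval y q ∈ O := by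
  have hy : 1 < O.valuation y := by rwa [← O.valuation_le_one_iff, not_le] at hy
  rw [← O.valuation_le_one_iff, map_div₀, val_aeval_eq hO hy q hq]
  refine div_le_one_of_le₀ (val_aeval_le hO hy.le p h) (by simp)

/-- a `K`-subspace: intersection of places with a property -/
def interSub (K : Type*) {F : Type*} [Field K] [Field F] [Algebra K F]
    (P : ValuationSubring F → Prop) : Submodule K F where
  carrier := {g | ∀ O, IsPlace K F O → P O → g ∈ O}
  add_mem' := fun ha hb O hO hP => O.add_mem _ _ (ha O hO hP) (hb O hO hP)
  zero_mem' := fun O _ _ => O.zero_mem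
  smul_mem' := fun c g hg O hO hP => by
    rw [Algebra.smul_def]
    exact O.mul_mem _ _ (hO.1 c) (hg O hO hP)

lemma mem_interSub {P : ValuationSubring F → Prop} {g : F} :
    g ∈ interSub K P ↔ ∀ O, IsPlace K F O → P O → g ∈ O := Iff.rfl

lemma finite_h1 (H : FinHyp K F) (y : F) (hy : Transcendental K y) :
    Module.Finite K (F ⧸ (interSub K (fun O => y ∈ O) ⊔ interSub K (fun O => y ∉ O))) := by
  classical
  have hfin := H y hy
  have hy0 : y ≠ 0 := by rintro rfl; exact hy (isAlgebraic_zero)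
  set M0 := interSub K (fun O => y ∈ O) with hM0
  set V := interSub K (fun O => y ∉ O) with hV
  let n := Module.finrank (IntermediateField.adjoin K ({y} : Set F)) F
  let b := Module.finBasis (IntermediateField.adjoin K ({y} : Set F)) F
  have hr := fun i => exists_mul_mem y hfin (b i)
  choose r hr0 hry hrO using hr
  let w : Fin n → F := fun i => aeval y (r i) * b i
  have hw : ∀ i, ∀ O, IsPlace K F O → y ∈ O → w i ∈ O := fun i O hO hyO => hrO i O hO.1 hyO
  have hj : ∃ j : ℕ, ∀ i, ∀ O, IsPlace K F O → y ∉ O → (y⁻¹) ^ j * w i ∈ O := by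
    have h1 : ∀ (O : ValuationSubring F) (i : Fin n), ∃ j : ℕ, IsPlace K F O → y ∉ O →
        ∀ m, j ≤ m → O.valuation ((y⁻¹) ^ m * w i) < 1 := by
      intro O i
      by_cases hO : IsPlace K F O
      · by_cases hyO : y ∈ O
        · exact ⟨0, fun _ h => absurd hyO h⟩
        · obtain ⟨j, hj⟩ := arch_lt H hO.1 (val_lt_one_of_inv hyO) (w i)
          exact ⟨j, fun _ _ => hj⟩
      · exact ⟨0, fun h => absurd h hO⟩
    choose j hj using h1
    refine ⟨(finite_poles H y).toFinset.sup fun O => Finset.univ.sup (j O), fun i O hO hyO => ?_⟩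
    rw [← O.valuation_le_one_iff]
    refine (hj O i hO hyO _ ?_).le
    calc j O i ≤ Finset.univ.sup (j O) := Finset.le_sup (Finset.mem_univ i)
      _ ≤ _ := Finset.le_sup (f := fun O => Finset.univ.sup (j O)) (by simp [hO, hyO])
  obtain ⟨j, hj⟩ := hj
  let s : Fin n × Fin (j + 1) → F := fun t => (y⁻¹) ^ (t.2 : ℕ) * w t.1
  let N : Submodule K F := M0 ⊔ V ⊔ Submodule.span K (Set.range s)
  have hM0N : M0 ≤ N := le_sup_left.trans le_sup_left
  have hVN : V ≤ N := le_sup_right.trans le_sup_left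
  have hterm : ∀ (p q : K[X]) (i : Fin n), q ≠ 0 → aeval y p / aeval y q * w i ∈ N := by
    intro p q i hq
    have hqy : aeval y q ≠ 0 := fun h => hq ((transcendental_iff.1 hy) _ h)
    have hdiv := EuclideanDomain.div_add_mod (p * X ^ j) q
    have e1 : aeval y p * y ^ j = aeval y q * aeval y (p * X ^ j / q) + aeval y (p * X ^ j % q) := by
      rw [← map_mul, ← map_add, hdiv]; simp
    have e2 : aeval y p / aeval y q * w i = aeval y (p * X ^ j / q) * ((y⁻¹) ^ j * w i) +
        aeval y (p * X ^ j % q) / aeval y q * ((y⁻¹) ^ j * w i) := by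
      have : aeval y p = (aeval y q * aeval y (p * X ^ j / q) + aeval y (p * X ^ j % q)) * (y⁻¹) ^ j := by
        rw [← e1, inv_pow]; field_simp
      rw [this]; field_simp
    rw [e2]
    refine N.add_mem ?_ (hVN ?_)
    · rw [aeval_eq_sum_range, Finset.sum_mul]
      refine N.sum_mem fun l _ => ?_
      rw [smul_mul_assoc]
      refine N.smul_mem _ ?_
      by_cases hl : j ≤ l
      · obtain ⟨d, rfl⟩ := Nat.exists_eq_add_of_le hl
        have : y ^ (j + d) * ((y⁻¹) ^ j * w i) = y ^ d * w i := by
          rw [inv_pow]; field_simp; ring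
        rw [this]
        refine hM0N fun O hO hyO => mul_mem (pow_mem hyO _) (hw i O hO hyO)
      · obtain ⟨d, hd⟩ := Nat.exists_eq_add_of_le (show l ≤ j by omega)
        have : y ^ l * ((y⁻¹) ^ j * w i) = (y⁻¹) ^ d * w i := by
          rw [hd, inv_pow, inv_pow]; field_simp; ring
        rw [this]
        exact (le_sup_right : _ ≤ N) (Submodule.subset_span ⟨(i, ⟨d, by omega⟩), rfl⟩)
    · intro O hO hyO
      refine mul_mem (div_mem hO.1 hyO _ _ hq ?_) (hj i O hO hyO)
      exact natDegree_le_natDegree (degree_mod_lt _ hq).le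
  have hN : N = ⊤ := by
    rw [eq_top_iff]
    rintro g -
    rw [← b.sum_repr g]
    refine N.sum_mem fun i _ => ?_
    obtain ⟨p, q, hpq⟩ := (IntermediateField.mem_adjoin_simple_iff K _).1 (b.repr g i).2
    have : b.repr g i • b i = aeval y p / aeval y (q * r i) * w i := by
      rw [IntermediateField.smul_def, hpq, smul_eq_mul, map_mul]
      simp only [w]
      have := hry i
      by_cases h : aeval y q = 0
      · simp [h]
      · field_simp
    rw [this]
    by_cases hq : q = 0
    · simp [hq]
    · exact hterm _ _ _ (mul_ne_zero hq (hr0 i))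
  rw [Module.finite_def]
  have : (⊤ : Submodule K (F ⧸ (M0 ⊔ V))) =
      Submodule.span K (Set.range ((M0 ⊔ V).mkQ ∘ s)) := by
    rw [Set.range_comp, ← Submodule.map_span]
    have h2 : Submodule.map (M0 ⊔ V).mkQ N = ⊤ := by
      rw [hN, Submodule.map_top, Submodule.range_mkQ]
    rw [← h2, Submodule.map_sup, Submodule.mkQ_map_self, bot_sup_eq]
  rw [this]
  exact Submodule.fg_span (Set.finite_range _)

/-- an element with exactly one pole -/
lemma exists_one_pole (H : FinHyp K F) (O₀ : ValuationSubring F) (h0 : IsPlace K F O₀) :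
    ∃ z : F, z ∉ O₀ ∧ ∀ O, IsPlace K F O → O ≠ O₀ → z ∈ O := by
  classical
  obtain ⟨y, hy⟩ := IsPlace.exists_notMem h0
  have htr : Transcendental K y := transcendental_of_notMem h0.1 hy
  have hfinite := finite_h1 H y htr
  obtain ⟨f, hf0, hf⟩ := approx H O₀ h0 ((finite_poles H y).toFinset.erase O₀)
    (fun O hO => by
      have := Finset.mem_of_mem_erase hO
      simp at this
      exact this.1) (Finset.notMem_erase _ _)
  set M0 := interSub K (fun O : ValuationSubring F => y ∈ O) with hM0
  set V := interSub K (fun O : ValuationSubring F => y ∉ O) with hV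
  let φ : K[X] →ₗ[K] (F ⧸ (M0 ⊔ V)) :=
    (M0 ⊔ V).mkQ ∘ₗ (aeval f).toLinearMap ∘ₗ LinearMap.mulLeft K X
  have hφ : ¬ Function.Injective φ := by
    intro hinj
    have : Module.Finite K K[X] := Module.Finite.of_injective φ hinj
    exact Polynomial.not_finite this
  rw [← LinearMap.ker_eq_bot, Submodule.eq_bot_iff] at hφ
  push Not at hφ
  obtain ⟨q, hq, hq0⟩ := hφ
  have hmem : aeval f (X * q) ∈ M0 ⊔ V := by
    simpa [φ] using hq
  obtain ⟨a, ha, b, hb, hab⟩ := Submodule.mem_sup.1 hmem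
  have hv : 1 < O₀.valuation f := by rwa [← O₀.valuation_le_one_iff, not_le] at hf0
  have hnot : aeval f (X * q) ∉ O₀ := by
    rw [← O₀.valuation_le_one_iff, not_le,
      val_aeval_eq h0.1 hv _ (mul_ne_zero X_ne_zero hq0), natDegree_X_mul hq0]
    exact one_lt_pow₀ hv (by omega)
  refine ⟨a, fun h => hnot ?_, fun O hO hne => ?_⟩
  · rw [← hab]; exact O₀.add_mem _ _ h (hb O₀ h0 hy)
  · by_cases hyO : y ∈ O
    · exact ha O hO hyO
    · have : a = aeval f (X * q) - b := by rw [← hab]; ring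
      rw [this]
      refine sub_mem (aeval_mem hO.1 ?_ _) (hb O hO hyO)
      rw [← O.valuation_le_one_iff]
      exact (hf O (by simp [hne, hO, hyO])).le

end
end SumUnits

namespace SumUnits
section
open Polynomial

variable {K F : Type*} [Field K] [Field F] [Algebra K F]

lemma units_fg (H : FinHyp K F) (S : Finset (ValuationSubring F))
    (hS : ∀ O ∈ S, IsPlace K F O) :
    ∃ (s : ℕ) (u : Fin s → F), (∀ j, u j ≠ 0) ∧ ∀ e : F, SInteger K F S e →
      (∃ e', SInteger K F S e' ∧ e * e' = 1) →
      ∃ c : F, IsAlgebraic K c ∧ ∃ a : Fin s → ℤ, e = c * ∏ j, u j ^ a j := by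
  classical
  let ψ : Additive Fˣ →ₗ[ℤ] (∀ O : S, Additive (O.1.ValueGroup)ˣ) :=
    LinearMap.pi fun O => (MonoidHom.toAdditive (Units.map
      (O.1.valuation : F →* O.1.ValueGroup))).toIntLinearMap
  let U : Subgroup Fˣ :=
    { carrier := {u | SInteger K F S u ∧ SInteger K F S ((u⁻¹ : Fˣ) : F)}
      mul_mem' := by
        rintro a b ⟨ha, ha'⟩ ⟨hb, hb'⟩
        refine ⟨fun O hO hOS => ?_, fun O hO hOS => ?_⟩
        · rw [Units.val_mul]; exact mul_mem (ha O hO hOS) (hb O hO hOS)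
        · rw [mul_inv, Units.val_mul]; exact mul_mem (ha' O hO hOS) (hb' O hO hOS)
      one_mem' := ⟨fun O _ _ => O.one_mem, fun O _ _ => by simpa using O.one_mem⟩
      inv_mem' := by
        rintro a ⟨ha, ha'⟩
        exact ⟨ha', by simpa using ha⟩ }
  let U' : Submodule ℤ (Additive Fˣ) := AddSubgroup.toIntSubmodule (Subgroup.toAddSubgroup U)
  have hf : ∀ O : S, Module.Finite ℤ (Additive (O.1.ValueGroup)ˣ) := fun O =>
    valueGroup_fg H O.1 (hS _ O.2)
  have hN : IsNoetherian ℤ (∀ O : S, Additive (O.1.ValueGroup)ˣ) := inferInstance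
  obtain ⟨s, g, hg⟩ := Submodule.fg_iff_exists_fin_generating_family.1 (hN.noetherian (U'.map ψ))
  have hg' : ∀ j, ∃ u ∈ U', ψ u = g j := by
    intro j
    have : g j ∈ U'.map ψ := by rw [← hg]; exact Submodule.subset_span ⟨j, rfl⟩
    exact this
  choose u huU hu using hg'
  refine ⟨s, fun j => ((u j).toMul : F), fun j => Units.ne_zero _, fun e he => ?_⟩
  rintro ⟨e', he', hee⟩
  let E : Fˣ := ⟨e, e', hee, by rw [mul_comm]; exact hee⟩
  have hE : Additive.ofMul E ∈ U' := show E ∈ U from ⟨he, he'⟩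
  have h1 : ψ (Additive.ofMul E) ∈ Submodule.span ℤ (Set.range g) := by
    rw [hg]; exact ⟨_, hE, rfl⟩
  obtain ⟨a, ha⟩ := (Submodule.mem_span_range_iff_exists_fun ℤ).1 h1
  let P : Additive Fˣ := ∑ j, a j • u j
  have hP : P ∈ U' := U'.sum_mem fun j _ => U'.smul_mem _ (huU j)
  let C : Additive Fˣ := Additive.ofMul E - P
  have hC : C ∈ U' := U'.sub_mem hE hP
  have hψ : ψ C = 0 := by
    simp only [C, P, map_sub, map_sum, map_zsmul, hu]
    rw [← ha, sub_self]
  have hval : ∀ O ∈ S, O.valuation ((C.toMul : Fˣ) : F) = 1 := by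
    intro O hO
    have := congrFun hψ ⟨O, hO⟩
    have := congrArg (fun t : Additive (O.ValueGroup)ˣ => ((t.toMul : (O.ValueGroup)ˣ) : O.ValueGroup)) this
    exact this
  refine ⟨((C.toMul : Fˣ) : F), isAlgebraic_of_forall fun O hO => ?_, a, ?_⟩
  · by_cases hOS : O ∈ S
    · rw [← O.valuation_le_one_iff]; exact (hval O hOS).le
    · exact (show C.toMul ∈ U from hC).1 O hO hOS
  · have h2 : C + P = Additive.ofMul E := by simp [C]
    have h3 := congrArg (fun t : Additive Fˣ => ((t.toMul : Fˣ) : F)) h2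
    simp only [toMul_add, Units.val_mul, toMul_ofMul, P, toMul_sum, toMul_zsmul,
      Units.coe_prod, Units.val_zpow_eq_zpow_val] at h3
    exact h3.symm

open scoped IntermediateField.algebraAdjoinAdjoin in
lemma finHyp_of (x : F) (hx : Transcendental K x)
    (hfin : FiniteDimensional (IntermediateField.adjoin K ({x} : Set F)) F) : FinHyp K F := by
  intro y hy
  have e1 : Algebra.EssFiniteType K (IntermediateField.adjoin K ({x} : Set F)) :=
    IntermediateField.essFiniteType_iff.2 ⟨{x}, by simp⟩
  have e2 : Algebra.EssFiniteType K F :=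
    Algebra.EssFiniteType.comp K (IntermediateField.adjoin K ({x} : Set F)) F
  have alg : Algebra.IsAlgebraic (Algebra.adjoin K ({x} : Set F)) F := by
    have : Algebra.IsAlgebraic (IntermediateField.adjoin K ({x} : Set F)) F :=
      Algebra.IsAlgebraic.of_finite _ _
    exact Algebra.IsAlgebraic.trans (Algebra.adjoin K ({x} : Set F))
      (IntermediateField.adjoin K ({x} : Set F)) F
  have htr : Algebra.trdeg K F ≤ 1 := by
    have := Algebra.IsAlgebraic.trdeg_le_cardinalMk K ({x} : Set F)
    simpa using this
  have hai : AlgebraicIndependent K (Subtype.val : ({y} : Set F) → F) := by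
    rw [algebraicIndependent_unique_type_iff]
    exact hy
  have hb := hai.isTranscendenceBasis_of_trdeg_le_of_finite (by simpa using htr)
  have e3 := hb.isAlgebraic_field
  rw [Subtype.range_coe] at e3
  have e4 : Algebra.EssFiniteType (IntermediateField.adjoin K ({y} : Set F)) F :=
    Algebra.EssFiniteType.of_comp K _ _
  exact Algebra.finite_of_essFiniteType_of_isAlgebraic

end
end SumUnits

namespace SumUnits
section
open Polynomial
variable {K F : Type*} [Field K] [Field F] [Algebra K F]

/-- avoiding finitely many small subspaces -/
lemma exists_avoid (L : Subfield F) (N : ℕ) (z : F)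
    (hli : LinearIndependent L (fun i : Fin (N + 1) => z ^ (i : ℕ))) (Bs : Finset F)
    (t : L) (ht : Function.Injective (fun l : ℕ => t ^ l)) :
    ∃ l : ℕ, ∀ T ⊆ Bs, T.card ≤ N →
      ∑ i : Fin (N + 1), ((t : F) ^ l) ^ (i : ℕ) * z ^ (i : ℕ) ∉ Submodule.span L (T : Set F) := by
  classical
  have key : ∀ T : Finset F, T.card ≤ N → ∃ P : L[X], P ≠ 0 ∧
      ∀ s : L, ∑ i : Fin (N + 1), (s : F) ^ (i : ℕ) * z ^ (i : ℕ) ∈ Submodule.span L (T : Set F) →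
        P.eval s = 0 := by
    intro T hT
    have h1 : ∃ i : Fin (N + 1), z ^ (i : ℕ) ∉ Submodule.span L (T : Set F) := by
      by_contra! hc
      let v : Fin (N + 1) → Submodule.span L (T : Set F) := fun i => ⟨z ^ (i : ℕ), hc i⟩
      have hv : LinearIndependent L v := by
        apply LinearIndependent.of_comp (Submodule.span L (T : Set F)).subtype
        exact hli
      have h2 := hv.fintype_card_le_finrank
      have h3 := finrank_span_finset_le_card (R := L) T
      rw [Set.finrank] at h3
      simp at h2
      omega
    obtain ⟨i, hi⟩ := h1
    obtain ⟨φ, hφ, hker⟩ := Submodule.exists_le_ker_of_notMem hi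
    refine ⟨∑ j : Fin (N + 1), C (φ (z ^ (j : ℕ))) * X ^ (j : ℕ), ?_, ?_⟩
    · intro h0
      apply hφ
      have := congrArg (fun P : L[X] => P.coeff (i : ℕ)) h0
      simp only [finsetSum_coeff, coeff_C_mul_X_pow, coeff_zero] at this
      rw [Finset.sum_eq_single i] at this
      · simpa using this
      · intro b _ hb
        rw [if_neg]
        intro h
        exact hb (Fin.ext h.symm)
      · simp
    · intro s hs
      have := hker hs
      rw [LinearMap.mem_ker, map_sum] at this
      rw [eval_finsetSum, ← this]
      refine Finset.sum_congr rfl fun j _ => ?_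
      have e : (s : F) ^ (j : ℕ) * z ^ (j : ℕ) = (s ^ (j : ℕ)) • (z ^ (j : ℕ)) := by
        rw [Subfield.smul_def]; simp
      rw [e, map_smul]
      rw [eval_mul, eval_C, eval_pow, eval_X, smul_eq_mul, mul_comm]
  choose! P hP hP2 using key
  let Q : L[X] := ∏ T ∈ Bs.powerset.filter (fun T => T.card ≤ N), P T
  have hQ : Q ≠ 0 := by
    rw [Finset.prod_ne_zero_iff]
    intro T hT
    exact hP T (Finset.mem_filter.1 hT).2
  have hfin : {s : L | Q.IsRoot s}.Finite := Polynomial.finite_setOfPred_isRoot hQ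
  have : ∃ l : ℕ, ¬ Q.IsRoot (t ^ l) := by
    by_contra! hc
    exact Set.infinite_of_injective_forall_mem ht hc hfin
  obtain ⟨l, hl⟩ := this
  refine ⟨l, fun T hT hc hmem => hl ?_⟩
  have h5 := hP2 T hc (t ^ l) (by simpa using hmem)
  rw [Polynomial.IsRoot, eval_prod]
  exact Finset.prod_eq_zero (Finset.mem_filter.2 ⟨Finset.mem_powerset.2 hT, hc⟩) h5

lemma li_pow (p : ℕ) [Fact p.Prime] [CharP F p] (t N : ℕ) (hN : N < p ^ t) (z : F)
    (hz : ∀ w : F, z ≠ w ^ p) :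
    LinearIndependent (iterateFrobenius F p t).fieldRange (fun i : Fin (N + 1) => z ^ (i : ℕ)) := by
  set L := (iterateFrobenius F p t).fieldRange with hL
  have : CharP L p := inferInstance
  have : ExpChar L p := .prime Fact.out
  have h1 : (minpoly L z).natSepDegree = 1 := by
    rw [minpoly.natSepDegree_eq_one_iff_pow_mem p]
    refine ⟨t, ⟨⟨z ^ p ^ t, ?_⟩, rfl⟩⟩
    exact ⟨z, by simp [iterateFrobenius_def]⟩
  obtain ⟨n, y, hy⟩ := (minpoly.natSepDegree_eq_one_iff_eq_X_pow_sub_C p).1 h1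
  have hdeg : (minpoly L z).natDegree = p ^ n := by
    rw [hy, natDegree_X_pow_sub_C]
  have hzy : z ^ p ^ n = (y : F) := by
    have := minpoly.aeval L z
    rw [hy] at this
    simp [sub_eq_zero] at this
    rw [this]; rfl
  have hle : t ≤ n := by
    by_contra! hlt
    obtain ⟨w, hw⟩ := y.2
    rw [iterateFrobenius_def] at hw
    obtain ⟨k, rfl⟩ := Nat.exists_eq_add_of_lt hlt
    apply hz (w ^ p ^ k)
    apply iterateFrobenius_inj F p n
    rw [iterateFrobenius_def, iterateFrobenius_def, hzy, ← hw]
    ring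
  have h2 : N + 1 ≤ (minpoly L z).natDegree := by
    rw [hdeg]
    exact hN.trans_le (Nat.pow_le_pow_right (Nat.Prime.pos Fact.out) hle)
  exact (linearIndependent_pow (K := L) z).comp (Fin.castLE h2) (Fin.castLE_injective h2)

lemma alg_mem_pow [PerfectField K] (p : ℕ) [Fact p.Prime] [CharP F p] (t : ℕ) (c : F)
    (hc : IsAlgebraic K c) : ∃ d : F, d ^ p ^ t = c := by
  have : FiniteDimensional K (IntermediateField.adjoin K {c}) :=
    IntermediateField.adjoin.finiteDimensional hc.isIntegral
  have : Algebra.IsAlgebraic K (IntermediateField.adjoin K {c}) := Algebra.IsAlgebraic.of_finite _ _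
  have hp : PerfectField (IntermediateField.adjoin K {c}) := Algebra.IsAlgebraic.perfectField (K := K)
  have : CharP (IntermediateField.adjoin K {c}) p :=
    (algebraMap (IntermediateField.adjoin K {c}) F).charP (algebraMap (IntermediateField.adjoin K {c}) F).injective p
  have : ExpChar (IntermediateField.adjoin K {c}) p := .prime Fact.out
  have hpr : PerfectRing (IntermediateField.adjoin K {c}) p := PerfectField.toPerfectRing p
  obtain ⟨d, hd⟩ := (iterateFrobeniusEquiv (IntermediateField.adjoin K {c}) p t).surjective
    ⟨c, IntermediateField.mem_adjoin_simple_self K c⟩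
  refine ⟨d, ?_⟩
  have := congrArg (Subtype.val) hd
  simpa [iterateFrobenius_def] using this

lemma SInteger.pow {S : Finset (ValuationSubring F)} {f : F} (h : SInteger K F S f) (n : ℕ) :
    SInteger K F S (f ^ n) := fun O hO hOS => pow_mem (h O hO hOS) n

lemma SInteger.of_pow {S : Finset (ValuationSubring F)} {f : F} {n : ℕ} (hn : n ≠ 0)
    (h : SInteger K F S (f ^ n)) : SInteger K F S f := fun O hO hOS => by
  have := h O hO hOS
  rw [← O.valuation_le_one_iff, map_pow] at this
  rw [← O.valuation_le_one_iff]
  exact (pow_le_one_iff hn).1 this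

/-- a transcendental S-integer -/
lemma exists_sint (H : FinHyp K F) (S : Finset (ValuationSubring F))
    (hS : ∀ O ∈ S, IsPlace K F O) (hSne : S.Nonempty) :
    ∃ z : F, Transcendental K z ∧ SInteger K F S z := by
  obtain ⟨O₀, h0⟩ := hSne
  obtain ⟨z, hz, hz2⟩ := exists_one_pole H O₀ (hS _ h0)
  exact ⟨z, transcendental_of_notMem (hS _ h0).1 hz, fun O hO hOS => hz2 O hO (by
    rintro rfl; exact hOS h0)⟩

lemma exists_sint_not_pow (H : FinHyp K F) (S : Finset (ValuationSubring F))
    (hS : ∀ O ∈ S, IsPlace K F O) (hSne : S.Nonempty) (p : ℕ) (hp : p.Prime) :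
    ∃ z : F, Transcendental K z ∧ SInteger K F S z ∧ ∀ w : F, z ≠ w ^ p := by
  classical
  let A : Set F := {z | Transcendental K z ∧ SInteger K F S z}
  have hA : A.Nonempty := exists_sint H S hS hSne
  let d : F → ℕ := fun z => Module.finrank (IntermediateField.adjoin K ({z} : Set F)) F
  obtain ⟨z, hz, hmin⟩ := exists_minimalFor_of_wellFoundedLT (· ∈ A) d hA
  refine ⟨z, hz.1, hz.2, fun w hw => ?_⟩
  have hwt : Transcendental K w := by
    intro h
    exact hz.1 (hw ▸ h.pow p)
  have hwA : w ∈ A := ⟨hwt, SInteger.of_pow hp.ne_zero (hw ▸ hz.2)⟩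
  have hle : IntermediateField.adjoin K {z} ≤ IntermediateField.adjoin K {w} := by
    rw [IntermediateField.adjoin_simple_le_iff, hw]
    exact pow_mem (IntermediateField.mem_adjoin_simple_self K w) p
  have hlt : IntermediateField.adjoin K {z} < IntermediateField.adjoin K {w} := by
    refine lt_of_le_of_ne hle fun he => ?_
    have hm : w ∈ IntermediateField.adjoin K {z} :=
      he ▸ IntermediateField.mem_adjoin_simple_self K w
    rw [IntermediateField.mem_adjoin_simple_iff] at hm
    obtain ⟨f, g, hfg⟩ := hm
    have hw0 : w ≠ 0 := by
      rintro rfl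
      exact hwt isAlgebraic_zero
    have hg0 : aeval z g ≠ 0 := by
      intro h
      rw [h, div_zero] at hfg
      exact hw0 hfg
    rw [eq_div_iff hg0] at hfg
    have h1 : aeval w (X * expand K p g - expand K p f) = 0 := by
      simp [expand_aeval, ← hw, hfg]
    have h2 := (transcendental_iff.1 hwt) _ h1
    apply hg0
    have : g = 0 := by
      ext k
      have := congrArg (fun P : K[X] => P.coeff (k * p + 1)) h2
      simp only [coeff_sub, coeff_X_mul, coeff_expand_mul hp.pos, coeff_zero] at this
      rw [coeff_expand hp.pos, if_neg] at this
      · simpa using this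
      · intro hd
        have := (Nat.dvd_add_right (Dvd.intro_left k rfl)).1 hd
        exact hp.one_lt.ne' (Nat.dvd_one.1 this)
    simp [this]
  have : FiniteDimensional (IntermediateField.adjoin K {z}) F := H z hz.1
  have h3 : d w < d z := IntermediateField.finrank_lt_of_gt hlt
  exact absurd (hmin hwA h3.le) (not_le.2 h3)

end
end SumUnits

namespace SumUnits
section
open Polynomial
variable {K F : Type*} [Field K] [Field F] [Algebra K F]

lemma charp_case [PerfectField K] (H : FinHyp K F) (S : Finset (ValuationSubring F))
    (hS : ∀ O ∈ S, IsPlace K F O) (hSne : S.Nonempty) (p : ℕ) [hp : Fact p.Prime] [CharP F p]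
    (N : ℕ) :
    ∃ r : F, SInteger K F S r ∧
      ¬ ∃ (k : ℕ) (e : Fin k → F), 1 ≤ k ∧ k ≤ N ∧
        (∀ i, SInteger K F S (e i) ∧ ∃ e' : F, SInteger K F S e' ∧ e i * e' = 1) ∧
        r = ∑ i, e i := by
  classical
  obtain ⟨s, u, hu, hunit⟩ := units_fg H S hS
  obtain ⟨z, hzt, hzS, hzp⟩ := exists_sint_not_pow H S hS hSne p hp.out
  obtain ⟨t, hq⟩ : ∃ t, N < p ^ t := ⟨N, Nat.lt_pow_self hp.out.one_lt⟩
  set q := p ^ t with hqdef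
  have hqpos : 0 < q := pow_pos hp.out.pos t
  have hli := li_pow p t N hq z hzp
  set L := (iterateFrobenius F p t).fieldRange with hL
  have hLmem : ∀ a : F, a ^ q ∈ L := fun a => ⟨a, by simp [iterateFrobenius_def, hqdef]⟩
  let Bs : Finset F := Finset.univ.image (fun r : Fin s → Fin q => ∏ j, u j ^ (r j : ℕ))
  have hB : ∀ e, SInteger K F S e → (∃ e', SInteger K F S e' ∧ e * e' = 1) →
      ∃ b ∈ Bs, ∃ l : L, e = l • b := by
    intro e h1 h2
    obtain ⟨c, hc, a, rfl⟩ := hunit e h1 h2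
    obtain ⟨d, hd⟩ := alg_mem_pow p t c hc
    have hnn : ∀ j, 0 ≤ a j % (q : ℤ) := fun j => Int.emod_nonneg _ (by exact_mod_cast hqpos.ne')
    have hlt : ∀ j, a j % (q : ℤ) < q := fun j => Int.emod_lt_of_pos _ (by exact_mod_cast hqpos)
    refine ⟨∏ j, u j ^ (a j % (q : ℤ)).toNat, ?_, ⟨(d * ∏ j, u j ^ (a j / (q : ℤ))) ^ q, hLmem _⟩, ?_⟩
    · refine Finset.mem_image.2 ⟨fun j => ⟨(a j % (q : ℤ)).toNat, ?_⟩, Finset.mem_univ _, rfl⟩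
      have := hnn j
      have := hlt j
      omega
    · rw [Subfield.smul_def, smul_eq_mul]
      simp only [mul_pow]
      rw [hqdef, hd, ← hqdef, mul_assoc, ← Finset.prod_pow, ← Finset.prod_mul_distrib]
      congr 1
      refine Finset.prod_congr rfl fun j _ => ?_
      rw [← zpow_natCast, ← zpow_natCast, Int.toNat_of_nonneg (hnn j), ← zpow_mul, ← zpow_add₀ (hu j)]
      congr 1
      rw [mul_comm]
      exact (Int.mul_ediv_add_emod _ _).symm
  have hinj : Function.Injective (fun l : ℕ => (⟨z ^ q, hLmem z⟩ : L) ^ l) := by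
    intro l m h
    have h2 : z ^ (q * l) = z ^ (q * m) := by
      have := congrArg (Subtype.val) h
      simpa [pow_mul] using this
    by_contra hne
    apply hzt
    refine ⟨X ^ (q * l) - X ^ (q * m), ?_, by simp [h2]⟩
    intro h0
    rw [sub_eq_zero] at h0
    have := congrArg natDegree h0
    simp only [natDegree_X_pow] at this
    exact hne (Nat.eq_of_mul_eq_mul_left hqpos this)
  obtain ⟨l, hl⟩ := exists_avoid L N z hli Bs ⟨z ^ q, hLmem z⟩ hinj
  refine ⟨∑ i : Fin (N + 1), ((z ^ q) ^ l) ^ (i : ℕ) * z ^ (i : ℕ), ?_, ?_⟩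
  rotate_left
  · rintro ⟨k, e, -, hk, he, hr⟩
    choose b hb m hm using fun i => hB (e i) (he i).1 (he i).2
    refine hl (Finset.univ.image b) ?_ ?_ (hr ▸ ?_)
    · intro x hx
      obtain ⟨i, -, rfl⟩ := Finset.mem_image.1 hx
      exact hb i
    · exact Finset.card_image_le.trans (by simpa using hk)
    · refine Submodule.sum_mem _ fun i _ => ?_
      rw [hm i]
      exact Submodule.smul_mem _ _ (Submodule.subset_span (by simp))
  · intro O hO hOS
    refine sum_mem fun i _ => mul_mem (pow_mem (pow_mem (pow_mem ?_ _) _) _) (pow_mem ?_ _) <;>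
    exact hzS O hO hOS

end
end SumUnits

namespace SumUnits
section
open Polynomial
variable {K F : Type*} [Field K] [Field F] [Algebra K F]

open scoped IntermediateField.algebraAdjoinAdjoin in
lemma exists_derivation [CharZero F] (z : F) (hz : Transcendental K z)
    (hfin : FiniteDimensional (IntermediateField.adjoin K ({z} : Set F)) F) :
    ∃ D : Derivation K F F, D z = 1 := by
  let A := Algebra.adjoin K ({z} : Set F)
  let E := IntermediateField.adjoin K ({z} : Set F)
  have : CharZero K := (algebraMap K F).charZero
  have h1 : Algebra.FormallyEtale A E := .of_isLocalization (nonZeroDivisors A)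
  have h2 : Algebra.FormallyEtale E F := Algebra.FormallyEtale.of_isSeparable _ _
  have h3 : Algebra.FormallyEtale A F := Algebra.FormallyEtale.comp A E F
  let e : K[X] ≃ₐ[K] A := AlgEquiv.ofBijective ((aeval z).codRestrict A
      (fun f => aeval_mem_adjoin_singleton K z)) ⟨by
        intro f g h
        have := congrArg Subtype.val h
        exact transcendental_iff_injective.1 hz this, by
        rintro ⟨a, ha⟩
        have ha2 := ha
        simp only [A, Algebra.adjoin_singleton_eq_range_aeval] at ha2
        obtain ⟨f, hf⟩ := ha2
        exact ⟨f, Subtype.ext hf⟩⟩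
  have he : ∀ f, (e f : F) = aeval z f := fun f => rfl
  have hes : ∀ a : A, aeval z (e.symm a) = (a : F) := fun a => by
    rw [← he]; simp
  let d0 : Derivation K A F := Derivation.mk'
    ((aeval z).toLinearMap.comp (derivative.comp e.symm.toLinearMap)) (by
      intro a b
      have h4 : ∀ (c : A) (y : F), c • y = (c : F) * y := fun c y => rfl
      simp only [LinearMap.comp_apply, AlgEquiv.toLinearMap_apply, AlgHom.toLinearMap_apply,
        map_mul, derivative_mul, map_add, hes, h4]
      ring)
  have hd0 : ∀ a, d0 a = aeval z (derivative (e.symm a)) := fun a => rfl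
  let z' : A := ⟨z, Algebra.self_mem_adjoin_singleton K z⟩
  have hz' : e.symm z' = X := by
    rw [AlgEquiv.symm_apply_eq]
    exact Subtype.ext (by rw [he]; simp [z'])
  let φ : TensorProduct A F (Ω[A⁄K]) →ₗ[F] F := d0.liftKaehlerDifferential.liftBaseChange F
  let ψ := φ.comp (KaehlerDifferential.tensorKaehlerEquivOfFormallyEtale K A F).symm.toLinearMap
  refine ⟨ψ.compDer (KaehlerDifferential.D K F), ?_⟩
  have h5 := KaehlerDifferential.tensorKaehlerEquivOfFormallyEtale_symm_D_algebraMap K A F z'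
  change φ ((KaehlerDifferential.tensorKaehlerEquivOfFormallyEtale K A F).symm
    (KaehlerDifferential.D K F (algebraMap A F z'))) = 1
  rw [h5, LinearMap.liftBaseChange_one_tmul, Derivation.liftKaehlerDifferential_comp_D, hd0, hz']
  simp

end
end SumUnits

namespace SumUnits
section
open Polynomial
variable {K F : Type*} [Field K] [Field F] [Algebra K F]

lemma der_alg [CharZero K] (D : Derivation K F F) (c : F) (hc : IsAlgebraic K c) : D c = 0 := by
  have h1 := (minpoly.irreducible hc.isIntegral).separable.aeval_derivative_ne_zero (minpoly.aeval K c)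
  have h2 := D.map_aeval (minpoly K c) c
  rw [minpoly.aeval, map_zero, smul_eq_mul] at h2
  exact (mul_eq_zero.1 h2.symm).resolve_left h1

lemma der_unit [CharZero K] (D : Derivation K F F) {s : ℕ} (u : Fin s → F) (hu : ∀ j, u j ≠ 0)
    (c : F) (hc : IsAlgebraic K c) (a : Fin s → ℤ) :
    D (c * ∏ j, u j ^ a j) = (∑ j, (a j : F) * (D (u j) / u j)) * (c * ∏ j, u j ^ a j) := by
  classical
  have h1 : ∀ T : Finset (Fin s), D (∏ j ∈ T, u j ^ a j) =
      (∑ j ∈ T, (a j : F) * (D (u j) / u j)) * ∏ j ∈ T, u j ^ a j := by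
    intro T
    induction T using Finset.induction_on with
    | empty => simp
    | insert j T hj ih =>
      rw [Finset.prod_insert hj, Finset.sum_insert hj, D.leibniz, ih, D.leibniz_zpow]
      simp only [smul_eq_mul, zsmul_eq_mul]
      rw [zpow_sub_one₀ (hu j)]
      field_simp
      ring
  rw [D.leibniz, h1, der_alg D c hc]
  simp only [smul_eq_mul, mul_zero, add_zero]
  ring

lemma der_eval (D : Derivation K F F) {σ : Type*} (Q : MvPolynomial σ F) :
    ∃ Q' : MvPolynomial σ F, ∀ a : σ → ℤ,
      D (MvPolynomial.eval (fun j => (a j : F)) Q) = MvPolynomial.eval (fun j => (a j : F)) Q' := by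
  induction Q using MvPolynomial.induction_on with
  | C c => exact ⟨MvPolynomial.C (D c), fun a => by simp⟩
  | add P Q hP hQ =>
    obtain ⟨P', hP'⟩ := hP
    obtain ⟨Q', hQ'⟩ := hQ
    exact ⟨P' + Q', fun a => by simp [hP', hQ']⟩
  | mul_X P i hP =>
    obtain ⟨P', hP'⟩ := hP
    exact ⟨P' * MvPolynomial.X i, fun a => by simp [hP', mul_comm]⟩

lemma der_iter [CharZero K] (D : Derivation K F F) {s : ℕ} (u : Fin s → F) (hu : ∀ j, u j ≠ 0)
    (i : ℕ) : ∃ Q : MvPolynomial (Fin s) F, ∀ (c : F) (a : Fin s → ℤ), IsAlgebraic K c →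
      (D^[i]) (c * ∏ j, u j ^ a j) =
        MvPolynomial.eval (fun j => (a j : F)) Q * (c * ∏ j, u j ^ a j) := by
  induction i with
  | zero => exact ⟨1, fun c a _ => by simp⟩
  | succ i ih =>
    obtain ⟨Q, hQ⟩ := ih
    obtain ⟨Q', hQ'⟩ := der_eval D Q
    refine ⟨Q' + Q * ∑ j, MvPolynomial.X j * MvPolynomial.C (D (u j) / u j), fun c a hc => ?_⟩
    rw [Function.iterate_succ_apply', hQ c a hc, D.leibniz, der_unit D u hu c hc, hQ']
    simp only [smul_eq_mul, map_add, map_mul, map_sum, MvPolynomial.eval_X, MvPolynomial.eval_C]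
    ring

lemma exists_alg_rel {τ : Type*} [Fintype τ] (m : ℕ) (hm : Fintype.card τ < m)
    (P : Fin m → MvPolynomial τ F) :
    ∃ G : MvPolynomial (Fin m) F, G ≠ 0 ∧ MvPolynomial.aeval P G = 0 := by
  by_contra! hc
  have hai : AlgebraicIndependent F P := by
    rw [algebraicIndependent_iff]
    intro G hG
    by_contra h0
    exact hc G h0 hG
  have h1 := hai.lift_cardinalMk_le_trdeg
  rw [MvPolynomial.trdeg_of_isDomain] at h1
  simp at h1
  omega

lemma iter_pow (D : Derivation K F F) (z : F) (hz : D z = 1) (l i : ℕ) :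
    (D^[l]) (z ^ i) = (i.descFactorial l : F) * z ^ (i - l) := by
  induction l with
  | zero => simp
  | succ l ih =>
    rw [Function.iterate_succ_apply', ih, D.leibniz, D.leibniz_pow, hz, Nat.descFactorial_succ]
    simp only [Derivation.map_natCast, smul_zero, add_zero, smul_eq_mul, nsmul_eq_mul, mul_one]
    push_cast
    rw [Nat.sub_sub]
    ring

lemma exists_nonzero [CharZero K] (D : Derivation K F F) (z : F) (hz : D z = 1) (m : ℕ)
    (G : MvPolynomial (Fin m) F) (hG : G ≠ 0) :
    ∃ c : Fin m → K, MvPolynomial.eval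
      (fun l : Fin m => (D^[(l : ℕ)]) (∑ i : Fin m, c i • z ^ (i : ℕ))) G ≠ 0 := by
  by_contra! hc
  have : CharZero F := charZero_of_injective_algebraMap (algebraMap K F).injective
  let M : Matrix (Fin m) (Fin m) F := fun l i => (D^[(l : ℕ)]) (z ^ (i : ℕ))
  have hlin : ∀ (l : ℕ) (c : Fin m → K),
      (D^[l]) (∑ i : Fin m, c i • z ^ (i : ℕ)) = ∑ i : Fin m, c i • (D^[l]) (z ^ (i : ℕ)) := by
    intro l c
    induction l with
    | zero => simp
    | succ l ih =>
      simp only [Function.iterate_succ_apply', ih, map_sum, Derivation.map_smul]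
  let H : MvPolynomial (Fin m) F := MvPolynomial.bind₁
    (fun l => ∑ i, MvPolynomial.C (M l i) * MvPolynomial.X i) G
  have hHe : ∀ y : Fin m → F, MvPolynomial.eval y H = MvPolynomial.eval (M.mulVec y) G := by
    intro y
    simp only [H, MvPolynomial.eval, MvPolynomial.eval₂Hom_bind₁]
    congr 2
    ext l
    simp [Matrix.mulVec, dotProduct]
  have hH : H = 0 := by
    refine MvPolynomial.funext_set (fun _ => Set.range (algebraMap K F))
      (fun _ => Set.infinite_range_of_injective (algebraMap K F).injective) fun y hy => ?_
    choose c hc' using fun i => hy i (Set.mem_univ i)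
    rw [hHe, map_zero, ← hc c]
    congr 1
    congr 1
    ext l
    rw [hlin]
    simp only [Matrix.mulVec, dotProduct, M, Algebra.smul_def, hc']
    exact Finset.sum_congr rfl fun i _ => mul_comm _ _
  have hdet : IsUnit M.det := by
    have htri : M.BlockTriangular id := by
      intro l i hli
      have : (i : ℕ) < l := hli
      simp [M, iter_pow D z hz, Nat.descFactorial_of_lt this]
    rw [Matrix.det_of_upperTriangular htri, isUnit_iff_ne_zero, Finset.prod_ne_zero_iff]
    intro i _
    simp [M, iter_pow D z hz, Nat.descFactorial_self, Nat.factorial_ne_zero]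
  apply hG
  apply MvPolynomial.funext
  intro y
  have h1 := hHe (M⁻¹.mulVec y)
  rw [hH, Matrix.mulVec_mulVec, Matrix.mul_nonsing_inv _ hdet, Matrix.one_mulVec] at h1
  rw [← h1]; simp

end
end SumUnits

namespace SumUnits
section
open Polynomial
variable {K F : Type*} [Field K] [Field F] [Algebra K F]

lemma char0_case [CharZero K] (H : FinHyp K F) (S : Finset (ValuationSubring F))
    (hS : ∀ O ∈ S, IsPlace K F O) (hSne : S.Nonempty) (N : ℕ) :
    ∃ r : F, SInteger K F S r ∧
      ¬ ∃ (k : ℕ) (e : Fin k → F), 1 ≤ k ∧ k ≤ N ∧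
        (∀ i, SInteger K F S (e i) ∧ ∃ e' : F, SInteger K F S e' ∧ e i * e' = 1) ∧
        r = ∑ i, e i := by
  classical
  have : CharZero F := charZero_of_injective_algebraMap (algebraMap K F).injective
  obtain ⟨s, u, hu, hunit⟩ := units_fg H S hS
  obtain ⟨z, hzt, hzS⟩ := exists_sint H S hS hSne
  obtain ⟨D, hD⟩ := exists_derivation z hzt (H z hzt)
  choose Q hQ using der_iter D u hu
  let τ := Fin N × Option (Fin s)
  let m := Fintype.card τ + 1
  let P : Fin m → MvPolynomial τ F := fun i => ∑ l : Fin N,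
    MvPolynomial.rename (fun j => ((l, some j) : τ)) (Q i) * MvPolynomial.X (l, none)
  obtain ⟨G, hG, hGP⟩ := exists_alg_rel m (Nat.lt_succ_self _) P
  obtain ⟨c, hc⟩ := exists_nonzero D z hD m G hG
  refine ⟨∑ i : Fin m, c i • z ^ (i : ℕ), ?_, ?_⟩
  · intro O hO hOS
    refine sum_mem fun i _ => ?_
    rw [Algebra.smul_def]
    exact mul_mem (hO.1 _) (pow_mem (hzS O hO hOS) _)
  · rintro ⟨k, e, -, hk, he, hr⟩
    rw [hr] at hc
    apply hc
    choose d hd a ha using fun i => hunit (e i) (he i).1 (he i).2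
    let y : τ → F := fun t => if h : (t.1 : ℕ) < k then
      (match t.2 with
        | none => e ⟨t.1, h⟩
        | some j => (a ⟨t.1, h⟩ j : F)) else 0
    have hsum : ∀ (i : ℕ), (D^[i]) (∑ t, e t) = ∑ t, (D^[i]) (e t) := by
      intro i
      induction i with
      | zero => simp
      | succ i ih => simp only [Function.iterate_succ_apply', ih, map_sum]
    have hP : ∀ i : Fin m, MvPolynomial.eval y (P i) = (D^[(i : ℕ)]) (∑ t, e t) := by
      intro i
      rw [hsum]
      obtain ⟨n, rfl⟩ := Nat.exists_eq_add_of_le hk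
      simp only [P, map_sum, map_mul, MvPolynomial.eval_X, MvPolynomial.eval_rename]
      rw [Fin.sum_univ_add]
      have h0 : ∑ x : Fin n, MvPolynomial.eval (y ∘ fun j => ((Fin.natAdd k x, some j) : τ)) (Q i) *
          y (Fin.natAdd k x, none) = 0 := Finset.sum_eq_zero fun x _ => by simp [y]
      rw [h0, add_zero]
      refine Finset.sum_congr rfl fun t _ => ?_
      have h1 : y (Fin.castAdd n t, none) = e t := by simp [y]
      have h2 : (y ∘ fun j => ((Fin.castAdd n t, some j) : τ)) = fun j => (a t j : F) := by
        ext j; simp [y]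
      rw [h1, h2]
      conv_rhs => rw [ha t, hQ i (d t) (a t) (hd t), ← ha t]
    have h3 := congrArg (MvPolynomial.eval y) hGP
    rw [map_zero] at h3
    rw [← h3]
    simp only [← hP]
    clear_value P y
    clear hc hGP h3 hG
    induction G using MvPolynomial.induction_on with
    | C a => simp
    | add p q hp hq => simp only [map_add, hp, hq]
    | mul_X p i hp => simp only [map_mul, hp, MvPolynomial.eval_X, MvPolynomial.aeval_X]

end
end SumUnits

/-- For every positive integer `N` there is an `S`-integer that is not a sum of at most `N`
units of the ring of `S`-integers of an algebraic function field `F` over a perfect field `K`. -/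
theorem sums_of_units_in_function_fields
    (K F : Type*) [Field K] [PerfectField K] [Field F] [Algebra K F]
    (x : F) (hx : Transcendental K x)
    (hfin : FiniteDimensional (IntermediateField.adjoin K ({x} : Set F)) F)
    (S : Finset (ValuationSubring F))
    (hS : ∀ O ∈ S, IsPlace K F O) (hSne : S.Nonempty)
    (N : ℕ) (hN : 0 < N) :
    ∃ r : F, SInteger K F S r ∧
      ¬ ∃ (k : ℕ) (e : Fin k → F), 1 ≤ k ∧ k ≤ N ∧
        (∀ i, SInteger K F S (e i) ∧ ∃ e' : F, SInteger K F S e' ∧ e i * e' = 1) ∧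
        r = ∑ i, e i := by
  have H := SumUnits.finHyp_of x hx hfin
  obtain ⟨p, hp⟩ := CharP.exists K
  rcases CharP.char_is_prime_or_zero K p with h | h
  · have : Fact p.Prime := ⟨h⟩
    have : CharP F p := charP_of_injective_algebraMap (algebraMap K F).injective p
    exact SumUnits.charp_case H S hS hSne p N
  · subst h
    have : CharZero K := CharP.charP_to_charZero K
    exact SumUnits.char0_case H S hS hSne N
end

section
/- Let K be a perfect field, K(x) the rational function field over K, and F a finite field extension of K(x). Let O_F be the integral closure of the polynomial ring K[x] in F. Then for every positive integer N there exists an element r ∈ O_F such that r cannot be written as e_1 + ⋯ + e_k for any 1 ≤ k ≤ N and units e_1, …, e_k of O_F. -/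
open Polynomial IsDedekindDomain

theorem su_const (K L : Type*) [Field K] [Field L] [Algebra (RatFunc K) L]
    [FiniteDimensional (RatFunc K) L]
    [Algebra (Polynomial K) L] [IsScalarTower (Polynomial K) (RatFunc K) L]
    [DecidableEq (RatFunc K)] (u : L) (h1 : IsIntegral K[X] u)
    (h2 : IsIntegral (RatFunc.inftyValuation K).valuationSubring u) :
    ∃ g : K[X], g.Monic ∧ g.natDegree ≤ Module.finrank (RatFunc K) L ∧
      g.eval₂ ((algebraMap K[X] L).comp C) u = 0 := by
  set V := (RatFunc.inftyValuation K).valuationSubring with hV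
  have e1 := minpoly.isIntegrallyClosed_eq_field_fractions' (RatFunc K) h1
  have e2 := minpoly.isIntegrallyClosed_eq_field_fractions' (RatFunc K) h2
  have key : ∀ n, ∃ c : K, (minpoly (RatFunc K) u).coeff n = algebraMap K[X] (RatFunc K) (C c) := by
    intro n
    have c1 : (minpoly (RatFunc K) u).coeff n
      = algebraMap K[X] (RatFunc K) ((minpoly K[X] u).coeff n) := by
      rw [e1, coeff_map]
    have c2 : (minpoly (RatFunc K) u).coeff n
      = algebraMap V (RatFunc K) ((minpoly V u).coeff n) := by
      rw [e2, coeff_map]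
    set p := (minpoly K[X] u).coeff n
    by_cases hp : p = 0
    · exact ⟨0, by rw [c1, hp]; simp⟩
    · have : RatFunc.inftyValuation K (algebraMap K[X] (RatFunc K) p) ≤ 1 := by
        rw [← c1, c2]
        exact ((minpoly V u).coeff n).2
      rw [RatFunc.inftyValuation_apply, RatFunc.inftyValuation.polynomial K hp,
        ← WithZero.exp_zero, WithZero.exp_le_exp] at this
      have hd : p.natDegree = 0 := by exact_mod_cast le_antisymm this (by positivity)
      refine ⟨p.coeff 0, ?_⟩
      rw [c1, ← eq_C_of_natDegree_eq_zero hd]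
  choose c hc using key
  have hlift : minpoly (RatFunc K) u ∈ Polynomial.lifts
      ((algebraMap K[X] (RatFunc K)).comp C) := by
    rw [Polynomial.lifts_iff_coeff_lifts]
    intro n
    exact ⟨c n, (hc n).symm⟩
  have hi : IsIntegral (RatFunc K) u := IsIntegral.of_finite _ _
  obtain ⟨g, hg, hgd, hgm⟩ := Polynomial.lifts_and_natDegree_eq_and_monic hlift (minpoly.monic hi)
  refine ⟨g, hgm, hgd ▸ minpoly.natDegree_le u, ?_⟩
  have := minpoly.aeval (RatFunc K) u
  rw [← hg, aeval_def, eval₂_map] at this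
  rwa [← RingHom.comp_assoc, ← IsScalarTower.algebraMap_eq] at this

theorem su_units (K L : Type*) [Field K] [Field L] [Algebra (RatFunc K) L]
    [FiniteDimensional (RatFunc K) L] [Algebra.IsSeparable (RatFunc K) L]
    [Algebra (Polynomial K) L] [IsScalarTower (Polynomial K) (RatFunc K) L] :
    ∃ (s : ℕ) (ε : Fin s → Lˣ), (∀ i, IsIntegral K[X] (ε i : L) ∧
      IsIntegral K[X] ((ε i)⁻¹ : Lˣ).val) ∧
      ∀ u : Lˣ, IsIntegral K[X] (u : L) → IsIntegral K[X] (u⁻¹ : Lˣ).val →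
        ∃ (c : Lˣ) (a : Fin s → ℤ), u = c * ∏ i, ε i ^ a i ∧
          IsIntegral K[X] (c : L) ∧ IsIntegral K[X] (c⁻¹ : Lˣ).val ∧
          ∃ g : K[X], g.Monic ∧ g.natDegree ≤ Module.finrank (RatFunc K) L ∧
            g.eval₂ ((algebraMap K[X] L).comp C) (c : L) = 0 := by
  classical
  set v := RatFunc.inftyValuation K with hv
  let V := v.valuationSubring
  have : IsDiscreteValuationRing V := inferInstance
  let A := integralClosure V L
  have : IsDedekindDomain A := integralClosure.isDedekindDomain V (RatFunc K) L
  have : IsFractionRing A L := IsIntegralClosure.isFractionRing_of_finite_extension V (RatFunc K) L A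
  have : Algebra.IsIntegral V A := IsIntegralClosure.isIntegral_algebra V L
  have hfin : Finite (HeightOneSpectrum A) := by
    have hf := IsDedekindDomain.primesOver_finite (IsLocalRing.maximalIdeal V) A
    have : Finite ((IsLocalRing.maximalIdeal V).primesOver A) := hf
    refine Finite.of_injective (β := (IsLocalRing.maximalIdeal V).primesOver A)
      (fun P => ⟨P.asIdeal, P.isPrime, ⟨?_⟩⟩) ?_
    · have := (HeightOneSpectrum.under V P).isMaximal
      exact (IsLocalRing.eq_maximalIdeal this).symm
    · intro P Q h
      ext1
      exact congrArg Subtype.val h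
  let f0 : HeightOneSpectrum A → (Lˣ →* Multiplicative ℤ) := fun P =>
    (WithZero.unitsWithZeroEquiv (α := Multiplicative ℤ)).toMonoidHom.comp
      (Units.map (P.valuation L : L →* WithZero (Multiplicative ℤ)))
  have hf0 : ∀ P u, f0 P u = 1 → P.valuation L (u : L) = 1 := by
    intro P u h
    have h' : Units.map (P.valuation L : L →* WithZero (Multiplicative ℤ)) u = 1 := by
      apply (WithZero.unitsWithZeroEquiv (α := Multiplicative ℤ)).injective
      rw [map_one]; exact h
    simpa using congrArg Units.val h'
  let f : Additive Lˣ →+ (HeightOneSpectrum A → ℤ) :=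
    { toFun := fun u P => (f0 P u.toMul).toAdd
      map_zero' := by ext P; simp
      map_add' := by intro x y; ext P; simp }
  let O := integralClosure K[X] L
  let H : AddSubgroup (Additive Lˣ) :=
    { carrier := {u | (u.toMul : L) ∈ O ∧ ((u.toMul⁻¹ : Lˣ) : L) ∈ O}
      zero_mem' := by
        constructor
        · simp
        · simp
      add_mem' := by
        rintro x y ⟨hx1, hx2⟩ ⟨hy1, hy2⟩
        refine ⟨?_, ?_⟩
        · simpa using O.mul_mem hx1 hy1
        · rw [toMul_add, mul_inv, Units.val_mul]; exact O.mul_mem hx2 hy2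
      neg_mem' := by
        rintro x ⟨hx1, hx2⟩
        exact ⟨by simpa using hx2, by simpa using hx1⟩ }
  let M : Submodule ℤ (HeightOneSpectrum A → ℤ) := AddSubgroup.toIntSubmodule (H.map f)
  have hM : M.FG := IsNoetherian.noetherian M
  obtain ⟨s, t, ht⟩ := Submodule.fg_iff_exists_fin_generating_family.mp hM
  have hmem : ∀ i, ∃ e : Additive Lˣ, e ∈ H ∧ f e = t i := by
    intro i
    have : t i ∈ M := by rw [← ht]; exact Submodule.subset_span ⟨i, rfl⟩
    exact this
  choose e he1 he2 using hmem
  refine ⟨s, fun i => (e i).toMul, fun i => he1 i, ?_⟩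
  intro u hu1 hu2
  have hu : Additive.ofMul u ∈ H := ⟨hu1, hu2⟩
  have hfu : f (Additive.ofMul u) ∈ M := ⟨_, hu, rfl⟩
  rw [← ht, Submodule.mem_span_range_iff_exists_fun] at hfu
  obtain ⟨a, ha⟩ := hfu
  let c : Additive Lˣ := Additive.ofMul u - ∑ i, a i • e i
  have hcH : c ∈ H := H.sub_mem hu (H.sum_mem fun i _ => H.zsmul_mem (he1 i) _)
  have hc0 : f c = 0 := by
    simp only [c, map_sub, map_sum, map_zsmul, he2, ha, sub_self]
  have hcA : IsIntegral V (c.toMul : L) := by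
    have := HeightOneSpectrum.mem_integers_of_valuation_le_one (R := A) L (c.toMul : L) (by
      intro P
      refine (hf0 P _ ?_).le
      have := congrFun hc0 P
      exact this)
    obtain ⟨y, hy⟩ := this
    rw [← hy]; exact y.2
  refine ⟨c.toMul, a, ?_, hcH.1, hcH.2, su_const K L _ hcH.1 hcA⟩
  have : Additive.ofMul u = c + ∑ i, a i • e i := by simp [c]
  have := congrArg Additive.toMul this
  simpa using this

/-- Substitution `x ↦ a + t`. -/
noncomputable def suSigma (K C : Type*) [Field K] [Field C] [Algebra K C] (a : C) :
    K[X] →+* PowerSeries C :=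
  Polynomial.eval₂RingHom ((PowerSeries.C).comp (algebraMap K C)) (PowerSeries.C a + PowerSeries.X)

theorem suSigma_apply (K C : Type*) [Field K] [Field C] [Algebra K C] (a : C) (r : K[X]) :
    suSigma K C a r = ((taylor a (r.map (algebraMap K C)) : C[X]) : PowerSeries C) := by
  have : suSigma K C a = (Polynomial.coeToPowerSeries.ringHom (R := C)).comp
      ((Polynomial.taylorAlgHom a : C[X] →ₐ[C] C[X]).toRingHom.comp
        (Polynomial.mapRingHom (algebraMap K C))) := by
    apply Polynomial.ringHom_ext
    · intro k; simp [suSigma]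
    · simp [suSigma, add_comm]
  rw [this]; simp

theorem suSigma_injective (K C : Type*) [Field K] [Field C] [Algebra K C] (a : C) :
    Function.Injective (suSigma K C a) := by
  intro r s h
  rw [suSigma_apply, suSigma_apply] at h
  exact Polynomial.map_injective _ (algebraMap K C).injective
    (Polynomial.taylor_injective a (Polynomial.coe_injective C h))

theorem suSigma_const (K C : Type*) [Field K] [Field C] [Algebra K C] (a : C) (r : K[X]) :
    PowerSeries.constantCoeff (suSigma K C a r) = r.eval₂ (algebraMap K C) a := by
  simp only [suSigma, coe_eval₂RingHom, hom_eval₂]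
  simp [← RingHom.comp_assoc]

theorem su_bezout (K L : Type*) [Field K] [Field L] [Algebra (RatFunc K) L]
    [FiniteDimensional (RatFunc K) L] [Algebra.IsSeparable (RatFunc K) L]
    [Algebra (Polynomial K) L] [IsScalarTower (Polynomial K) (RatFunc K) L]
    (θ : L) (hθ : IsIntegral K[X] θ) :
    ∃ (d : K[X]) (A B : K[X][X]), d ≠ 0 ∧
      A * minpoly K[X] θ + B * derivative (minpoly K[X] θ) = C d := by
  have hs := Algebra.IsSeparable.isSeparable (RatFunc K) θ
  have e1 := minpoly.isIntegrallyClosed_eq_field_fractions' (RatFunc K) hθ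
  obtain ⟨A, B, h⟩ := hs
  obtain ⟨d1, hd1, h1⟩ := IsLocalization.integerNormalization_spec (nonZeroDivisors K[X]) A
  obtain ⟨d2, hd2, h2⟩ := IsLocalization.integerNormalization_spec (nonZeroDivisors K[X]) B
  set A1 := IsLocalization.integerNormalization (nonZeroDivisors K[X]) A
  set B1 := IsLocalization.integerNormalization (nonZeroDivisors K[X]) B
  refine ⟨d1 * d2, C d2 * A1, C d1 * B1, mul_ne_zero (nonZeroDivisors.ne_zero hd1)
    (nonZeroDivisors.ne_zero hd2), ?_⟩
  apply Polynomial.map_injective (algebraMap K[X] (RatFunc K)) (RatFunc.algebraMap_injective K)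
  rw [Polynomial.map_add, Polynomial.map_mul, Polynomial.map_mul, Polynomial.map_mul,
    Polynomial.map_mul, h1, h2, ← Polynomial.derivative_map, ← e1]
  have hal : ∀ (d : K[X]) (q : (RatFunc K)[X]),
      d • q = C (algebraMap K[X] (RatFunc K) d) * q := by
    intro d q
    rw [← Polynomial.smul_eq_C_mul, algebraMap_smul]
  rw [hal, hal, Polynomial.map_C, Polynomial.map_C, Polynomial.map_C, map_mul, map_mul]
  linear_combination (C (algebraMap K[X] (RatFunc K) d1) * C (algebraMap K[X] (RatFunc K) d2)) * h

theorem su_choose (K C : Type*) [Field K] [Field C] [Algebra K C] [IsAlgClosed C] (d : K[X])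
    (hd : d ≠ 0) : ∃ a : C, (Infinite K → a ∈ Set.range (algebraMap K C)) ∧
      d.eval₂ (algebraMap K C) a ≠ 0 := by
  by_cases hK : Infinite K
  · by_contra! hcon
    apply hd
    apply Polynomial.funext
    intro k
    have := hcon (algebraMap K C k) (fun _ => ⟨k, rfl⟩)
    rw [Polynomial.eval₂_at_apply] at this
    simpa using this
  · have : Infinite C := IsAlgClosed.instInfinite
    by_contra! hcon
    apply hd
    apply Polynomial.map_injective _ (algebraMap K C).injective
    apply Polynomial.funext
    intro k
    have := hcon k (fun h => absurd h hK)
    rw [eval_map, this]; simp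

theorem su_prim (K L : Type*) [Field K] [Field L] [Algebra (RatFunc K) L]
    [FiniteDimensional (RatFunc K) L] [Algebra.IsSeparable (RatFunc K) L]
    [Algebra (Polynomial K) L] [IsScalarTower (Polynomial K) (RatFunc K) L] :
    ∃ θ : L, IsIntegral K[X] θ ∧ IntermediateField.adjoin (RatFunc K) {θ} = ⊤ := by
  obtain ⟨θ, hθ⟩ := Field.exists_primitive_element (RatFunc K) L
  have : Algebra.IsAlgebraic K[X] L :=
    (IsFractionRing.comap_isAlgebraic_iff (A := K[X]) (K := RatFunc K) (C := L)).mpr inferInstance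
  obtain ⟨y, hy, h_integral⟩ := (Algebra.IsAlgebraic.isAlgebraic (R := K[X]) θ).exists_integral_multiple
  refine ⟨y • θ, h_integral, ?_⟩
  rw [eq_top_iff, ← hθ, IntermediateField.adjoin_le_iff, Set.singleton_subset_iff]
  have h1 : y • θ ∈ IntermediateField.adjoin (RatFunc K) {y • θ} :=
    IntermediateField.mem_adjoin_simple_self _ _
  have hy' : algebraMap K[X] (RatFunc K) y ≠ 0 := by simpa using hy
  have : θ = (algebraMap K[X] (RatFunc K) y)⁻¹ • (y • θ) := by
    rw [← algebraMap_smul (RatFunc K) y θ, smul_smul, inv_mul_cancel₀ hy', one_smul]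
  have h2 : (algebraMap K[X] (RatFunc K) y)⁻¹ • (y • θ) ∈
      IntermediateField.adjoin (RatFunc K) {y • θ} :=
    (IntermediateField.adjoin (RatFunc K) {y • θ}).smul_mem h1
  rw [← this] at h2
  exact h2

theorem su_phi (K L C : Type*) [Field K] [Field L] [Algebra (RatFunc K) L]
    [FiniteDimensional (RatFunc K) L] [Algebra.IsSeparable (RatFunc K) L]
    [Algebra (Polynomial K) L] [IsScalarTower (Polynomial K) (RatFunc K) L]
    [Field C] [Algebra K C] [IsAlgClosed C] :
    ∃ a : C, (Infinite K → a ∈ Set.range (algebraMap K C)) ∧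
      ∃ φ : integralClosure K[X] L →+* PowerSeries C,
        ∀ r : K[X], φ (algebraMap K[X] (integralClosure K[X] L) r) = suSigma K C a r := by
  obtain ⟨θ, hθ, htop⟩ := su_prim K L
  obtain ⟨d, A, B, hd, hAB⟩ := su_bezout K L θ hθ
  obtain ⟨a, haK, had⟩ := su_choose K C d hd
  refine ⟨a, haK, ?_⟩
  set f := minpoly K[X] θ with hf
  have hfm : f.Monic := minpoly.monic hθ
  set σ := suSigma K C a with hσ
  let τ0 : K[X] →+* C := (PowerSeries.constantCoeff).comp σ
  obtain ⟨b, hb⟩ : ∃ b, (f.map τ0).IsRoot b := by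
    apply IsAlgClosed.exists_root
    rw [hfm.degree_map]
    exact (minpoly.degree_pos hθ).ne'
  have hb' : (derivative (f.map τ0)).eval b ≠ 0 := by
    intro h0
    have := congrArg (fun q => (q.map τ0).eval b) hAB
    simp only [Polynomial.map_add, Polynomial.map_mul, eval_add, eval_mul, ← derivative_map, h0,
      hb.eq_zero, Polynomial.map_C, eval_C, mul_zero, add_zero] at this
    apply had
    rw [← suSigma_const]
    exact this.symm
  obtain ⟨y, hy⟩ : ∃ y, (f.map σ).IsRoot y := by
    have hH : HenselianRing (PowerSeries C) (Ideal.span {PowerSeries.X}) := inferInstance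
    have hev : ∀ q : K[X][X], PowerSeries.constantCoeff ((q.map σ).eval (PowerSeries.C b))
        = (q.map τ0).eval b := by
      intro q
      rw [eval_map, eval_map, hom_eval₂]
      simp [τ0]
    obtain ⟨y, hy, -⟩ := hH.is_henselian (f.map σ) (hfm.map _) (PowerSeries.C b) (by
      rw [Ideal.mem_span_singleton, PowerSeries.X_dvd_iff, hev]; exact hb) (by
      apply IsUnit.map
      rw [PowerSeries.isUnit_iff_constantCoeff, derivative_map, hev, isUnit_iff_ne_zero,
        ← derivative_map]
      exact hb')
    exact ⟨y, hy⟩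
  let M := FractionRing (PowerSeries C)
  let ι : PowerSeries C →+* M := algebraMap _ _
  have hι : Function.Injective ι := IsFractionRing.injective _ _
  let τ : RatFunc K →+* M := IsFractionRing.lift (A := K[X]) (g := ι.comp σ)
    (hι.comp (suSigma_injective K C a))
  have hτ : ∀ r, τ (algebraMap K[X] (RatFunc K) r) = ι (σ r) := by
    intro r; exact IsFractionRing.lift_algebraMap _ _
  let _ : Algebra (RatFunc K) M := τ.toAlgebra
  have e1 := minpoly.isIntegrallyClosed_eq_field_fractions' (RatFunc K) hθ
  have hroot : aeval (ι y) (minpoly (RatFunc K) θ) = 0 := by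
    rw [e1, aeval_def, eval₂_map]
    have : (algebraMap (RatFunc K) M).comp (algebraMap K[X] (RatFunc K)) = ι.comp σ := by
      exact RingHom.ext hτ
    rw [this, ← hom_eval₂, ← eval_map, hy.eq_zero, map_zero]
  have hi : IsIntegral (RatFunc K) θ := IsIntegral.of_finite _ _
  obtain ⟨ψ⟩ : Nonempty (L →ₐ[RatFunc K] M) := by
    have r : {x // x ∈ (minpoly (RatFunc K) θ).aroots M} := ⟨ι y, by
      rw [mem_aroots]; exact ⟨minpoly.ne_zero hi, hroot⟩⟩
    have g := (IntermediateField.algHomAdjoinIntegralEquiv (RatFunc K) (K := M) hi).symm r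
    exact ⟨(g.comp (IntermediateField.equivOfEq htop.symm).toAlgHom).comp
      IntermediateField.topEquiv.symm.toAlgHom⟩
  have hψ : ∀ r : K[X], ψ (algebraMap K[X] L r) = ι (σ r) := by
    intro r
    rw [IsScalarTower.algebraMap_apply K[X] (RatFunc K) L, ψ.commutes]
    exact hτ r
  have hex : ∀ z : integralClosure K[X] L, ∃ w : PowerSeries C, ι w = ψ z := by
    intro z
    have : IsIntegral (PowerSeries C) (ψ (z : L)) :=
      IsIntegral.map_of_comp_eq σ (ψ : L →+* M) (RingHom.ext fun r => (hψ r).symm) z.2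
    exact IsIntegrallyClosed.isIntegral_iff.mp this
  choose g hg using hex
  refine ⟨{ toFun := g, map_one' := ?_, map_zero' := ?_, map_mul' := ?_, map_add' := ?_ }, ?_⟩
  · apply hι; rw [hg]; simp
  · intro x y; apply hι; rw [map_mul, hg, hg, hg]; simp
  · apply hι; rw [hg]; simp
  · intro x y; apply hι; rw [map_add, hg, hg, hg]; simp
  · intro r
    apply hι
    simp only [RingHom.coe_mk, MonoidHom.coe_mk, OneHom.coe_mk]
    rw [hg, ← hψ]; rfl

theorem suSigma_comp (K C : Type*) [Field K] [Field C] [Algebra K C] (k : K) (p : K[X]) :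
    suSigma K C (algebraMap K C k) (p.comp (X - Polynomial.C k)) =
      ((p.map (algebraMap K C) : C[X]) : PowerSeries C) := by
  rw [suSigma_apply, taylor_apply, Polynomial.map_comp, Polynomial.comp_assoc]
  simp

/-- Product of powers of the `η i`. -/
noncomputable def suProd {C : Type*} [Field C] {s : ℕ} (η : Fin s → (PowerSeries C)ˣ)
    (a : Fin s → ℤ) : PowerSeries C := ((∏ i, η i ^ a i : (PowerSeries C)ˣ) : PowerSeries C)

/-- Logarithmic derivative. -/
noncomputable def suLog (C : Type*) [Field C] :
    (PowerSeries C)ˣ →* Multiplicative (PowerSeries C) where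
  toFun u := Multiplicative.ofAdd (PowerSeries.derivative C (u : PowerSeries C) * (u⁻¹ : (PowerSeries C)ˣ))
  map_one' := by simp
  map_mul' := by
    intro u v
    rw [← ofAdd_add]
    congr 1
    rw [Units.val_mul, Derivation.leibniz, mul_inv, Units.val_mul, smul_eq_mul, smul_eq_mul]
    have hu : (u : PowerSeries C) * (u⁻¹ : (PowerSeries C)ˣ) = 1 := u.mul_inv
    have hv : (v : PowerSeries C) * (v⁻¹ : (PowerSeries C)ˣ) = 1 := v.mul_inv
    linear_combination
      (PowerSeries.derivative C (v : PowerSeries C) * (v⁻¹ : (PowerSeries C)ˣ)) * hu +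
      (PowerSeries.derivative C (u : PowerSeries C) * (u⁻¹ : (PowerSeries C)ˣ)) * hv

theorem suProd_derivative {C : Type*} [Field C] {s : ℕ} (η : Fin s → (PowerSeries C)ˣ)
    (a : Fin s → ℤ) : PowerSeries.derivative C (suProd η a) =
      suProd η a * ∑ i, (a i) • (suLog C (η i)).toAdd := by
  have h : (suLog C (∏ i, η i ^ a i)).toAdd = ∑ i, (a i) • (suLog C (η i)).toAdd := by
    rw [map_prod]; simp
  rw [← h]
  simp only [suLog, MonoidHom.coe_mk, OneHom.coe_mk, toAdd_ofAdd, suProd]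
  rw [mul_comm, mul_assoc, Units.inv_mul, mul_one]

theorem suProd_const {C : Type*} [Field C] {s : ℕ} (η : Fin s → (PowerSeries C)ˣ)
    (hη : ∀ i, PowerSeries.constantCoeff (η i : PowerSeries C) = 1)
    (a : Fin s → ℤ) : PowerSeries.constantCoeff (suProd η a) = 1 := by
  have h : ∀ i, Units.map (PowerSeries.constantCoeff (R := C)).toMonoidHom (η i) = 1 := by
    intro i; ext; exact hη i
  have : Units.map (PowerSeries.constantCoeff (R := C)).toMonoidHom (∏ i, η i ^ a i) = 1 := by
    rw [map_prod]; simp only [map_zpow, h, one_zpow, Finset.prod_const_one]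
  exact congrArg Units.val this

theorem suProd_coeff {C : Type*} [Field C] [CharZero C] {s : ℕ} (η : Fin s → (PowerSeries C)ˣ)
    (hη : ∀ i, PowerSeries.constantCoeff (η i : PowerSeries C) = 1) (j : ℕ) :
    ∃ Q : MvPolynomial (Fin s) C, ∀ a : Fin s → ℤ,
      PowerSeries.coeff j (suProd η a) = MvPolynomial.eval (fun i => (a i : C)) Q := by
  induction j using Nat.strong_induction_on with
  | _ j ih =>
    rcases j with _ | j
    · exact ⟨1, fun a => by simpa using suProd_const η hη a⟩
    · have ih' : ∀ k : ℕ, ∃ Q : MvPolynomial (Fin s) C, k < j + 1 → ∀ a : Fin s → ℤ,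
          PowerSeries.coeff k (suProd η a) = MvPolynomial.eval (fun i => (a i : C)) Q := by
        intro k
        by_cases hk : k < j + 1
        · obtain ⟨Q, hQ⟩ := ih k hk
          exact ⟨Q, fun _ => hQ⟩
        · exact ⟨0, fun h => absurd h hk⟩
      choose Q hQ using ih'
      refine ⟨MvPolynomial.C ((j + 1 : C)⁻¹) * ∑ kl ∈ Finset.HasAntidiagonal.antidiagonal j, Q kl.1 *
        ∑ i, MvPolynomial.X i *
          MvPolynomial.C (PowerSeries.coeff kl.2 (suLog C (η i)).toAdd), fun a => ?_⟩
      have h := congrArg (PowerSeries.coeff j) (suProd_derivative η a)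
      rw [PowerSeries.coeff_derivative, PowerSeries.coeff_mul] at h
      have hj : (j + 1 : C) ≠ 0 := by exact_mod_cast Nat.succ_ne_zero j
      rw [map_mul, MvPolynomial.eval_C, eq_inv_mul_iff_mul_eq₀ hj, mul_comm, h, map_sum]
      refine Finset.sum_congr rfl fun kl hkl => ?_
      have hlt : kl.1 < j + 1 := by
        have := Finset.HasAntidiagonal.mem_antidiagonal.mp hkl
        omega
      rw [map_mul, hQ kl.1 hlt a, map_sum, map_sum]
      congr 1
      refine Finset.sum_congr rfl fun i _ => ?_
      rw [map_mul, MvPolynomial.eval_X, MvPolynomial.eval_C, map_zsmul, zsmul_eq_mul]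

theorem su_char0 (K C : Type*) [Field K] [Field C] [Algebra K C] [CharZero K] [CharZero C]
    {s : ℕ} (η : Fin s → (PowerSeries C)ˣ)
    (hη : ∀ i, PowerSeries.constantCoeff (η i : PowerSeries C) = 1) (N : ℕ) (k : K) :
    ∃ r : K[X], ∀ (c : Fin N → C) (b : Fin N → Fin s → ℤ),
      suSigma K C (algebraMap K C k) r ≠ ∑ l, PowerSeries.C (c l) * suProd η (b l) := by
  choose Q hQ using suProd_coeff η hη
  let m := Fintype.card (Fin N × Option (Fin s)) + 1
  let G : Fin m → MvPolynomial (Fin N × Option (Fin s)) C := fun j =>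
    ∑ l, MvPolynomial.X (l, none) * MvPolynomial.rename (fun i => (l, some i)) (Q j)
  have hG : ¬ AlgebraicIndependent C G := by
    intro h
    have := h.lift_cardinalMk_le_trdeg
    rw [MvPolynomial.trdeg_of_isDomain] at this
    simp only [Cardinal.mk_fintype, Fintype.card_fin, Cardinal.lift_natCast, Nat.cast_le] at this
    omega
  rw [algebraicIndependent_iff] at hG
  push Not at hG
  obtain ⟨Φ, hΦ, hΦ0⟩ := hG
  obtain ⟨x, hx⟩ : ∃ x : Fin m → K, MvPolynomial.eval (fun i => algebraMap K C (x i)) Φ ≠ 0 := by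
    by_contra! hcon
    apply hΦ0
    apply MvPolynomial.funext_set (fun _ => Set.range (algebraMap K C))
    · intro _
      exact Set.infinite_range_of_injective (algebraMap K C).injective
    · intro y hy
      have : ∀ i, ∃ z, algebraMap K C z = y i := fun i => hy i (Set.mem_univ i)
      choose z hz using this
      have h2 := hcon z
      simp only [hz] at h2
      simpa using h2
  let P : K[X] := ∑ j : Fin m, Polynomial.C (x j) * X ^ (j : ℕ)
  refine ⟨P.comp (X - Polynomial.C k), fun c b heq => ?_⟩
  rw [suSigma_comp] at heq
  apply hx
  let y : Fin N × Option (Fin s) → C := fun q => q.2.elim (c q.1) (fun i => (b q.1 i : C))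
  have hy : ∀ j : Fin m, algebraMap K C (x j) = MvPolynomial.eval y (G j) := by
    intro j
    have h := congrArg (PowerSeries.coeff (j : ℕ)) heq
    rw [Polynomial.coeff_coe, coeff_map] at h
    have hP : P.coeff j = x j := by
      simp [P, Polynomial.coeff_X_pow, Fin.val_inj]
    rw [hP] at h
    rw [h, map_sum, map_sum]
    refine Finset.sum_congr rfl fun l _ => ?_
    rw [PowerSeries.coeff_C_mul, hQ, map_mul, MvPolynomial.eval_X, MvPolynomial.eval_rename]
    rfl
  have h1 : (fun i => algebraMap K C (x i)) = fun i => MvPolynomial.eval y (G i) := funext hy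
  rw [h1]
  have h2 := congrArg (MvPolynomial.eval y) hΦ
  rw [map_zero, MvPolynomial.aeval_def, MvPolynomial.eval, MvPolynomial.coe_eval₂Hom,
    ← MvPolynomial.coe_eval₂Hom, MvPolynomial.hom_eval₂] at h2
  rw [MvPolynomial.eval, MvPolynomial.coe_eval₂Hom, ← h2]
  congr 1
  ext z
  simp

theorem suProd_mod {C : Type*} [Field C] (p : ℕ) [Fact p.Prime] [CharP C p] {s : ℕ}
    (η : Fin s → (PowerSeries C)ˣ)
    (hη : ∀ i, PowerSeries.constantCoeff (η i : PowerSeries C) = 1) (e : ℕ)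
    (a a' : Fin s → ℤ) (h : ∀ i, a i ≡ a' i [ZMOD (p ^ e : ℕ)]) :
    (PowerSeries.X ^ (p ^ e) : PowerSeries C) ∣ suProd η a - suProd η a' := by
  have : CharP (PowerSeries C) p := charP_of_injective_algebraMap
    (algebraMap C (PowerSeries C)).injective p
  let π := Ideal.Quotient.mk (Ideal.span {(PowerSeries.X ^ (p ^ e) : PowerSeries C)})
  have h1 : ∀ i, Units.map π.toMonoidHom (η i) ^ (p ^ e) = 1 := by
    intro i
    ext
    have hd : (PowerSeries.X : PowerSeries C) ∣ (η i : PowerSeries C) - 1 := by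
      rw [PowerSeries.X_dvd_iff]; simp [hη]
    have h2 : (η i : PowerSeries C) ^ (p ^ e) - 1 = ((η i : PowerSeries C) - 1) ^ (p ^ e) := by
      rw [sub_pow_char_pow, one_pow]
    rw [← map_pow]
    change π ((η i ^ (p ^ e) : (PowerSeries C)ˣ) : PowerSeries C) = 1
    rw [← map_one π, Ideal.Quotient.eq, Ideal.mem_span_singleton, Units.val_pow_eq_pow_val, h2]
    exact pow_dvd_pow_of_dvd hd _
  rw [← Ideal.mem_span_singleton, ← Ideal.Quotient.eq]
  have h3 : Units.map π.toMonoidHom (∏ i, η i ^ a i) = Units.map π.toMonoidHom (∏ i, η i ^ a' i) := by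
    rw [map_prod, map_prod]
    refine Finset.prod_congr rfl fun i _ => ?_
    rw [map_zpow, map_zpow, zpow_eq_zpow_iff_modEq]
    exact (h i).of_dvd (by exact_mod_cast orderOf_dvd_of_pow_eq_one (h1 i))
  exact congrArg Units.val h3

theorem su_charp_inf (K C : Type*) [Field K] [Field C] [Algebra K C] [Infinite K]
    (p : ℕ) [Fact p.Prime] [CharP C p] (g : ℕ)
    {s : ℕ} (η : Fin s → (PowerSeries C)ˣ)
    (hη : ∀ i, PowerSeries.constantCoeff (η i : PowerSeries C) = 1) (N : ℕ) (k : K) :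
    ∃ r : K[X], ∀ (c : Fin N → C) (b : Fin N → Fin s → ℤ),
      suSigma K C (algebraMap K C k) r ^ (p ^ g) ≠
        ∑ l, PowerSeries.C (c l) * suProd η (b l) := by
  have hp : p.Prime := Fact.out
  have : CharP (PowerSeries C) p := charP_of_injective_algebraMap
    (algebraMap C (PowerSeries C)).injective p
  have : ExpChar (PowerSeries C) p := ExpChar.prime hp
  have : ExpChar C p := ExpChar.prime hp
  by_contra! hcon
  let R : K → K[X] := fun l => ∑ j : Fin (N + 1), Polynomial.C (l ^ (j : ℕ)) * X ^ (j : ℕ)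
  have hR : ∀ l : K, ∀ j : Fin (N + 1),
      PowerSeries.coeff (p ^ g * j) (suSigma K C (algebraMap K C k)
        ((R l).comp (X - Polynomial.C k)) ^ (p ^ g)) = ((algebraMap K C l) ^ (p ^ g)) ^ (j : ℕ) := by
    intro l j
    have hq : 0 < p ^ g := pow_pos hp.pos g
    rw [suSigma_comp]
    have : (((R l).map (algebraMap K C) : C[X]) : PowerSeries C) =
        ∑ j : Fin (N + 1), PowerSeries.C (algebraMap K C l ^ (j : ℕ)) * PowerSeries.X ^ (j : ℕ) := by
      simp only [R, Polynomial.map_sum]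
      rw [← Polynomial.coeToPowerSeries.ringHom_apply, map_sum]
      simp
    rw [this, sum_pow_char_pow, map_sum]
    simp only [mul_pow, ← map_pow, ← pow_mul, PowerSeries.coeff_C_mul, PowerSeries.coeff_X_pow]
    rw [Finset.sum_eq_single j]
    · simp [mul_comm]
    · intro i _ hij
      rw [if_neg, mul_zero]
      intro h
      rw [mul_comm] at h
      exact hij (Fin.ext (Nat.eq_of_mul_eq_mul_right hq h.symm))
    · simp
  choose c b hcb using fun l => hcon ((R l).comp (X - Polynomial.C k))
  obtain ⟨e, he⟩ : ∃ e, p ^ g * (N + 1) ≤ p ^ e := by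
    exact ⟨p ^ g * (N + 1), (Nat.lt_pow_self hp.one_lt).le⟩
  have : NeZero (p ^ e) := ⟨(pow_pos hp.pos e).ne'⟩
  let F : K → (Fin N → Fin s → ZMod (p ^ e)) := fun l i j => (b l i j : ZMod (p ^ e))
  obtain ⟨y, hy⟩ := Finite.exists_infinite_fiber F
  let emb : Fin (N + 1) → K := fun i => (Infinite.natEmbedding (F ⁻¹' {y}) i : K)
  have hemb : Function.Injective emb := fun i j h =>
    Fin.ext ((Infinite.natEmbedding (F ⁻¹' {y})).injective (Subtype.ext h))
  have hF : ∀ i, F (emb i) = y := fun i => (Infinite.natEmbedding (F ⁻¹' {y}) i).2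
  let v : Fin (N + 1) → C := fun i => algebraMap K C (emb i) ^ (p ^ g)
  have hv : Function.Injective v := by
    intro i j h
    apply hemb
    apply (algebraMap K C).injective
    exact iterateFrobenius_inj C p g h
  have hdet := Matrix.det_vandermonde_ne_zero_iff.mpr hv
  let A : Matrix (Fin (N + 1)) (Fin N) C := fun i l => c (emb i) l
  let B : Matrix (Fin N) (Fin (N + 1)) C := fun l j =>
    PowerSeries.coeff (p ^ g * j) (suProd η (b (emb 0) l))
  have hAB : Matrix.vandermonde v = A * B := by
    ext i j
    rw [Matrix.vandermonde_apply, Matrix.mul_apply]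
    change ((algebraMap K C (emb i)) ^ (p ^ g)) ^ (j : ℕ) = _
    rw [← hR (emb i) j, hcb, map_sum]
    refine Finset.sum_congr rfl fun l _ => ?_
    rw [PowerSeries.coeff_C_mul]
    congr 1
    have hd := suProd_mod p η hη e (b (emb i) l) (b (emb 0) l) (by
      intro t
      rw [← ZMod.intCast_eq_intCast_iff]
      exact congrFun (congrFun ((hF i).trans (hF 0).symm) l) t)
    rw [PowerSeries.X_pow_dvd_iff] at hd
    have := hd (p ^ g * j) (lt_of_lt_of_le (Nat.mul_lt_mul_of_pos_left j.2 (pow_pos hp.pos g)) he)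
    rw [map_sub, sub_eq_zero] at this
    exact this
  have h1 : (Matrix.vandermonde v).rank = N + 1 := by
    rw [Matrix.rank_of_isUnit _ ((Matrix.isUnit_iff_isUnit_det _).mpr hdet.isUnit)]
    simp
  have h2 : (A * B).rank ≤ N := (Matrix.rank_mul_le_left A B).trans
    (by simpa using Matrix.rank_le_card_width A)
  rw [← hAB] at h2
  omega

theorem su_growth (p D E : ℕ) (hp : 1 < p) : ∃ f : ℕ, D * (p ^ f) ^ E < 2 ^ (p ^ f) := by
  have h := tendsto_pow_const_div_const_pow_of_one_lt E (r := (2 : ℝ)) (by norm_num)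
  have h2 := (h.eventually_lt_const (u := 1 / (D + 1 : ℝ)) (by positivity))
  obtain ⟨n0, hn0⟩ := Filter.eventually_atTop.mp h2
  refine ⟨n0, ?_⟩
  have h3 := hn0 (p ^ n0) (Nat.lt_pow_self hp).le
  rw [div_lt_div_iff₀ (by positivity) (by positivity)] at h3
  have h4 : ((p ^ n0 : ℕ) : ℝ) ^ E * (D + 1) < 2 ^ (p ^ n0) := by simpa using h3
  have h5 : (p ^ n0) ^ E * (D + 1) < 2 ^ (p ^ n0) := by exact_mod_cast h4
  nlinarith [Nat.zero_le ((p ^ n0) ^ E)]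

theorem su_charp_fin (K C : Type*) [Field K] [Field C] [Algebra K C] [Finite K]
    (p : ℕ) [Fact p.Prime] [CharP C p] (g : ℕ)
    {s : ℕ} (η : Fin s → (PowerSeries C)ˣ)
    (hη : ∀ i, PowerSeries.constantCoeff (η i : PowerSeries C) = 1) (N : ℕ) (a : C)
    (Z : Set C) (hZ : Z.Finite) :
    ∃ r : K[X], ∀ (c : Fin N → C) (b : Fin N → Fin s → ℤ), (∀ l, c l ∈ Z) →
      suSigma K C a r ^ (p ^ g) ≠ ∑ l, PowerSeries.C (c l) * suProd η (b l) := by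
  have hp : p.Prime := Fact.out
  have : CharP (PowerSeries C) p := charP_of_injective_algebraMap
    (algebraMap C (PowerSeries C)).injective p
  have : ExpChar (PowerSeries C) p := ExpChar.prime hp
  by_contra! hcon
  choose c b hZc hcb using hcon
  have := Fintype.ofFinite K
  have : Fintype Z := hZ.fintype
  obtain ⟨f, hf⟩ := su_growth p (Fintype.card Z ^ N * (p ^ g) ^ (s * N)) (s * N) hp.one_lt
  let m := p ^ f
  let e := g + f
  have : NeZero (p ^ e) := ⟨(pow_pos hp.pos e).ne'⟩
  let R : (Fin m → K) → K[X] := fun x => ∑ j : Fin m, Polynomial.C (x j) * X ^ (j : ℕ)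
  let F : (Fin m → K) → (Fin N → Z × (Fin s → ZMod (p ^ e))) := fun x l =>
    (⟨c (R x) l, hZc (R x) l⟩, fun i => (b (R x) l i : ZMod (p ^ e)))
  have hF : Function.Injective F := by
    intro x y hxy
    have hd : (PowerSeries.X ^ (p ^ e) : PowerSeries C) ∣
        suSigma K C a (R x) ^ (p ^ g) - suSigma K C a (R y) ^ (p ^ g) := by
      rw [hcb, hcb, ← Finset.sum_sub_distrib]
      refine Finset.dvd_sum fun l _ => ?_
      have hl := congrFun hxy l
      have h1 : c (R x) l = c (R y) l := congrArg Subtype.val (congrArg Prod.fst hl)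
      rw [h1, ← mul_sub]
      refine Dvd.dvd.mul_left (suProd_mod p η hη e _ _ fun i => ?_) _
      rw [← ZMod.intCast_eq_intCast_iff]
      exact congrFun (congrArg Prod.snd hl) i
    have hq : p ^ g ≠ 0 := (pow_pos hp.pos g).ne'
    have hpe : p ^ e = m * p ^ g := by simp only [e, m]; rw [pow_add, mul_comm]
    rw [← sub_pow_expChar_pow, hpe, pow_mul, IsIntegrallyClosed.pow_dvd_pow_iff hq, ← map_sub,
      suSigma_apply, PowerSeries.X_pow_dvd_iff] at hd
    have hdeg : (R x - R y).degree < m := by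
      have : ∀ x, (R x).degree < m := fun x => Polynomial.degree_sum_fin_lt x
      exact lt_of_le_of_lt (Polynomial.degree_sub_le _ _) (max_lt (this x) (this y))
    have h0 : taylor a ((R x - R y).map (algebraMap K C)) = 0 := by
      ext n
      by_cases hn : n < m
      · have := hd n hn
        rwa [Polynomial.coeff_coe] at this
      · apply Polynomial.coeff_eq_zero_of_degree_lt
        rw [Polynomial.degree_taylor, Polynomial.degree_map]
        exact hdeg.trans_le (by exact_mod_cast not_lt.mp hn)
    have h1 : R x - R y = 0 := by
      apply Polynomial.map_injective _ (algebraMap K C).injective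
      apply Polynomial.taylor_injective a
      rw [h0]; simp
    have hc : ∀ x (j : Fin m), (R x).coeff j = x j := by
      intro x j
      simp [R, Polynomial.coeff_X_pow, Fin.val_inj]
    funext j
    rw [← hc x, ← hc y, sub_eq_zero.mp h1]
  have hcard := Fintype.card_le_of_injective F hF
  simp only [Fintype.card_fun, Fintype.card_fin, Fintype.card_prod, ZMod.card] at hcard
  have h2 : 2 ^ m ≤ Fintype.card K ^ m := Nat.pow_le_pow_left Fintype.one_lt_card m
  have h3 : (Fintype.card Z * (p ^ e) ^ s) ^ N =
      Fintype.card Z ^ N * (p ^ g) ^ (s * N) * (p ^ f) ^ (s * N) := by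
    simp only [e]; rw [pow_add]; ring
  rw [h3] at hcard
  exact absurd hf (not_lt.mpr (h2.trans hcard))

theorem su_series (K C : Type*) [Field K] [Field C] [Algebra K C] (p : ℕ) [ExpChar K p] (g : ℕ)
    {s : ℕ} (η : Fin s → (PowerSeries C)ˣ)
    (hη : ∀ i, PowerSeries.constantCoeff (η i : PowerSeries C) = 1) (N : ℕ) (a : C)
    (ha : Infinite K → a ∈ Set.range (algebraMap K C))
    (Z : Set C) (hZ : Finite K → Z.Finite) :
    ∃ r : K[X], ∀ (c : Fin N → C) (b : Fin N → Fin s → ℤ), (∀ l, c l ∈ Z) →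
      suSigma K C a r ^ (p ^ g) ≠ ∑ l, PowerSeries.C (c l) * suProd η (b l) := by
  rcases ‹ExpChar K p› with _ | hp
  · have : CharZero C := charZero_of_injective_algebraMap (algebraMap K C).injective
    obtain ⟨k, rfl⟩ := ha inferInstance
    obtain ⟨r, hr⟩ := su_char0 K C η hη N k
    exact ⟨r, fun c b _ => by simpa using hr c b⟩
  · have : Fact p.Prime := ⟨hp⟩
    have : CharP C p := charP_of_injective_algebraMap (algebraMap K C).injective p
    rcases finite_or_infinite K with hK | hK
    · exact su_charp_fin K C p g η hη N a Z (hZ hK)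
    · obtain ⟨k, rfl⟩ := ha hK
      obtain ⟨r, hr⟩ := su_charp_inf K C p g η hη N k
      exact ⟨r, fun c b _ => hr c b⟩

theorem su_units' (K L : Type*) [Field K] [Field L] [Algebra (RatFunc K) L]
    [FiniteDimensional (RatFunc K) L] [Algebra.IsSeparable (RatFunc K) L]
    [Algebra (Polynomial K) L] [IsScalarTower (Polynomial K) (RatFunc K) L] :
    ∃ (s : ℕ) (ε : Fin s → (integralClosure K[X] L)ˣ),
      ∀ u : (integralClosure K[X] L)ˣ,
        ∃ (c : (integralClosure K[X] L)ˣ) (a : Fin s → ℤ), u = c * ∏ i, ε i ^ a i ∧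
          ∃ g : K[X], g.Monic ∧ g.natDegree ≤ Module.finrank (RatFunc K) L ∧
            g.eval₂ ((algebraMap K[X] (integralClosure K[X] L)).comp C)
              (c : integralClosure K[X] L) = 0 := by
  obtain ⟨s, ε, hε, h⟩ := su_units K L
  let O := integralClosure K[X] L
  let ι : Oˣ →* Lˣ := Units.map (algebraMap O L).toMonoidHom
  have hι : Function.Injective ι := Units.map_injective (FaithfulSMul.algebraMap_injective O L)
  have mk : ∀ u : Lˣ, IsIntegral K[X] (u : L) → IsIntegral K[X] (u⁻¹ : Lˣ).val →
      ∃ w : Oˣ, ι w = u := by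
    intro u h1 h2
    exact ⟨⟨⟨u, h1⟩, ⟨_, h2⟩, Subtype.ext u.mul_inv, Subtype.ext u.inv_mul⟩, Units.ext rfl⟩
  choose w hw using fun i => mk (ε i) (hε i).1 (hε i).2
  refine ⟨s, w, fun u => ?_⟩
  have hu2 : IsIntegral K[X] ((ι u)⁻¹ : Lˣ).val := by
    rw [← map_inv]; exact (u⁻¹ : Oˣ).val.2
  obtain ⟨c, a, huc, hc1, hc2, g, hg1, hg2, hg3⟩ := h (ι u) u.val.2 hu2
  obtain ⟨c', rfl⟩ := mk c hc1 hc2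
  refine ⟨c', a, ?_, g, hg1, hg2, ?_⟩
  · apply hι
    rw [huc, map_mul, map_prod]
    simp [hw]
  · apply FaithfulSMul.algebraMap_injective O L
    rw [map_zero, hom_eval₂, ← RingHom.comp_assoc, ← IsScalarTower.algebraMap_eq]
    exact hg3

theorem su_sep (K L : Type*) [Field K] [Field L] [Algebra (RatFunc K) L]
    [FiniteDimensional (RatFunc K) L] [Algebra.IsSeparable (RatFunc K) L]
    [Algebra (Polynomial K) L] [IsScalarTower (Polynomial K) (RatFunc K) L]
    (p : ℕ) [ExpChar K p] (g N : ℕ) :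
    ∃ r : K[X], ∀ k ≤ N, ∀ y : Fin k → (integralClosure K[X] L)ˣ,
      (algebraMap K[X] (integralClosure K[X] L) r) ^ (p ^ g) ≠
        ∑ i, (y i : integralClosure K[X] L) := by
  let C := AlgebraicClosure K
  obtain ⟨s, ε, hε⟩ := su_units' K L
  obtain ⟨a, ha, φ, hφ⟩ := su_phi K L C
  let O := integralClosure K[X] L
  let w : Fin s → (PowerSeries C)ˣ := fun i => Units.map φ.toMonoidHom (ε i)
  let κ : Fin s → Cˣ := fun i =>
    Units.map (PowerSeries.constantCoeff (R := C)).toMonoidHom (w i)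
  let j : Cˣ →* (PowerSeries C)ˣ := Units.map (PowerSeries.C (R := C)).toMonoidHom
  let η : Fin s → (PowerSeries C)ˣ := fun i => w i * j ((κ i)⁻¹)
  have hwη : ∀ i, w i = j (κ i) * η i := by
    intro i; simp only [η, map_inv]; rw [mul_comm, inv_mul_cancel_right]
  have hη : ∀ i, PowerSeries.constantCoeff (η i : PowerSeries C) = 1 := by
    intro i
    have : PowerSeries.constantCoeff (η i : PowerSeries C) = (κ i : C) * ((κ i)⁻¹ : Cˣ) := by
      simp only [η, Units.val_mul, map_mul]
      congr 1
    rw [this, Units.mul_inv]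
  let n := Module.finrank (RatFunc K) L
  let S : Set C := Set.range (fun i => (κ i : C)) ∪
    ⋃ q : Polynomial.degreeLT K (n + 1), (q : K[X]).rootSet C
  let K' := IntermediateField.adjoin K S
  have hZ : Finite K → (K' : Set C).Finite := by
    intro hK
    have : Finite (Polynomial.degreeLT K (n + 1)) :=
      Finite.of_equiv _ (Polynomial.degreeLTEquiv K (n + 1)).symm.toEquiv
    have hS : S.Finite := (Set.finite_range _).union
      (Set.finite_iUnion fun q => Polynomial.rootSet_finite _ _)
    have : Finite S := hS
    have : FiniteDimensional K K' := IntermediateField.finiteDimensional_adjoin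
      fun x _ => Algebra.IsIntegral.isIntegral x
    have : Finite K' := Module.finite_of_finite K
    exact this
  have key : ∀ u : Oˣ, ∃ c ∈ K', ∃ b : Fin s → ℤ, φ u = PowerSeries.C c * suProd η b := by
    intro u
    obtain ⟨c, b, hu, q, hq1, hq2, hq3⟩ := hε u
    obtain ⟨c0, hc0, hφc⟩ : ∃ c0 ∈ K', φ c = PowerSeries.C c0 := by
      have h1 : (q.map (algebraMap K C)).eval₂ PowerSeries.C (φ c) = 0 := by
        have h2 := congrArg φ hq3
        rw [hom_eval₂, map_zero] at h2
        rw [eval₂_map, ← h2]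
        congr 1
        ext1 z
        simp only [RingHom.comp_apply]
        rw [hφ]
        simp [suSigma]
      have hsp : (q.map (algebraMap K C)).Splits := IsAlgClosed.splits _
      have hm : (q.map (algebraMap K C)).Monic := hq1.map _
      rw [hsp.eq_prod_roots_of_monic hm, eval₂_multiset_prod, Multiset.prod_eq_zero_iff,
        Multiset.map_map, Multiset.mem_map] at h1
      obtain ⟨c0, hc0, h1⟩ := h1
      simp only [Function.comp_apply, eval₂_sub, eval₂_X, eval₂_C] at h1
      refine ⟨c0, ?_, sub_eq_zero.mp h1⟩
      apply IntermediateField.subset_adjoin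
      right
      rw [Set.mem_iUnion]
      refine ⟨⟨q, ?_⟩, ?_⟩
      · rw [Polynomial.mem_degreeLT]
        exact lt_of_le_of_lt Polynomial.degree_le_natDegree (by exact_mod_cast Nat.lt_succ_of_le hq2)
      · rw [Polynomial.mem_rootSet]
        refine ⟨hq1.ne_zero, ?_⟩
        have := (Polynomial.mem_roots'.mp hc0).2
        rwa [IsRoot, eval_map_algebraMap] at this
    refine ⟨c0 * ∏ i, (κ i : C) ^ b i, ?_, b, ?_⟩
    · refine K'.mul_mem hc0 (K'.prod_mem fun i _ => zpow_mem (K := K') ?_ _)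
      exact IntermediateField.subset_adjoin _ _ (Or.inl ⟨i, rfl⟩)
    · have h3 : Units.map φ.toMonoidHom u = Units.map φ.toMonoidHom c *
          (j (∏ i, κ i ^ b i) * ∏ i, η i ^ b i) := by
        rw [hu, map_mul, map_prod, map_prod, ← Finset.prod_mul_distrib]
        congr 1
        refine Finset.prod_congr rfl fun i _ => ?_
        rw [map_zpow, map_zpow, ← mul_zpow, ← hwη]
      have h4 := congrArg Units.val h3
      rw [Units.val_mul, Units.val_mul] at h4
      have h5 : ((j (∏ i, κ i ^ b i) : (PowerSeries C)ˣ) : PowerSeries C) =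
          PowerSeries.C (∏ i, (κ i : C) ^ b i) := by
        change PowerSeries.C ((∏ i, κ i ^ b i : Cˣ) : C) = _
        simp
      rw [h5] at h4
      rw [map_mul, ← hφc, mul_assoc]
      exact h4
  obtain ⟨r, hr⟩ := su_series K C p g η hη N a ha (K' : Set C) hZ
  refine ⟨r, fun k hk y heq => ?_⟩
  obtain ⟨d, rfl⟩ := Nat.exists_eq_add_of_le hk
  choose c hc b hb using fun i => key (y i)
  refine hr (Fin.append c (fun _ : Fin d => 0)) (Fin.append b (fun _ : Fin d => 0)) ?_ ?_
  · intro l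
    refine Fin.addCases (fun i => ?_) (fun i => ?_) l
    · rw [Fin.append_left]; exact hc i
    · rw [Fin.append_right]; exact K'.zero_mem
  · have h := congrArg φ heq
    rw [map_pow, hφ, map_sum] at h
    rw [h, Fin.sum_univ_add]
    simp [Fin.append_left, Fin.append_right, hb]

/-- Let `K` be a perfect field and `F` a finite extension of the rational function field
`K(x)`. For every positive integer `N` there is an element of the integral closure `O_F`
of `K[x]` in `F` that cannot be written as a sum of at most `N` units of `O_F`. -/
theorem sums_of_units_integral_closure
    (K F : Type*) [Field K] [PerfectField K] [Field F]
    [Algebra (RatFunc K) F] [FiniteDimensional (RatFunc K) F]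
    [Algebra (Polynomial K) F] [IsScalarTower (Polynomial K) (RatFunc K) F]
    (N : ℕ) (hN : 0 < N) :
    ∃ r ∈ integralClosure (Polynomial K) F,
      ¬ ∃ (k : ℕ) (e : Fin k → F), 1 ≤ k ∧ k ≤ N ∧
        (∀ i, e i ∈ integralClosure (Polynomial K) F ∧
          ∃ e' ∈ integralClosure (Polynomial K) F, e i * e' = 1) ∧
        r = ∑ i, e i := by
  obtain ⟨p, hp⟩ := ExpChar.exists K
  let L := separableClosure (RatFunc K) F
  have hpR : ExpChar (RatFunc K) p :=
    expChar_of_injective_ringHom (RatFunc.C (K := K)).injective p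
  have hpF : ExpChar F p := expChar_of_injective_algebraMap (algebraMap (RatFunc K) F).injective p
  have hpL : ExpChar L p := expChar_of_injective_algebraMap (algebraMap (RatFunc K) L).injective p
  let g := IsPurelyInseparable.exponent L F
  have hg : ∀ x : F, ∃ y : L, algebraMap L F y = x ^ (p ^ g) := fun x =>
    IsPurelyInseparable.exponent_def' L p x
  obtain ⟨r, hr⟩ := su_sep K L p g N
  refine ⟨algebraMap K[X] F r, (integralClosure K[X] F).algebraMap_mem r, ?_⟩
  rintro ⟨k, e, -, hkN, he, hsum⟩
  have hT : IsScalarTower K[X] L F := IsScalarTower.of_algebraMap_eq (fun r => by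
    rw [IsScalarTower.algebraMap_apply K[X] (RatFunc K) F,
      IsScalarTower.algebraMap_apply K[X] (RatFunc K) L]
    rfl)
  have h_integral : ∀ (x : F) (y : L), algebraMap L F y = x ^ (p ^ g) → IsIntegral K[X] x →
      IsIntegral K[X] y := by
    intro x y hxy hx
    have h1 : IsIntegral K[X] (algebraMap L F y) := by rw [hxy]; exact hx.pow _
    exact (isIntegral_algebraMap_iff (algebraMap L F).injective).mp h1
  have hu : ∀ i, ∃ y : (integralClosure K[X] L)ˣ,
      algebraMap L F (y : integralClosure K[X] L) = e i ^ (p ^ g) := by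
    intro i
    obtain ⟨h1, e', h2, h3⟩ := he i
    obtain ⟨y, hy⟩ := hg (e i)
    obtain ⟨y', hy'⟩ := hg e'
    have hyy : y * y' = 1 := by
      apply (algebraMap L F).injective
      rw [map_mul, hy, hy', ← mul_pow, h3, one_pow, map_one]
    exact ⟨⟨⟨y, h_integral _ _ hy h1⟩, ⟨y', h_integral _ _ hy' h2⟩, Subtype.ext hyy,
      Subtype.ext ((mul_comm _ _).trans hyy)⟩, hy⟩
  choose y hy using hu
  apply hr k hkN y
  apply Subtype.ext
  apply (algebraMap L F).injective
  have h1 : algebraMap L F ((algebraMap K[X] (integralClosure K[X] L) r ^ (p ^ g) :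
      integralClosure K[X] L) : L) = (algebraMap K[X] F r) ^ (p ^ g) := by
    rw [SubmonoidClass.coe_pow, map_pow, IsScalarTower.algebraMap_apply K[X] L F]
    rfl
  rw [h1, hsum, sum_pow_char_pow]
  simp only [← hy]
  rw [← map_sum]
  congr 1
  simp
end

section
/- Let K be a finite field of odd characteristic and f ∈ K[X] a nonconstant squarefree (separable) polynomial. Let R := K[x][y] = K[X,Y]/(Y² − f(X)), which is the integral closure of K[x] in its fraction field F = K(x)(y). Then the following are equivalent: (a) every element of R is a finite sum of units of R, but for every positive integer N there exists an element of R that is not a sum of at most N units of R (i.e., u(R) = ω); (b) f has degree 2 and the leading coefficient of f is a square in K. -/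
/-- The unit sum number of `R` is `ω`: every element of `R` is a (nonempty) finite sum of
units, but for every positive `N` some element of `R` is not a sum of at most `N` units. -/
def UnitSumNumberOmega (R : Type*) [CommRing R] : Prop :=
  (∀ r : R, ∃ (k : ℕ) (e : Fin k → Rˣ), 1 ≤ k ∧ r = ∑ i, (e i : R)) ∧
  ∀ N : ℕ, 0 < N →
    ∃ r : R, ¬ ∃ (k : ℕ) (e : Fin k → Rˣ), 1 ≤ k ∧ k ≤ N ∧ r = ∑ i, (e i : R)

open Polynomial

section Helpers

variable {K : Type*} [Field K]

/-- Degree bookkeeping for a nontrivial solution of the Pell equation. -/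
lemma pell_degree {f a b : K[X]} {n : K} (hf : 0 < f.natDegree) (hb : b ≠ 0)
    (h : a ^ 2 - f * b ^ 2 = C n) :
    2 * a.natDegree = f.natDegree + 2 * b.natDegree ∧
      a.leadingCoeff ^ 2 = f.leadingCoeff * b.leadingCoeff ^ 2 := by
  have hf0 : f ≠ 0 := by rintro rfl; simp at hf
  have h1 : a ^ 2 = f * b ^ 2 + C n := by rw [← h]; ring
  have hd : (f * b ^ 2).natDegree = f.natDegree + 2 * b.natDegree := by
    rw [natDegree_mul hf0 (pow_ne_zero _ hb), natDegree_pow]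
  constructor
  · rw [← hd, ← natDegree_pow, h1, natDegree_add_C]
  · rw [← leadingCoeff_pow, h1, leadingCoeff_add_of_degree_lt', leadingCoeff_mul,
      leadingCoeff_pow]
    refine lt_of_le_of_lt degree_C_le ?_
    rw [← natDegree_pos_iff_degree_pos]; omega

lemma pell_step {f a b a' b' P Q : K[X]} {n : K} (hn : n ≠ 0)
    (h : a ^ 2 - f * b ^ 2 = C n)
    (hP : a' * a - b' * b * f = P.comp a) (hQ : a * b' - a' * b = Q.comp a * b) :
    ∃ P Q : K[X], a' = P.comp a ∧ b' = Q.comp a * b := by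
  have hc : C n⁻¹ * C n = 1 := by rw [← C_mul, inv_mul_cancel₀ hn, C_1]
  refine ⟨C n⁻¹ * (P * X + Q * (X ^ 2 - C n)), C n⁻¹ * (P + Q * X), ?_, ?_⟩
  · simp only [mul_comp, add_comp, sub_comp, C_comp, X_comp, pow_comp, ← hP]
    have : Q.comp a * (a ^ 2 - C n) = (a * b' - a' * b) * b * f := by
      rw [hQ, ← h]; ring
    rw [this]
    linear_combination (-a') * hc - C n⁻¹ * a' * h
  · simp only [mul_comp, add_comp, C_comp, X_comp, ← hP]
    have : C n⁻¹ * (a' * a - b' * b * f + Q.comp a * a) * b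
      = C n⁻¹ * ((a' * a - b' * b * f) * b + a * (Q.comp a * b)) := by ring
    rw [this, ← hQ]
    linear_combination (-b') * hc - C n⁻¹ * b' * h

lemma pell_structure (h2 : (2 : K) ≠ 0) {f a b : K[X]} {n : K} (hf : 0 < f.natDegree)
    (hn : n ≠ 0) (hb : b ≠ 0) (h : a ^ 2 - f * b ^ 2 = C n)
    (hmin : ∀ (a' b' : K[X]) (n' : K), n' ≠ 0 → b' ≠ 0 → a' ^ 2 - f * b' ^ 2 = C n' →
      a.natDegree ≤ a'.natDegree) :
    ∀ (d : ℕ) (a' b' : K[X]) (n' : K), a'.natDegree = d → n' ≠ 0 →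
      a' ^ 2 - f * b' ^ 2 = C n' →
      ∃ P Q : K[X], a' = P.comp a ∧ b' = Q.comp a * b := by
  intro d
  induction d using Nat.strong_induction_on with
  | _ d ih =>
  intro a' b' n' hd hn' h'
  by_cases hb' : b' = 0
  · subst hb'
    have : a'.natDegree = 0 := by
      have := congrArg natDegree h'
      simpa using this
    refine ⟨C (a'.coeff 0), 0, ?_, by simp⟩
    rw [C_comp]; exact eq_C_of_natDegree_eq_zero this
  have hle := hmin a' b' n' hn' hb' h'
  have hpos : 0 < a.natDegree := by have := (pell_degree hf hb h).1; omega
  have ha0 : a ≠ 0 := by rintro rfl; simp at hpos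
  have ha'0 : a' ≠ 0 := by rintro rfl; simp at hle; omega
  set s := a' * a - b' * b * f with hs
  set s' := a' * a + b' * b * f with hs'
  have hprod : s * s' = C n * a' ^ 2 + C n' * a ^ 2 - C (n * n') := by
    rw [hs, hs', C_mul]
    linear_combination (a' ^ 2 - C n') * h + (f * b ^ 2) * h'
  have hpd : (s * s').natDegree ≤ 2 * a'.natDegree := by
    rw [hprod]
    refine (natDegree_sub_le _ _).trans (max_le ((natDegree_add_le _ _).trans (max_le ?_ ?_)) ?_)
    · refine (natDegree_C_mul_le _ _).trans ?_
      rw [natDegree_pow]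
    · refine (natDegree_C_mul_le _ _).trans ?_
      rw [natDegree_pow]; omega
    · rw [natDegree_C]; exact Nat.zero_le _
  have hsum : s + s' = C 2 * (a' * a) := by
    rw [hs, hs', show (C 2 : K[X]) = 2 from rfl]; ring
  have hsd : (s + s').natDegree = a'.natDegree + a.natDegree := by
    rw [hsum, natDegree_C_mul h2, natDegree_mul ha'0 ha0]
  have hmax := natDegree_add_le s s'
  have key : s.natDegree < a'.natDegree ∨ s'.natDegree < a'.natDegree := by
    by_cases hs0 : s = 0
    · left; rw [hs0, natDegree_zero]; omega
    by_cases hs0' : s' = 0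
    · right; rw [hs0', natDegree_zero]; omega
    rw [natDegree_mul hs0 hs0'] at hpd
    rcases le_max_iff.1 hmax with hm | hm
    · right; omega
    · left; omega
  rcases key with key | key
  · obtain ⟨P, Q, hP, hQ⟩ := ih _ (hd ▸ key) s (a * b' - a' * b) (n * n') rfl
      (mul_ne_zero hn hn') (by
        rw [hs, C_mul, ← h, ← h']; ring)
    exact pell_step hn h hP hQ
  · obtain ⟨P, Q, hP, hQ⟩ := ih _ (hd ▸ key) s' (a * b' + a' * b) (n * n') rfl
      (mul_ne_zero hn hn') (by
        rw [hs', C_mul, ← h, ← h']; ring)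
    obtain ⟨P₁, Q₁, h₁, h₂⟩ := pell_step (f := f) (a := a) (b := -b) (a' := a') (b' := b')
      (P := P) (Q := -Q) hn (by rw [← h]; ring) (by rw [← hP, hs']; ring)
      (by rw [neg_comp, neg_mul_neg, ← hQ]; ring)
    exact ⟨P₁, -Q₁, h₁, by rw [h₂, neg_comp]; ring⟩

/-- The polynomial defining the extension. -/
local notation "PP" f => ((X : Polynomial (Polynomial K)) ^ 2 - C f)

lemma quad_root_sq (f : K[X]) :
    AdjoinRoot.root (PP f) ^ 2 = AdjoinRoot.of (PP f) f := by
  have h := AdjoinRoot.mk_self (f := PP f)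
  rw [map_sub, map_pow, AdjoinRoot.mk_X, AdjoinRoot.mk_C] at h
  exact sub_eq_zero.1 h

lemma quad_exists (f : K[X]) (r : AdjoinRoot (PP f)) :
    ∃ a b : K[X], r = AdjoinRoot.of (PP f) a + AdjoinRoot.of (PP f) b * AdjoinRoot.root (PP f) := by
  induction r using AdjoinRoot.induction_on with
  | ih p =>
  induction p using Polynomial.induction_on' with
  | add p q hp hq =>
    obtain ⟨a, b, h⟩ := hp
    obtain ⟨a', b', h'⟩ := hq
    exact ⟨a + a', b + b', by rw [map_add, h, h', map_add, map_add]; ring⟩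
  | monomial n c =>
    have hm : AdjoinRoot.mk (PP f) (monomial n c)
        = AdjoinRoot.of (PP f) c * AdjoinRoot.root (PP f) ^ n := by
      rw [← C_mul_X_pow_eq_monomial, map_mul, map_pow, AdjoinRoot.mk_X, AdjoinRoot.mk_C]
    rw [hm]
    rcases Nat.even_or_odd' n with ⟨k, rfl | rfl⟩
    · exact ⟨c * f ^ k, 0, by rw [pow_mul, quad_root_sq]; simp⟩
    · exact ⟨0, c * f ^ k, by rw [pow_add, pow_mul, quad_root_sq]; simp [mul_assoc]⟩

lemma quad_unique (f : K[X]) {a b a' b' : K[X]}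
    (h : AdjoinRoot.of (PP f) a + AdjoinRoot.of (PP f) b * AdjoinRoot.root (PP f) =
      AdjoinRoot.of (PP f) a' + AdjoinRoot.of (PP f) b' * AdjoinRoot.root (PP f)) :
    a = a' ∧ b = b' := by
  have h0 : AdjoinRoot.mk (PP f) (C (b - b') * X + C (a - a')) = 0 := by
    rw [map_add, map_mul, AdjoinRoot.mk_X, AdjoinRoot.mk_C, AdjoinRoot.mk_C, map_sub, map_sub]
    linear_combination h
  have hmon : (PP f).Monic := monic_X_pow_sub_C f two_ne_zero
  have hz : C (b - b') * X + C (a - a') = 0 := by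
    by_contra hne
    refine AdjoinRoot.mk_ne_zero_of_degree_lt hmon hne ?_ h0
    rw [degree_X_pow_sub_C (by norm_num)]
    exact lt_of_le_of_lt degree_linear_le (by norm_num)
  have e0 := congrArg (fun p => coeff p 0) hz
  have e1 := congrArg (fun p => coeff p 1) hz
  simp [coeff_C] at e0 e1
  exact ⟨sub_eq_zero.1 e0, sub_eq_zero.1 e1⟩

lemma quad_unit (f : K[X]) (u : (AdjoinRoot (PP f))ˣ) :
    ∃ (a b : K[X]) (n : K), n ≠ 0 ∧ a ^ 2 - f * b ^ 2 = C n ∧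
      (u : AdjoinRoot (PP f)) =
        AdjoinRoot.of (PP f) a + AdjoinRoot.of (PP f) b * AdjoinRoot.root (PP f) := by
  obtain ⟨a, b, h⟩ := quad_exists f u
  obtain ⟨c, d, h'⟩ := quad_exists f (u⁻¹ : (AdjoinRoot (PP f))ˣ)
  have hmul := u.mul_inv
  rw [h, h'] at hmul
  have hu : AdjoinRoot.of (PP f) (a * c + b * d * f) +
      AdjoinRoot.of (PP f) (a * d + b * c) * AdjoinRoot.root (PP f) =
      AdjoinRoot.of (PP f) 1 + AdjoinRoot.of (PP f) 0 * AdjoinRoot.root (PP f) := by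
    simp only [map_add, map_mul, map_one, map_zero, ← quad_root_sq]
    linear_combination hmul
  obtain ⟨h1, h2⟩ := quad_unique f hu
  have hN : (a ^ 2 - f * b ^ 2) * (c ^ 2 - f * d ^ 2) = 1 := by
    linear_combination (a * c + b * d * f + 1) * h1 - f * (a * d + b * c) * h2
  obtain ⟨n, hn, hn'⟩ := Polynomial.isUnit_iff.1 (IsUnit.of_mul_eq_one _ hN)
  exact ⟨a, b, n, hn.ne_zero, hn'.symm, h⟩

lemma forward_dir (h2 : (2 : K) ≠ 0) (f : K[X]) (hf : 0 < f.natDegree)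
    (H : ∀ r : AdjoinRoot (PP f), ∃ (k : ℕ) (e : Fin k → (AdjoinRoot (PP f))ˣ), 1 ≤ k ∧
      r = ∑ i, (e i : AdjoinRoot (PP f))) :
    f.natDegree = 2 ∧ ∃ c : K, f.leadingCoeff = c ^ 2 := by
  classical
  -- components of sums of units
  have comp : ∀ p q : K[X], ∃ (k : ℕ) (a b : Fin k → K[X]) (n : Fin k → K),
      (∀ i, n i ≠ 0) ∧ (∀ i, a i ^ 2 - f * b i ^ 2 = C (n i)) ∧ p = ∑ i, a i ∧ q = ∑ i, b i := by
    intro p q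
    obtain ⟨k, e, -, he⟩ :=
      H (AdjoinRoot.of (PP f) p + AdjoinRoot.of (PP f) q * AdjoinRoot.root (PP f))
    choose a b n hn hab hu using fun i => quad_unit f (e i)
    refine ⟨k, a, b, n, hn, hab, quad_unique f ?_⟩
    rw [he, map_sum, map_sum, Finset.sum_mul, ← Finset.sum_add_distrib]
    exact Finset.sum_congr rfl fun i _ => hu i
  -- a nontrivial unit exists
  have hex : ∃ d : ℕ, ∃ (a b : K[X]) (n : K), n ≠ 0 ∧ b ≠ 0 ∧ a ^ 2 - f * b ^ 2 = C n ∧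
      a.natDegree = d := by
    obtain ⟨k, a, b, n, hn, hab, -, hq⟩ := comp 0 1
    by_contra! hcon
    have : ∀ i, b i = 0 := by
      intro i
      by_contra hbi
      exact hcon _ (a i) (b i) (n i) (hn i) hbi (hab i) rfl
    simp [this] at hq
  obtain ⟨a, b, n, hn, hb, hab, hd⟩ := Nat.find_spec hex
  have hmin : ∀ (a' b' : K[X]) (n' : K), n' ≠ 0 → b' ≠ 0 → a' ^ 2 - f * b' ^ 2 = C n' →
      a.natDegree ≤ a'.natDegree := by
    intro a' b' n' hn' hb' h'
    rw [hd]
    exact Nat.find_min' hex ⟨a', b', n', hn', hb', h', rfl⟩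
  have hst := pell_structure h2 hf hn hb hab hmin
  obtain ⟨k, a', b', n', hn', hab', hX, -⟩ := comp X 0
  choose P Q hP hQ using fun i => hst _ (a' i) (b' i) (n' i) rfl (hn' i) (hab' i)
  have hXP : (X : K[X]) = (∑ i, P i).comp a := by
    conv_lhs => rw [hX]
    rw [Polynomial.sum_comp]
    exact Finset.sum_congr rfl fun i _ => hP i
  have hdeg := congrArg natDegree hXP
  rw [natDegree_X, natDegree_comp] at hdeg
  have ha1 : a.natDegree = 1 := Nat.eq_one_of_mul_eq_one_left hdeg.symm
  obtain ⟨hd1, hl⟩ := pell_degree hf hb hab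
  refine ⟨by omega, a.leadingCoeff / b.leadingCoeff, ?_⟩
  have := leadingCoeff_ne_zero.2 hb
  rw [div_pow, hl]; field_simp

lemma laurent_unit (u : LaurentPolynomial K) (hu : IsUnit u) : u.coeff.support.card ≤ 1 := by
  obtain ⟨v, huv⟩ := hu.exists_right_inv
  obtain ⟨n, p, hp⟩ := LaurentPolynomial.exists_T_pow u
  obtain ⟨m, q, hq⟩ := LaurentPolynomial.exists_T_pow v
  have hpq : p * q = X ^ (n + m) := by
    apply toLaurent_injective
    rw [map_mul, hp, hq, toLaurent_X_pow]
    push_cast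
    rw [LaurentPolynomial.T_add]
    linear_combination (LaurentPolynomial.T n * LaurentPolynomial.T m) * huv
  obtain ⟨i, -, hi⟩ := (dvd_prime_pow prime_X _).1 (Dvd.intro _ hpq)
  obtain ⟨w, hw⟩ := hi.symm
  obtain ⟨c, -, hc⟩ := Polynomial.isUnit_iff.1 w.isUnit
  have hu' : u = LaurentPolynomial.C c * LaurentPolynomial.T (i - n) := by
    have h1 : u = toLaurent p * LaurentPolynomial.T (-n) := by
      rw [hp, LaurentPolynomial.mul_T_assoc]; simp
    rw [h1, ← hw, ← hc, map_mul, toLaurent_X_pow, toLaurent_C, LaurentPolynomial.T_sub]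
    ring
  rw [hu']
  exact (Finset.card_le_card (LaurentPolynomial.support_C_mul_T c _)).trans (by simp)

lemma laurent_sum_support {k : ℕ} (e : Fin k → LaurentPolynomial K) (he : ∀ i, IsUnit (e i)) :
    (∑ i, e i).coeff.support.card ≤ k := by
  classical
  induction k with
  | zero => simp
  | succ k ih =>
    rw [Fin.sum_univ_succ]
    have h1 := laurent_unit _ (he 0)
    have h2 := ih (fun i => e i.succ) (fun i => he _)
    have h3 := Finset.card_le_card
      (Finsupp.support_add (g₁ := (e 0).coeff) (g₂ := (∑ i : Fin k, e i.succ).coeff))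
    have h4 := Finset.card_union_le (e 0).coeff.support (∑ i : Fin k, e i.succ).coeff.support
    have h5 : (e 0 + ∑ i : Fin k, e i.succ).coeff
      = (e 0).coeff + (∑ i : Fin k, e i.succ).coeff := rfl
    rw [h5]
    omega

lemma backward_dir (h2 : (2 : K) ≠ 0) (c d e : K) (hc : c ≠ 0) (he : e ≠ 0) (f : K[X])
    (hfe : f = (C c * X + C d) ^ 2 - C e) :
    UnitSumNumberOmega (AdjoinRoot (PP f)) := by
  classical
  set R := AdjoinRoot (PP f) with hR
  let ι : K[X] →+* R := AdjoinRoot.of (PP f)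
  let y : R := AdjoinRoot.root (PP f)
  have hy : y ^ 2 = ι f := quad_root_sq f
  have hCinv : ∀ t : K, t ≠ 0 → ι (C t) * ι (C t⁻¹) = 1 := by
    intro t ht
    rw [← map_mul, ← C_mul, mul_inv_cancel₀ ht, C_1, map_one]
  have huu : (ι (C c * X + C d) + y) * (ι (C c * X + C d) - y) = ι (C e) := by
    have : ι f = ι (C c * X + C d) ^ 2 - ι (C e) := by
      rw [← map_pow, ← map_sub]; exact congrArg ι hfe
    linear_combination (-1 : R) * hy - this
  have hEunit : ∀ t : K, t ≠ 0 → IsUnit (ι (C t)) := fun t ht => IsUnit.of_mul_eq_one _ (hCinv t ht)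
  have hu1 : IsUnit (ι (C c * X + C d) + y) :=
    isUnit_of_mul_isUnit_left (huu ▸ hEunit e he)
  have hu2 : IsUnit (ι (C c * X + C d) - y) :=
    isUnit_of_mul_isUnit_right (huu ▸ hEunit e he)
  constructor
  · let S := (IsUnit.submonoid R).subsemiringClosure
    have hS : ∀ r : R, IsUnit r → r ∈ S := fun r hr =>
      (Submonoid.subsemiringClosure_mem _).2 (AddSubmonoid.subset_closure hr)
    have hSC : ∀ t : K, ι (C t) ∈ S := by
      intro t
      by_cases ht : t = 0
      · rw [ht, C_0, map_zero]; exact S.zero_mem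
      · exact hS _ (hEunit t ht)
    have h22 : ι (C (2 : K)) = 2 := by
      rw [show (C (2 : K) : K[X]) = 2 from rfl, map_ofNat]
    have i2 := hCinv 2 h2
    rw [h22] at i2
    have hyS : y ∈ S := by
      have : y = ι (C 2⁻¹) * ((ι (C c * X + C d) + y) + ι (C (-1)) * (ι (C c * X + C d) - y)) := by
        have : ι (C (-1)) = -1 := by simp
        rw [this]
        linear_combination (-y) * i2
      rw [this]
      exact S.mul_mem (hSC _) (S.add_mem (hS _ hu1) (S.mul_mem (hSC _) (hS _ hu2)))
    have hXS : ι X ∈ S := by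
      have : ι X = ι (C c⁻¹) * (ι (C 2⁻¹) * ((ι (C c * X + C d) + y) + (ι (C c * X + C d) - y))
          + ι (C (-d))) := by
        have h3 : ι (C (-d)) = - ι (C d) := by simp
        rw [h3, map_add, map_mul]
        linear_combination (-ι X) * hCinv c hc - ι (C c⁻¹) * (ι (C c) * ι X + ι (C d)) * i2
      rw [this]
      exact S.mul_mem (hSC _) (S.add_mem (S.mul_mem (hSC _)
        (S.add_mem (hS _ hu1) (hS _ hu2))) (hSC _))
    have hpS : ∀ p : K[X], ι p ∈ S := by
      intro p
      induction p using Polynomial.induction_on' with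
      | add p q hp hq => rw [map_add]; exact S.add_mem hp hq
      | monomial n t =>
        rw [← C_mul_X_pow_eq_monomial, map_mul, map_pow]
        exact S.mul_mem (hSC _) (S.pow_mem hXS n)
    intro r
    have hrS : r ∈ S := by
      obtain ⟨a, b, h⟩ := quad_exists f r
      rw [h]
      exact S.add_mem (hpS a) (S.mul_mem (hpS b) hyS)
    have hr : ∃ (k : ℕ) (e : Fin k → Rˣ), r = ∑ i, (e i : R) := by
      refine AddSubmonoid.closure_induction (motive := fun r _ => ∃ (k : ℕ) (e : Fin k → Rˣ), r = ∑ i, (e i : R))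
        ?_ ?_ ?_ ((Submonoid.subsemiringClosure_mem _).1 hrS)
      · rintro x ⟨u, rfl⟩
        exact ⟨1, fun _ => u, by simp⟩
      · exact ⟨0, fun _ => 1, by simp⟩
      · rintro _ _ _ _ ⟨k, e, rfl⟩ ⟨l, e', rfl⟩
        refine ⟨k + l, Fin.append e e', ?_⟩
        rw [Fin.sum_univ_add]
        simp
    obtain ⟨k, e, h⟩ := hr
    refine ⟨k + 2, Fin.append e ![1, -1], by omega, ?_⟩
    rw [Fin.sum_univ_add, h]
    simp
  · intro N hN
    let L := LaurentPolynomial K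
    let T1 : L := LaurentPolynomial.T 1
    let T2 : L := LaurentPolynomial.T (-1)
    have hT : T1 * T2 = 1 := by
      change LaurentPolynomial.T 1 * LaurentPolynomial.T (-1) = (1 : LaurentPolynomial K)
      rw [← LaurentPolynomial.T_add]; simp
    let γ : K →+* L := LaurentPolynomial.C
    have hγ : ∀ t : K, t ≠ 0 → γ t * γ t⁻¹ = 1 := by
      intro t ht
      rw [← map_mul, mul_inv_cancel₀ ht, map_one]
    have g2 : (2 : L) * γ 2⁻¹ = 1 := by
      have := hγ 2 h2
      rwa [map_ofNat] at this
    let x' : L := γ c⁻¹ * (γ 2⁻¹ * (T1 + γ e * T2) - γ d)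
    let y' : L := γ 2⁻¹ * (T1 - γ e * T2)
    let i : K[X] →+* L := eval₂RingHom γ x'
    have hiC : ∀ t, i (C t) = γ t := fun t => by simp [i]
    have hiX : i X = x' := by simp [i]
    have hlin : i (C c * X + C d) = γ 2⁻¹ * (T1 + γ e * T2) := by
      rw [map_add, map_mul, hiC, hiC, hiX]
      linear_combination (γ 2⁻¹ * (T1 + γ e * T2) - γ d) * hγ c hc
    have hif : i f = y' ^ 2 := by
      rw [hfe, map_sub, map_pow, hlin, hiC]
      linear_combination (4 * (γ 2⁻¹) ^ 2 * γ e) * hT + (γ e * (2 * γ 2⁻¹ + 1)) * g2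
    let φ : R →+* L := AdjoinRoot.lift i y' (by
      rw [eval₂_sub, eval₂_pow, eval₂_X, eval₂_C, hif, sub_self])
    have hφ : φ (ι (C c * X + C d) + y) = T1 := by
      rw [map_add]
      have h1 : φ (ι (C c * X + C d)) = i (C c * X + C d) := AdjoinRoot.lift_of _
      have h3 : φ y = y' := AdjoinRoot.lift_root _
      rw [h1, h3, hlin]
      linear_combination T1 * g2
    refine ⟨∑ j ∈ Finset.range (N + 1), (ι (C c * X + C d) + y) ^ j, ?_⟩
    rintro ⟨k, u, -, hk, h⟩
    have h' := congrArg φ h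
    rw [map_sum, map_sum] at h'
    simp only [map_pow, hφ] at h'
    have hcard := laurent_sum_support (fun j => φ (u j)) (fun j => (u j).isUnit.map φ)
    rw [← h'] at hcard
    have hp : (∑ j ∈ Finset.range (N + 1), T1 ^ j) =
        toLaurent (∑ j ∈ Finset.range (N + 1), (X : K[X]) ^ j) := by
      rw [map_sum]
      refine Finset.sum_congr rfl fun j _ => ?_
      rw [map_pow, toLaurent_X]
    rw [hp, LaurentPolynomial.support_coeff_toLaurent, Finset.card_map] at hcard
    have hsub : Finset.range (N + 1) ⊆ (∑ j ∈ Finset.range (N + 1), (X : K[X]) ^ j).support := by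
      intro j hj
      rw [mem_support_iff, finsetSum_coeff]
      simp only [coeff_X_pow]
      rw [Finset.sum_ite_eq]
      simp [hj]
    have := Finset.card_le_card hsub
    rw [Finset.card_range] at this
    omega

end Helpers

/-- For a finite field `K` of odd characteristic and a nonconstant squarefree `f ∈ K[X]`,
the ring `R = K[X,Y]/(Y² - f(X))` has unit sum number `ω` if and only if `f` has degree `2`
and its leading coefficient is a square in `K`. -/
theorem unit_sum_number_quadratic_odd_char
    (K : Type*) [Field K] [Finite K] (hodd : Odd (ringChar K))
    (f : Polynomial K) (hf : 0 < f.natDegree) (hsf : Squarefree f) :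
    UnitSumNumberOmega
        (AdjoinRoot ((Polynomial.X : Polynomial (Polynomial K)) ^ 2 - Polynomial.C f)) ↔
      f.natDegree = 2 ∧ ∃ c : K, f.leadingCoeff = c ^ 2 := by
  have h2 : (2 : K) ≠ 0 := by
    apply Ring.two_ne_zero
    intro h
    rw [h] at hodd
    exact absurd hodd (by decide)
  constructor
  · intro H
    exact forward_dir h2 f hf H.1
  · rintro ⟨hd, c, hc⟩
    have hl : f.coeff 2 = c ^ 2 := by rw [← hc, Polynomial.leadingCoeff, hd]
    have hc0 : c ≠ 0 := by
      rintro rfl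
      have : f = 0 := Polynomial.leadingCoeff_eq_zero.1 (by rw [hc]; simp)
      rw [this] at hf; simp at hf
    have hfd : f = Polynomial.C (f.coeff 2) * Polynomial.X ^ 2
        + Polynomial.C (f.coeff 1) * Polynomial.X + Polynomial.C (f.coeff 0) := by
      conv_lhs => rw [f.as_sum_range_C_mul_X_pow, hd]
      simp [Finset.sum_range_succ]
      ring
    obtain ⟨d, hdd⟩ : ∃ d : K, 2 * c * d = f.coeff 1 :=
      ⟨f.coeff 1 / (2 * c), by field_simp⟩
    have hfe : f = (Polynomial.C c * Polynomial.X + Polynomial.C d) ^ 2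
        - Polynomial.C (d ^ 2 - f.coeff 0) := by
      conv_lhs => rw [hfd, hl, ← hdd]
      simp only [Polynomial.C_mul, Polynomial.C_pow, Polynomial.C_sub]
      rw [show (Polynomial.C (2 : K)) = 2 from rfl]
      ring
    refine backward_dir h2 c d _ hc0 ?_ f hfe
    intro h0
    rw [h0, Polynomial.C_0, sub_zero, sq] at hfe
    have hun := hsf _ (Dvd.intro _ (by rw [mul_one]; exact hfe.symm))
    have := Polynomial.natDegree_eq_zero_of_isUnit hun
    rw [Polynomial.natDegree_linear hc0] at this
    exact one_ne_zero this
end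

section
/- Let K be a finite field of characteristic 2. Let p_1, …, p_m ∈ K[X] be pairwise distinct monic irreducible polynomials, n_1, …, n_m positive integers, and g ∈ K[X] a polynomial not divisible by any p_i. Put B := p_1^{n_1} ⋯ p_m^{n_m} and C := g·p_1 ⋯ p_m, and assume C is nonconstant and that 2·deg B − deg C is nonnegative or odd. Assume the polynomial Y² + Y − C(x)/B(x)² is irreducible over the rational function field K(x), let F := K(x)[Y]/(Y² + Y − C(x)/B(x)²), and let O_F be the integral closure of K[x] in F. Then the following are equivalent: (a) every element of O_F is a finite sum of units of O_F, but for every positive integer N there exists an element of O_F that is not a sum of at most N units of O_F (i.e., u(O_F) = ω); (b) deg B = 1 and either deg C ≤ 1, or deg C = 2 and the leading coefficient of C is of the form a² + a for some a ∈ K. -/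
/-- Unit sum number `ω` for a subring (given as the integral closure, a subalgebra):
every element is a (nonempty) finite sum of units of the subring, but for every
positive `N` some element is not a sum of at most `N` units. -/
def SubringUnitSumNumberOmega {R F : Type*} [CommRing R] [CommRing F] [Algebra R F]
    (O : Subalgebra R F) : Prop :=
  (∀ r ∈ O, ∃ (k : ℕ) (e : Fin k → F), 1 ≤ k ∧
      (∀ i, e i ∈ O ∧ ∃ e' ∈ O, e i * e' = 1) ∧ r = ∑ i, e i) ∧
  ∀ N : ℕ, 0 < N → ∃ r ∈ O,
    ¬ ∃ (k : ℕ) (e : Fin k → F), 1 ≤ k ∧ k ≤ N ∧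
        (∀ i, e i ∈ O ∧ ∃ e' ∈ O, e i * e' = 1) ∧ r = ∑ i, e i

section UsnHelpers

open Polynomial

noncomputable def usnNrm {K : Type*} [Field K] (B C a b : K[X]) : K[X] := a ^ 2 + a * b * B + b ^ 2 * C

lemma usn_descent {K : Type*} [Field K] [CharP K 2] (B C a b a0 b0 : K[X]) (hB : 0 < B.natDegree)
    (hb : b ≠ 0) (hb0 : b0 ≠ 0) (hle : b0.natDegree ≤ b.natDegree) (n n0 : K)
    (h : usnNrm B C a b = Polynomial.C n) (h0 : usnNrm B C a0 b0 = Polynomial.C n0) :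
    (a * b0 + a0 * b + b * b0 * B = 0 ∨
      (a * b0 + a0 * b + b * b0 * B).natDegree < b.natDegree) ∨
    (a * b0 + a0 * b = 0 ∨ (a * b0 + a0 * b).natDegree < b.natDegree) := by
  have h2 : (2 : K[X]) = 0 := CharTwo.two_eq_zero
  by_contra! hcon
  obtain ⟨⟨hP0, hP⟩, hQ0, hQ⟩ := hcon
  set P := a * b0 + a0 * b + b * b0 * B with hPd
  set Q := a * b0 + a0 * b with hQd
  have hPQ : P * Q = Polynomial.C n * b0 ^ 2 + Polynomial.C n0 * b ^ 2 := by
    rw [← h, ← h0]; unfold usnNrm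
    rw [hPd, hQd]
    grind
  have hB0 : B ≠ 0 := by rintro rfl; simp at hB
  have hS : P + Q = b * b0 * B := by rw [hPd, hQd]; grind
  have d1 : (P * Q).natDegree ≤ 2 * b.natDegree := by
    rw [hPQ]
    refine natDegree_add_le_of_degree_le ((natDegree_C_mul_le _ _).trans ?_)
      ((natDegree_C_mul_le _ _).trans ?_)
    · rw [natDegree_pow]; omega
    · rw [natDegree_pow]
  rw [natDegree_mul hP0 hQ0] at d1
  have d2 : (P + Q).natDegree ≤ b.natDegree :=
    natDegree_add_le_of_degree_le (by omega) (by omega)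
  rw [hS, natDegree_mul (mul_ne_zero hb hb0) hB0, natDegree_mul hb hb0] at d2
  omega

lemma usn_b_zero {K : Type*} [Field K] (B C a : K[X]) (n : K) (hn : n ≠ 0)
    (h : usnNrm B C a 0 = Polynomial.C n) : ∃ k : K, k ≠ 0 ∧ a = Polynomial.C k := by
  have h1 : a ^ 2 = Polynomial.C n := by simpa [usnNrm] using h
  have h3 : a.natDegree = 0 := by
    have := congrArg natDegree h1
    rw [natDegree_pow, natDegree_C] at this; omega
  rw [natDegree_eq_zero] at h3
  obtain ⟨k, rfl⟩ := h3
  refine ⟨k, ?_, rfl⟩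
  rintro rfl
  simp at h1
  exact hn (Polynomial.C_eq_zero.mp h1.symm)

lemma usn_nrm_mul {K : Type*} [Field K] [CharP K 2] (B C a b a0 b0 : K[X]) :
    usnNrm B C (a * a0 + b * b0 * C) (a * b0 + a0 * b + b * b0 * B) =
      usnNrm B C a b * usnNrm B C a0 b0 := by
  have h2 : (2 : K[X]) = 0 := CharTwo.two_eq_zero
  unfold usnNrm; grind

lemma usn_nrm_conj {K : Type*} [Field K] [CharP K 2] (B C a b : K[X]) :
    usnNrm B C (a + b * B) b = usnNrm B C a b := by
  have h2 : (2 : K[X]) = 0 := CharTwo.two_eq_zero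
  unfold usnNrm; grind

lemma usn_induct {K : Type*} [Field K] [CharP K 2] (B C a0 b0 : K[X]) (hB : 0 < B.natDegree)
    (hb0 : b0 ≠ 0) (n0 : K) (hn0 : n0 ≠ 0) (h0 : usnNrm B C a0 b0 = Polynomial.C n0)
    (hmin : ∀ a b : K[X], ∀ n : K, n ≠ 0 → b ≠ 0 → usnNrm B C a b = Polynomial.C n →
      b0.natDegree ≤ b.natDegree)
    (P : K[X] → K[X] → Prop) (hconst : ∀ k : K, k ≠ 0 → P (Polynomial.C k) 0)
    (hsmul : ∀ k : K, k ≠ 0 → ∀ a b, P a b → P (Polynomial.C k * a) (Polynomial.C k * b))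
    (hmul : ∀ a b, P a b → P (a * a0 + b * b0 * C) (a * b0 + a0 * b + b * b0 * B))
    (hmul' : ∀ a b, P a b → P (a * (a0 + b0 * B) + b * b0 * C) (a * b0 + a0 * b))
    (a b : K[X]) (n : K) (hn : n ≠ 0) (h : usnNrm B C a b = Polynomial.C n) : P a b := by
  have h2 : (2 : K[X]) = 0 := CharTwo.two_eq_zero
  have hcc : Polynomial.C n0⁻¹ * Polynomial.C n0 = 1 := by
    rw [← Polynomial.C_mul, inv_mul_cancel₀ hn0, Polynomial.C_1]
  suffices H : ∀ N : ℕ, ∀ a b : K[X], ∀ n : K, n ≠ 0 → usnNrm B C a b = Polynomial.C n →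
      (b = 0 ∨ b.natDegree < N) → P a b from H (b.natDegree + 1) a b n hn h (by right; omega)
  intro N
  induction N with
  | zero =>
    intro a b n hn h hb
    obtain rfl : b = 0 := by simpa using hb
    obtain ⟨k, hk, rfl⟩ := usn_b_zero B C a n hn h
    exact hconst k hk
  | succ N ih =>
    intro a b n hn h hb
    by_cases hb' : b = 0
    · subst hb'
      obtain ⟨k, hk, rfl⟩ := usn_b_zero B C a n hn h
      exact hconst k hk
    have hbN : b.natDegree < N + 1 := by tauto
    rcases usn_descent B C a b a0 b0 hB hb' hb0 (hmin a b n hn hb' h) n n0 h h0 with hd | hd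
    · have := ih (a * a0 + b * b0 * C) (a * b0 + a0 * b + b * b0 * B) (n * n0)
        (mul_ne_zero hn hn0) (by rw [usn_nrm_mul, h, h0, Polynomial.C_mul])
        (hd.imp id (fun h => by omega))
      have := hsmul n0⁻¹ (inv_ne_zero hn0) _ _ (hmul' _ _ this)
      convert this using 1
      · unfold usnNrm at h0; grind
      · unfold usnNrm at h0; grind
    · have e : a * b0 + a0 * b = a * b0 + (a0 + b0 * B) * b + b * b0 * B := by grind
      have := ih (a * (a0 + b0 * B) + b * b0 * C) (a * b0 + a0 * b) (n * n0)
        (mul_ne_zero hn hn0)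
        (by rw [e, usn_nrm_mul, usn_nrm_conj, h, h0, Polynomial.C_mul])
        (hd.imp id (fun h => by omega))
      have := hsmul n0⁻¹ (inv_ne_zero hn0) _ _ (hmul _ _ this)
      convert this using 1
      · unfold usnNrm at h0; grind
      · unfold usnNrm at h0; grind

lemma usn_nonsplit {K : Type*} [Field K] [CharP K 2] (B C a b : K[X]) (hB : B.Monic)
    (hC : 0 < C.natDegree) (hb : b ≠ 0) (n : K) (h : usnNrm B C a b = Polynomial.C n)
    (hpole : 0 ≤ 2 * (B.natDegree : ℤ) - (C.natDegree : ℤ) ∨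
      Odd (2 * (B.natDegree : ℤ) - (C.natDegree : ℤ))) :
    C.natDegree ≤ 2 * B.natDegree ∧
      (C.natDegree = 2 * B.natDegree → ∃ α : K, C.leadingCoeff = α ^ 2 + α) := by
  have hC0 : C ≠ 0 := by rintro rfl; simp at hC
  have dB : (b ^ 2 * C).natDegree = 2 * b.natDegree + C.natDegree := by
    rw [natDegree_mul (pow_ne_zero 2 hb) hC0, natDegree_pow]
  have hd : (usnNrm B C a b).natDegree = 0 := by rw [h, natDegree_C]
  have ha : a ≠ 0 := by
    rintro rfl
    simp only [usnNrm, zero_mul, add_zero, zero_pow two_ne_zero, zero_add] at hd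
    omega
  have dA : (a ^ 2).natDegree = 2 * a.natDegree := natDegree_pow _ _
  have dM : (a * b * B).natDegree = a.natDegree + b.natDegree + B.natDegree := by
    rw [natDegree_mul (mul_ne_zero ha hb) hB.ne_zero, natDegree_mul ha hb]
  have caseA : (a * b * B).natDegree < (a ^ 2).natDegree →
      (b ^ 2 * C).natDegree < (a ^ 2).natDegree → False := by
    intro h1 h3
    have e1 := natDegree_add_eq_left_of_natDegree_lt h1
    have e2 := natDegree_add_eq_left_of_natDegree_lt (p := a ^ 2 + a * b * B) (q := b ^ 2 * C)
      (by omega)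
    unfold usnNrm at hd; omega
  have caseB : (a * b * B).natDegree < (b ^ 2 * C).natDegree →
      (a ^ 2).natDegree < (b ^ 2 * C).natDegree → False := by
    intro h1 h3
    have e1 : (a ^ 2 + a * b * B).natDegree < (b ^ 2 * C).natDegree :=
      lt_of_le_of_lt (natDegree_add_le _ _) (max_lt h3 h1)
    have e2 := natDegree_add_eq_right_of_natDegree_lt e1
    unfold usnNrm at hd; omega
  rw [dA, dM, dB] at caseA caseB
  constructor
  · by_contra hlt
    have hodd : Odd (2 * (B.natDegree : ℤ) - (C.natDegree : ℤ)) := by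
      rcases hpole with h | h
      · omega
      · exact h
    obtain ⟨k, hk⟩ := hodd
    rcases lt_or_ge (2 * b.natDegree + C.natDegree) (2 * a.natDegree) with h1 | h1
    · exact caseA (by omega) (by omega)
    · exact caseB (by omega) (by omega)
  · intro hc
    have hab : a.natDegree = b.natDegree + B.natDegree := by
      by_contra hne
      rcases lt_or_gt_of_ne hne with h1 | h1
      · exact caseB (by omega) (by omega)
      · exact caseA (by omega) (by omega)
    have hco := congrArg (fun p => p.coeff (2 * a.natDegree)) h
    have c1 : (a ^ 2).coeff (2 * a.natDegree) = a.leadingCoeff ^ 2 := by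
      rw [← dA, coeff_natDegree, leadingCoeff_pow]
    have c2 : (a * b * B).coeff (2 * a.natDegree) = a.leadingCoeff * b.leadingCoeff := by
      rw [show 2 * a.natDegree = (a * b * B).natDegree by omega, coeff_natDegree,
        leadingCoeff_mul, leadingCoeff_mul, hB.leadingCoeff, mul_one]
    have c3 : (b ^ 2 * C).coeff (2 * a.natDegree) = b.leadingCoeff ^ 2 * C.leadingCoeff := by
      rw [show 2 * a.natDegree = (b ^ 2 * C).natDegree by omega, coeff_natDegree,
        leadingCoeff_mul, leadingCoeff_pow]
    simp only [usnNrm, coeff_add, c1, c2, c3] at hco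
    rw [coeff_C_of_ne_zero (by omega)] at hco
    have hbl : b.leadingCoeff ≠ 0 := leadingCoeff_ne_zero.mpr hb
    have h2 : (2 : K) = 0 := CharTwo.two_eq_zero
    refine ⟨a.leadingCoeff / b.leadingCoeff, ?_⟩
    field_simp
    grind

lemma usn_unit_iff {K F : Type*} [Field K] [CharP K 2] [Field F] [Algebra K[X] F]
    (O : Subalgebra K[X] F) (B C : K[X]) (w : F)
    (hw : w ^ 2 + algebraMap K[X] F B * w = algebraMap K[X] F C)
    (hO : ∀ z, z ∈ O ↔ ∃ a b, z = algebraMap K[X] F a + algebraMap K[X] F b * w)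
    (hind : ∀ a b, algebraMap K[X] F a + algebraMap K[X] F b * w = 0 → a = 0 ∧ b = 0) (e : F) :
    (e ∈ O ∧ ∃ e' ∈ O, e * e' = 1) ↔ ∃ a b, ∃ n : K, n ≠ 0 ∧ usnNrm B C a b = Polynomial.C n ∧
      e = algebraMap K[X] F a + algebraMap K[X] F b * w := by
  have h2 : (2 : K[X]) = 0 := CharTwo.two_eq_zero
  have h2F : (2 : F) = 0 := by
    have := congrArg (algebraMap K[X] F) h2
    rwa [map_ofNat, map_zero] at this
  constructor
  · rintro ⟨he, e', he', h1⟩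
    obtain ⟨a, b, rfl⟩ := (hO e).1 he
    obtain ⟨a', b', rfl⟩ := (hO e').1 he'
    have := hind (a * a' + b * b' * C - 1) (a * b' + a' * b + b * b' * B) (by
      simp only [map_add, map_mul, map_sub, map_one]
      grind)
    have hn := usn_nrm_mul B C a b a' b'
    rw [this.2, sub_eq_zero.mp this.1] at hn
    have hu : IsUnit (usnNrm B C a b) := by
      refine IsUnit.of_mul_eq_one (usnNrm B C a' b') ?_
      rw [← hn]; simp [usnNrm]
    obtain ⟨n, hn, hn'⟩ := Polynomial.isUnit_iff.1 hu
    exact ⟨a, b, n, hn.ne_zero, hn'.symm, rfl⟩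
  · rintro ⟨a, b, n, hn, h, rfl⟩
    refine ⟨(hO _).2 ⟨a, b, rfl⟩, algebraMap K[X] F (Polynomial.C n⁻¹ * (a + b * B)) +
      algebraMap K[X] F (Polynomial.C n⁻¹ * b) * w, (hO _).2 ⟨_, _, rfl⟩, ?_⟩
    have hcc : Polynomial.C n⁻¹ * Polynomial.C n = 1 := by
      rw [← Polynomial.C_mul, inv_mul_cancel₀ hn, Polynomial.C_1]
    rw [← h] at hcc
    have := congrArg (algebraMap K[X] F) hcc
    simp only [usnNrm, map_add, map_mul, map_pow, map_one] at this ⊢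
    grind

lemma usn_forward {K F : Type*} [Field K] [CharP K 2] [Field F] [Algebra K[X] F]
    (O : Subalgebra K[X] F) (B C : K[X]) (w : F)
    (hw : w ^ 2 + algebraMap K[X] F B * w = algebraMap K[X] F C)
    (hO : ∀ z, z ∈ O ↔ ∃ a b, z = algebraMap K[X] F a + algebraMap K[X] F b * w)
    (hind : ∀ a b, algebraMap K[X] F a + algebraMap K[X] F b * w = 0 → a = 0 ∧ b = 0)
    (hB : B.Monic) (hC : 0 < C.natDegree)
    (hpole : 0 ≤ 2 * (B.natDegree : ℤ) - (C.natDegree : ℤ) ∨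
      Odd (2 * (B.natDegree : ℤ) - (C.natDegree : ℤ)))
    (hgen : ∀ r ∈ O, ∃ (k : ℕ) (e : Fin k → F), 1 ≤ k ∧
      (∀ i, e i ∈ O ∧ ∃ e' ∈ O, e i * e' = 1) ∧ r = ∑ i, e i) :
    B.natDegree = 1 ∧
        (C.natDegree ≤ 1 ∨ (C.natDegree = 2 ∧ ∃ a : K, C.leadingCoeff = a ^ 2 + a)) := by
  have h2 : (2 : K[X]) = 0 := CharTwo.two_eq_zero
  have hinj : ∀ a b a' b' : K[X], algebraMap K[X] F a + algebraMap K[X] F b * w =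
      algebraMap K[X] F a' + algebraMap K[X] F b' * w → a = a' ∧ b = b' := by
    intro a b a' b' h
    have := hind (a - a') (b - b') (by simp only [map_sub]; linear_combination h)
    exact ⟨sub_eq_zero.mp this.1, sub_eq_zero.mp this.2⟩
  -- sums of units inherit additive properties of units
  have key : ∀ Q : F → Prop, Q 0 → (∀ x y, Q x → Q y → Q (x + y)) →
      (∀ a b, ∀ n : K, n ≠ 0 → usnNrm B C a b = Polynomial.C n →
        Q (algebraMap K[X] F a + algebraMap K[X] F b * w)) → ∀ a b,
        Q (algebraMap K[X] F a + algebraMap K[X] F b * w) := by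
    intro Q h0 hadd hun a b
    obtain ⟨k, e, -, he, hs⟩ := hgen _ ((hO _).2 ⟨a, b, rfl⟩)
    rw [hs]
    refine Finset.sum_induction _ Q hadd h0 ?_
    intro i _
    obtain ⟨a, b, n, hn, h, h'⟩ := (usn_unit_iff O B C w hw hO hind (e i)).1 (he i)
    rw [h']; exact hun a b n hn h
  have hex : ∃ d : ℕ, ∃ a b, ∃ n : K, n ≠ 0 ∧ b ≠ 0 ∧ usnNrm B C a b = Polynomial.C n ∧
      b.natDegree = d := by
    by_contra! hcon
    have := key (fun z => ∃ a : K[X], z = algebraMap K[X] F a) ⟨0, by simp⟩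
      (by rintro _ _ ⟨a, rfl⟩ ⟨b, rfl⟩; exact ⟨a + b, by simp⟩)
      (by
        intro a b n hn h
        by_cases hb : b = 0
        · exact ⟨a, by simp [hb]⟩
        · exact absurd rfl (hcon _ a b n hn hb h)) 0 1
    obtain ⟨a, ha⟩ := this
    have := hinj 0 1 a 0 (by rw [ha]; simp)
    exact one_ne_zero this.2
  classical
  obtain ⟨a0, b0, n0, hn0, hb0, h0, hd0⟩ := Nat.find_spec hex
  have hmin : ∀ a b : K[X], ∀ n : K, n ≠ 0 → b ≠ 0 → usnNrm B C a b = Polynomial.C n →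
      b0.natDegree ≤ b.natDegree := by
    intro a b n hn hb h
    rw [hd0]
    exact Nat.find_min' hex ⟨a, b, n, hn, hb, h, rfl⟩
  obtain ⟨hle, hsplit⟩ := usn_nonsplit B C a0 b0 hB hC hb0 n0 h0 hpole
  have hBpos : 0 < B.natDegree := by omega
  have hN : Polynomial.C n0 = a0 ^ 2 + a0 * b0 * B + b0 ^ 2 * C := h0.symm
  have hP := usn_induct B C a0 b0 hBpos hb0 n0 hn0 h0 hmin
    (fun a b => ∃ c d : K[X], a = c.comp (b0 * B) + d.comp (b0 * B) * a0 ∧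
      b = d.comp (b0 * B) * b0)
    (by intro k _; exact ⟨Polynomial.C k, 0, by simp⟩)
    (by
      rintro k _ a b ⟨c, d, rfl, rfl⟩
      refine ⟨Polynomial.C k * c, Polynomial.C k * d, ?_, ?_⟩ <;> simp only [mul_comp, C_comp] <;>
        ring)
    (by
      rintro a b ⟨c, d, rfl, rfl⟩
      refine ⟨d * Polynomial.C n0, c + d * X, ?_, ?_⟩ <;>
        simp only [mul_comp, C_comp, add_comp, X_comp] <;> clear * - h2 hN <;> grind)
    (by
      rintro a b ⟨c, d, rfl, rfl⟩
      refine ⟨c * X + d * Polynomial.C n0, c, ?_, ?_⟩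
      · simp only [mul_comp, C_comp, add_comp, X_comp]
        clear * - h2 hN
        grind
      · clear * - h2
        grind)
  have hall : ∀ a b : K[X], ∃ c d : K[X], a = c.comp (b0 * B) + d.comp (b0 * B) * a0 ∧
      b = d.comp (b0 * B) * b0 := by
    intro a b
    have := key (fun z => ∃ a b : K[X], z = algebraMap K[X] F a + algebraMap K[X] F b * w ∧
      ∃ c d : K[X], a = c.comp (b0 * B) + d.comp (b0 * B) * a0 ∧
      b = d.comp (b0 * B) * b0) ⟨0, 0, by simp, 0, 0, by simp, by simp⟩
      (by
        rintro _ _ ⟨_, _, rfl, c, d, rfl, rfl⟩ ⟨_, _, rfl, c', d', rfl, rfl⟩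
        refine ⟨_, _, ?_, c + c', d + d', rfl, rfl⟩
        simp only [add_comp, map_add, map_mul]; ring)
      (by
        intro a b n hn h
        exact ⟨a, b, rfl, hP a b n hn h⟩) a b
    obtain ⟨a', b', he, h⟩ := this
    obtain ⟨rfl, rfl⟩ := hinj _ _ _ _ he
    exact h
  have hb0u : b0.natDegree = 0 := by
    obtain ⟨c, d, -, h⟩ := hall 0 1
    exact natDegree_eq_zero_of_isUnit (IsUnit.of_mul_eq_one_right _ h.symm)
  have hB1 : B.natDegree = 1 := by
    obtain ⟨c, d, h, h'⟩ := hall X 0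
    have hd : d.comp (b0 * B) = 0 := by
      rcases mul_eq_zero.mp h'.symm with h | h
      · exact h
      · exact absurd h hb0
    rw [hd, zero_mul, add_zero] at h
    have := congrArg natDegree h
    rw [natDegree_X, natDegree_comp, natDegree_mul hb0 hB.ne_zero, hb0u, zero_add] at this
    exact Nat.eq_one_of_mul_eq_one_left this.symm
  refine ⟨hB1, ?_⟩
  rcases Nat.lt_or_ge 1 C.natDegree with h | h
  · right
    exact ⟨by omega, hsplit (by omega)⟩
  · exact Or.inl h

lemma usn_reverse {K F : Type*} [Field K] [CharP K 2] [Field F] [Algebra K[X] F]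
    [Algebra K F] [IsScalarTower K K[X] F]
    (O : Subalgebra K[X] F) (B C : K[X]) (w : F)
    (hw : w ^ 2 + algebraMap K[X] F B * w = algebraMap K[X] F C)
    (hO : ∀ z, z ∈ O ↔ ∃ a b, z = algebraMap K[X] F a + algebraMap K[X] F b * w)
    (hind : ∀ a b, algebraMap K[X] F a + algebraMap K[X] F b * w = 0 → a = 0 ∧ b = 0)
    (hB : B.Monic) (hB1 : B.natDegree = 1) (a0 : K[X]) (n0 : K) (hn0 : n0 ≠ 0)
    (h0 : usnNrm B C a0 1 = Polynomial.C n0) :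
    SubringUnitSumNumberOmega O := by
  have h2 : (2 : K[X]) = 0 := CharTwo.two_eq_zero
  have h2F : (2 : F) = 0 := by
    have := congrArg (algebraMap K[X] F) h2
    rwa [map_ofNat, map_zero] at this
  have hAC : ∀ k : K, algebraMap K[X] F (Polynomial.C k) = algebraMap K F k := by
    intro k
    rw [IsScalarTower.algebraMap_apply K K[X] F, Polynomial.algebraMap_eq]
  have hinjA : Function.Injective (algebraMap K[X] F) := by
    rw [injective_iff_map_eq_zero]
    intro a ha
    exact (hind a 0 (by simp [ha])).1
  obtain ⟨β, hβ⟩ : ∃ β : K, B = X + Polynomial.C β := by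
    refine ⟨B.coeff 0, ?_⟩
    have := Polynomial.eq_X_add_C_of_natDegree_le_one hB1.le
    rwa [← hB1, coeff_natDegree, hB.leadingCoeff, C_1, one_mul] at this
  set ε : F := algebraMap K[X] F a0 + w with hε
  set ε' : F := algebraMap K[X] F (a0 + B) + w with hε'
  have hεε : ε * ε' = algebraMap K F n0 := by
    rw [← hAC, ← h0, hε, hε']
    simp only [usnNrm, map_add, map_mul, map_pow, map_one]
    grind
  have hsum : ε + ε' = algebraMap K[X] F B := by
    rw [hε, hε']
    simp only [map_add]
    grind
  have hn0F : algebraMap K F n0 ≠ 0 := by simpa using hn0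
  have hε0 : ε ≠ 0 := left_ne_zero_of_mul (hεε ▸ hn0F)
  have hUε : ε ∈ O ∧ ∃ e' ∈ O, ε * e' = 1 :=
    (usn_unit_iff O B C w hw hO hind ε).2 ⟨a0, 1, n0, hn0, h0, by simp [hε]⟩
  have hUε' : ε' ∈ O ∧ ∃ e' ∈ O, ε' * e' = 1 :=
    (usn_unit_iff O B C w hw hO hind ε').2 ⟨a0 + B, 1, n0, hn0, by
      have := usn_nrm_conj B C a0 1
      rw [one_mul] at this
      rw [this, h0], by simp [hε']⟩
  have hUk : ∀ k : K, k ≠ 0 → algebraMap K F k ∈ O ∧ ∃ e' ∈ O, algebraMap K F k * e' = 1 :=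
    fun k hk => (usn_unit_iff O B C w hw hO hind _).2 ⟨Polynomial.C k, 0, k ^ 2,
      pow_ne_zero 2 hk, by simp [usnNrm], by simp [hAC]⟩
  constructor
  · -- every element is a sum of units
    let M : Submonoid F :=
      { carrier := {z | z ∈ O ∧ ∃ e' ∈ O, z * e' = 1}
        one_mem' := ⟨O.one_mem, 1, O.one_mem, one_mul 1⟩
        mul_mem' := by
          rintro x y ⟨hx, x', hx', hxx⟩ ⟨hy, y', hy', hyy⟩
          exact ⟨O.mul_mem hx hy, x' * y', O.mul_mem hx' hy', by
            rw [mul_mul_mul_comm, hxx, hyy, one_mul]⟩ }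
    have hM : ∀ z, (z ∈ O ∧ ∃ e' ∈ O, z * e' = 1) → z ∈ M.subsemiringClosure := by
      intro z hz
      rw [Submonoid.subsemiringClosure_mem]
      exact AddSubmonoid.subset_closure hz
    have hK : ∀ k : K, algebraMap K F k ∈ M.subsemiringClosure := by
      intro k
      by_cases hk : k = 0
      · rw [hk, map_zero]; exact zero_mem _
      · exact hM _ (hUk k hk)
    have hX : algebraMap K[X] F X ∈ M.subsemiringClosure := by
      have : algebraMap K[X] F X = ε + ε' + algebraMap K F β := by
        rw [hsum, hβ, map_add, hAC]; grind
      rw [this]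
      exact add_mem (add_mem (hM _ hUε) (hM _ hUε')) (hK β)
    have hpoly : ∀ a : K[X], algebraMap K[X] F a ∈ M.subsemiringClosure := by
      intro a
      induction a using Polynomial.induction_on' with
      | add p q hp hq => rw [map_add]; exact add_mem hp hq
      | monomial n k =>
        rw [← C_mul_X_pow_eq_monomial, map_mul, map_pow, hAC]
        exact mul_mem (hK k) (pow_mem hX n)
    have hwm : w ∈ M.subsemiringClosure := by
      have : w = ε + algebraMap K[X] F a0 := by rw [hε]; grind
      rw [this]
      exact add_mem (hM _ hUε) (hpoly a0)
    intro r hr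
    obtain ⟨a, b, rfl⟩ := (hO r).1 hr
    have hmem : algebraMap K[X] F a + algebraMap K[X] F b * w ∈ M.subsemiringClosure :=
      add_mem (hpoly a) (mul_mem (hpoly b) hwm)
    rw [Submonoid.subsemiringClosure_mem] at hmem
    obtain ⟨l, hl, hs⟩ := AddSubmonoid.exists_list_of_mem_closure hmem
    rw [← hs]
    by_cases hl0 : l = []
    · subst hl0
      refine ⟨2, fun _ => 1, by norm_num,
        fun _ => ⟨O.one_mem, 1, O.one_mem, one_mul 1⟩, ?_⟩
      simp [h2F]
    · refine ⟨l.length, l.get, List.length_pos_iff.2 hl0, fun i => hl _ (List.get_mem l i), ?_⟩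
      rw [← List.sum_ofFn, List.ofFn_get]
  · -- unboundedness
    intro N hN
    have hunits := usn_induct B C a0 1 (by omega) one_ne_zero n0 hn0 h0 (by simp)
      (fun a b => ∃ k : K, ∃ n : ℤ,
        algebraMap K[X] F a + algebraMap K[X] F b * w = algebraMap K F k * ε ^ n)
      (by
        intro k _
        exact ⟨k, 0, by simp [hAC]⟩)
      (by
        rintro k _ a b ⟨k', n, h⟩
        refine ⟨k * k', n, ?_⟩
        simp only [map_mul, hAC]
        linear_combination algebraMap K F k * h)
      (by
        rintro a b ⟨k, n, h⟩
        refine ⟨k, n + 1, ?_⟩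
        rw [zpow_add_one₀ hε0, ← mul_assoc, ← h, hε]
        simp only [map_add, map_mul, map_one, ← hw]
        clear * - h2F
        grind)
      (by
        rintro a b ⟨k, n, h⟩
        refine ⟨k * n0, n - 1, ?_⟩
        rw [zpow_sub_one₀ hε0, map_mul, ← hεε,
          show algebraMap K F k * (ε * ε') * (ε ^ n * ε⁻¹) = (algebraMap K F k * ε ^ n) * ε' by
            field_simp, ← h, hε']
        simp only [map_add, map_mul, map_one, ← hw]
        clear * - h2F
        grind)
    have htr : Transcendental K ε := by
      intro halg
      have hε'inv : ε' = algebraMap K F n0 * ε⁻¹ := by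
        rw [← hεε]; field_simp
      have h1 : IsAlgebraic K ε' := by
        rw [hε'inv]
        exact (isAlgebraic_algebraMap n0).mul halg.inv
      have h3 : IsAlgebraic K (algebraMap K[X] F X) := by
        have : algebraMap K[X] F X = ε + ε' + algebraMap K F β := by
          rw [hsum, hβ, map_add, hAC]; grind
        rw [this]
        exact (halg.add h1).add (isAlgebraic_algebraMap β)
      rw [isAlgebraic_algebraMap_iff hinjA] at h3
      exact Polynomial.transcendental_X K h3
    refine ⟨∑ i ∈ Finset.range (N + 1), ε ^ i, ?_, ?_⟩
    · exact O.sum_mem fun i _ => O.pow_mem hUε.1 i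
    · rintro ⟨k, e, -, hkN, he, hs⟩
      have hform : ∀ i, ∃ c : K, ∃ n : ℤ, e i = algebraMap K F c * ε ^ n := by
        intro i
        obtain ⟨a, b, n, hn, h, h'⟩ := (usn_unit_iff O B C w hw hO hind (e i)).1 (he i)
        rw [h']
        exact hunits a b n hn h
      choose c n hcn using hform
      let S : ℕ := ∑ j, (n j).natAbs
      have hS : ∀ j, 0 ≤ n j + S := by
        intro j
        have : (n j).natAbs ≤ S :=
          Finset.single_le_sum (f := fun j => (n j).natAbs) (fun _ _ => Nat.zero_le _)
            (Finset.mem_univ j)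
        omega
      let P : K[X] := ∑ i ∈ Finset.range (N + 1), X ^ (i + S) -
        ∑ j, Polynomial.C (c j) * X ^ (n j + S).toNat
      have hP : aeval ε P = 0 := by
        simp only [P, map_sub, map_sum, map_mul, map_pow, aeval_X, aeval_C]
        have e1 : ∑ i ∈ Finset.range (N + 1), ε ^ (i + S) =
            (∑ i ∈ Finset.range (N + 1), ε ^ i) * ε ^ S := by
          rw [Finset.sum_mul]; simp only [pow_add]
        have e2 : ∑ j, algebraMap K F (c j) * ε ^ (n j + S).toNat = (∑ j, e j) * ε ^ S := by
          rw [Finset.sum_mul]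
          refine Finset.sum_congr rfl fun j _ => ?_
          rw [hcn j, mul_assoc, ← zpow_natCast ε S, ← zpow_add₀ hε0, ← zpow_natCast,
            Int.toNat_of_nonneg (hS j)]
        rw [e1, e2, hs, sub_self]
      have hP0 : P = 0 := by
        by_contra hne
        exact htr ⟨P, hne, hP⟩
      -- pigeonhole
      obtain ⟨i, hi, hi'⟩ : ∃ i ∈ Finset.range (N + 1),
          i ∉ Finset.univ.image (fun j => (n j).toNat) := by
        by_contra! hcon
        have h1 := Finset.card_le_card (s := Finset.range (N + 1)) hcon
        have h3 := Finset.card_image_le (s := (Finset.univ : Finset (Fin k)))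
          (f := fun j => (n j).toNat)
        simp only [Finset.card_range, Finset.card_univ, Fintype.card_fin] at h1 h3
        omega
      have hco : P.coeff (i + S) = 1 := by
        simp only [P, coeff_sub, finsetSum_coeff, coeff_X_pow, coeff_C_mul]
        rw [Finset.sum_eq_single i, Finset.sum_eq_zero]
        · simp
        · intro j _
          have : i + S ≠ (n j + S).toNat := by
            intro h
            apply hi'
            simp only [Finset.mem_image, Finset.mem_univ, true_and]
            refine ⟨j, ?_⟩
            have := hS j
            omega
          simp [this]
        · intro b _ hb
          rw [if_neg]; omega
        · intro h; exact absurd hi h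
      rw [hP0] at hco
      simp at hco

lemma usn_div {K : Type*} [Field K] (p B C r t : K[X]) (hp : Prime p) (n : ℕ)
    (hB : p ∣ B) (hC : p ∣ C) (hC2 : ¬ p ^ 2 ∣ C)
    (h : p ^ (2 * n) ∣ r ^ 2 + r * t * B + t ^ 2 * C) : p ^ n ∣ r ∧ p ^ n ∣ t := by
  suffices H : ∀ k, k ≤ n → p ^ k ∣ r ∧ p ^ k ∣ t from H n le_rfl
  intro k
  induction k with
  | zero => intro _; simp
  | succ k ih =>
    intro hk
    obtain ⟨⟨r1, rfl⟩, t1, rfl⟩ := ih (by omega)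
    have hpk : p ^ (2 * k) ≠ 0 := pow_ne_zero _ hp.ne_zero
    have h1 : p ^ 2 ∣ r1 ^ 2 + r1 * t1 * B + t1 ^ 2 * C := by
      rw [← mul_dvd_mul_iff_left hpk, ← pow_add]
      refine (pow_dvd_pow p (by omega : 2 * k + 2 ≤ 2 * n)).trans (h.trans (dvd_of_eq ?_))
      ring
    have hr : p ∣ r1 := by
      have h3 : p ∣ r1 ^ 2 + r1 * t1 * B + t1 ^ 2 * C := (dvd_pow_self p two_ne_zero).trans h1
      rw [dvd_add_left (hC.mul_left _), dvd_add_left (hB.mul_left _)] at h3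
      exact hp.dvd_of_dvd_pow h3
    have ht : p ∣ t1 := by
      have h3 : p ^ 2 ∣ r1 ^ 2 + r1 * t1 * B :=
        dvd_add (pow_dvd_pow_of_dvd hr 2) (by
          rw [pow_two, mul_assoc]; exact mul_dvd_mul hr (hB.mul_left _))
      rw [dvd_add_right h3] at h1
      by_contra hnt
      obtain ⟨C', rfl⟩ := hC
      rw [mul_left_comm, pow_two, mul_dvd_mul_iff_left hp.ne_zero] at h1
      rcases hp.dvd_or_dvd h1 with h4 | h4
      · exact hnt (hp.dvd_of_dvd_pow h4)
      · apply hC2; rw [pow_two]; exact mul_dvd_mul_left _ h4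
    exact ⟨by rw [pow_succ]; exact mul_dvd_mul_left _ hr,
      by rw [pow_succ]; exact mul_dvd_mul_left _ ht⟩

lemma usn_structure {K : Type*} [Field K] [CharP K 2]
    (B C : K[X]) (hB0 : B ≠ 0)
    (hdiv : ∀ r t : K[X], B ^ 2 ∣ r ^ 2 + r * t * B + t ^ 2 * C → B ∣ r ∧ B ∣ t)
    (q : (RatFunc K)[X])
    (hq : q = X ^ 2 + X - Polynomial.C
      (algebraMap K[X] (RatFunc K) C / (algebraMap K[X] (RatFunc K) B) ^ 2))
    (hirr : Irreducible q) :
    ∃ w : AdjoinRoot q,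
      w ^ 2 + algebraMap K[X] (AdjoinRoot q) B * w = algebraMap K[X] (AdjoinRoot q) C ∧
      (∀ z, z ∈ integralClosure K[X] (AdjoinRoot q) ↔
        ∃ a b, z = algebraMap K[X] (AdjoinRoot q) a + algebraMap K[X] (AdjoinRoot q) b * w) ∧
      (∀ a b, algebraMap K[X] (AdjoinRoot q) a + algebraMap K[X] (AdjoinRoot q) b * w = 0 →
        a = 0 ∧ b = 0) := by
  have : Fact (Irreducible q) := ⟨hirr⟩
  have h2 : (2 : K[X]) = 0 := CharTwo.two_eq_zero
  have h2R : (2 : RatFunc K) = 0 := by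
    have := congrArg (algebraMap K[X] (RatFunc K)) h2
    rwa [map_ofNat, map_zero] at this
  have h2F : (2 : AdjoinRoot q) = 0 := by
    have := congrArg (algebraMap (RatFunc K) (AdjoinRoot q)) h2R
    rwa [map_ofNat, map_zero] at this
  set bR : RatFunc K := algebraMap K[X] (RatFunc K) B with hbR
  set cR : RatFunc K := algebraMap K[X] (RatFunc K) C with hcR
  have hinjR : Function.Injective (algebraMap K[X] (RatFunc K)) := IsFractionRing.injective _ _
  have hbR0 : bR ≠ 0 := by rw [hbR]; simpa using hB0
  have hqdeg : q.natDegree = 2 := by rw [hq]; compute_degree!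
  have hqm : q.Monic := by rw [hq]; monicity!
  set y : AdjoinRoot q := AdjoinRoot.root q with hy
  let A : RatFunc K →+* AdjoinRoot q := algebraMap (RatFunc K) (AdjoinRoot q)
  have hAinj : Function.Injective A := A.injective
  have hev : ∀ (f : RatFunc K →+* AdjoinRoot q) (z : AdjoinRoot q),
      eval₂ f z q = z ^ 2 + z - f (cR / bR ^ 2) := by
    intro f z
    refine (congrArg (eval₂ f z) hq).trans ?_
    simp only [eval₂_sub, eval₂_add, eval₂_pow, eval₂_X, eval₂_C]
  have hyeq : y ^ 2 + y = A (cR / bR ^ 2) := by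
    have := AdjoinRoot.eval₂_root q
    rw [hev] at this
    exact sub_eq_zero.mp this
  have hrep : ∀ z : AdjoinRoot q, ∃ s t : RatFunc K, z = A s + A t * y := by
    intro z
    induction z using AdjoinRoot.induction_on with
    | ih p =>
      have hd : (p %ₘ q).natDegree ≤ 1 := by
        have := natDegree_modByMonic_lt p hqm (by intro h; rw [h] at hqdeg; simp at hqdeg)
        omega
      obtain ⟨t, s, hts⟩ := exists_eq_X_add_C_of_natDegree_le_one hd
      refine ⟨s, t, ?_⟩
      have : AdjoinRoot.mk q p = AdjoinRoot.mk q (p %ₘ q) := by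
        rw [AdjoinRoot.mk_eq_mk]
        exact ⟨p /ₘ q, by rw [sub_eq_iff_eq_add', modByMonic_add_div]⟩
      rw [this, hts, map_add, map_mul, AdjoinRoot.mk_X, AdjoinRoot.mk_C, AdjoinRoot.mk_C, add_comm]
      rfl
  have hlin : ∀ s t : RatFunc K, A s + A t * y = 0 → s = 0 ∧ t = 0 := by
    intro s t h
    have h1 : AdjoinRoot.mk q (Polynomial.C t * X + Polynomial.C s) = 0 := by
      rw [map_add, map_mul, AdjoinRoot.mk_X, AdjoinRoot.mk_C, AdjoinRoot.mk_C, add_comm]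
      exact h
    rw [AdjoinRoot.mk_eq_zero] at h1
    have h3 : Polynomial.C t * X + Polynomial.C s = 0 := by
      by_contra hne
      have := natDegree_le_of_dvd h1 hne
      have := natDegree_linear_le (a := t) (b := s)
      omega
    constructor
    · simpa using congrArg (fun p => p.coeff 0) h3
    · simpa using congrArg (fun p => p.coeff 1) h3
  have htower : ∀ a : K[X], algebraMap K[X] (AdjoinRoot q) a = A (algebraMap K[X] (RatFunc K) a) :=
    fun a => IsScalarTower.algebraMap_apply K[X] (RatFunc K) (AdjoinRoot q) a
  have hinjF : Function.Injective (algebraMap K[X] (AdjoinRoot q)) := by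
    intro a b h
    rw [htower, htower] at h
    exact hinjR (hAinj h)
  have hbF0 : A bR ≠ 0 := by simpa using hbR0
  have hweq : (A bR * y) ^ 2 + A bR * (A bR * y) = A cR := by
    have : A cR = A bR ^ 2 * A (cR / bR ^ 2) := by
      rw [← map_pow, ← map_mul]; congr 1; field_simp
    rw [this, ← hyeq]; ring
  have hwint : IsIntegral K[X] (A bR * y) := by
    refine ⟨X ^ 2 + Polynomial.C B * X - Polynomial.C C, by monicity!, ?_⟩
    simp only [eval₂_sub, eval₂_add, eval₂_mul, eval₂_pow, eval₂_X, eval₂_C, htower]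
    rw [← hbR, ← hcR, hweq, sub_self]
  refine ⟨A bR * y, ?_, ?_, ?_⟩
  · rw [htower, htower]; exact hweq
  · intro z
    constructor
    · intro hz
      have hz : IsIntegral K[X] z := hz
      obtain ⟨s, t, rfl⟩ := hrep z
      -- conjugation
      let σ : AdjoinRoot q →ₐ[RatFunc K] AdjoinRoot q :=
        AdjoinRoot.liftAlgHom q (Algebra.ofId (RatFunc K) (AdjoinRoot q)) (y + 1) (by
          refine (hev A (y + 1)).trans ?_
          rw [← hyeq]
          clear * - h2F
          grind)
      have hσy : σ y = y + 1 := AdjoinRoot.liftAlgHom_root _ _ _ _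
      have hσA : ∀ x, σ (A x) = A x := fun x => σ.commutes x
      have hσz : IsIntegral K[X] (A s + A t * (y + 1)) := by
        have := hz.map (σ.restrictScalars K[X])
        simpa [hσy, hσA] using this
      have htr : IsIntegral K[X] t := by
        have h1 := hz.add hσz
        have : A s + A t * y + (A s + A t * (y + 1)) = A t := by
          clear * - h2F
          grind
        rw [this] at h1
        exact (isIntegral_algHom_iff (IsScalarTower.toAlgHom K[X] (RatFunc K) (AdjoinRoot q))
          hAinj).1 h1
      have hnr : IsIntegral K[X] (s ^ 2 + s * t + t ^ 2 * (cR / bR ^ 2)) := by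
        have h1 := hz.mul hσz
        have : (A s + A t * y) * (A s + A t * (y + 1)) =
            A (s ^ 2 + s * t + t ^ 2 * (cR / bR ^ 2)) := by
          rw [map_add, map_add, map_mul, map_mul, map_pow, map_pow, ← hyeq]
          clear * - h2F
          grind
        rw [this] at h1
        exact (isIntegral_algHom_iff (IsScalarTower.toAlgHom K[X] (RatFunc K) (AdjoinRoot q))
          hAinj).1 h1
      obtain ⟨t', rfl⟩ := IsIntegrallyClosed.algebraMap_eq_of_integral htr
      obtain ⟨N, hN⟩ := IsIntegrallyClosed.algebraMap_eq_of_integral hnr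
      set tR := algebraMap K[X] (RatFunc K) t' with htR
      have hN2 : (s * bR) ^ 2 + (s * bR) * tR * bR + tR ^ 2 * cR =
          algebraMap K[X] (RatFunc K) N * bR ^ 2 := by
        rw [hN]; field_simp
      have hsB : IsIntegral K[X] (s * bR) := by
        refine ⟨X ^ 2 + Polynomial.C (t' * B) * X + Polynomial.C (t' ^ 2 * C - N * B ^ 2),
          by monicity!, ?_⟩
        simp only [eval₂_add, eval₂_mul, eval₂_pow, eval₂_X, eval₂_C, map_mul, map_sub, map_pow,
          eval₂_sub]
        rw [← hbR, ← hcR, ← htR]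
        linear_combination hN2
      obtain ⟨r, hr⟩ := IsIntegrallyClosed.algebraMap_eq_of_integral hsB
      rw [← hr] at hN2
      have hN3 : r ^ 2 + r * t' * B + t' ^ 2 * C = N * B ^ 2 := by
        apply hinjR
        simp only [map_add, map_mul, map_pow]
        exact hN2
      obtain ⟨⟨a, ha⟩, b, hb⟩ := hdiv r t' ⟨N, by rw [hN3, mul_comm]⟩
      refine ⟨a, b, ?_⟩
      have hs : s = algebraMap K[X] (RatFunc K) a := by
        rw [ha, map_mul, ← hbR, mul_comm] at hr
        exact (mul_right_cancel₀ hbR0 hr).symm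
      have ht : tR = bR * algebraMap K[X] (RatFunc K) b := by
        rw [htR, hb, map_mul]
      rw [htower, htower, hs, ht, map_mul]
      ring
    · rintro ⟨a, b, rfl⟩
      exact IsIntegral.add isIntegral_algebraMap (isIntegral_algebraMap.mul hwint)
  · intro a b h
    rw [htower, htower, ← mul_assoc, ← map_mul] at h
    obtain ⟨h1, h3⟩ := hlin _ _ h
    refine ⟨?_, ?_⟩
    · simpa using h1
    · simpa [hbR0] using h3

end UsnHelpers

/-- Classification of separable quadratic function fields in characteristic `2`, given by a
Hasse normal form `y² + y = C(x)/B(x)²`, whose rings of integers have unit sum number `ω`. -/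
theorem unit_sum_number_quadratic_char_two
    (K : Type*) [Field K] [Finite K] (hchar : ringChar K = 2)
    (m : ℕ) (p : Fin m → Polynomial K)
    (hpmonic : ∀ i, (p i).Monic) (hpirr : ∀ i, Irreducible (p i))
    (hpdist : Function.Injective p)
    (n : Fin m → ℕ) (hn : ∀ i, 0 < n i)
    (g : Polynomial K) (hg : ∀ i, ¬ p i ∣ g)
    (B C : Polynomial K)
    (hB : B = ∏ i, p i ^ n i) (hC : C = g * ∏ i, p i)
    (hCnonconst : 0 < C.natDegree)
    (hpole : 0 ≤ 2 * (B.natDegree : ℤ) - (C.natDegree : ℤ) ∨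
      Odd (2 * (B.natDegree : ℤ) - (C.natDegree : ℤ)))
    (q : Polynomial (RatFunc K))
    (hq : q = Polynomial.X ^ 2 + Polynomial.X - Polynomial.C
      (algebraMap (Polynomial K) (RatFunc K) C / (algebraMap (Polynomial K) (RatFunc K) B) ^ 2))
    (hirr : Irreducible q) :
    SubringUnitSumNumberOmega (integralClosure (Polynomial K) (AdjoinRoot q)) ↔
      B.natDegree = 1 ∧
        (C.natDegree ≤ 1 ∨ (C.natDegree = 2 ∧ ∃ a : K, C.leadingCoeff = a ^ 2 + a)) := by
  have : CharP K 2 := ringChar.of_eq hchar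
  have h2 : (2 : Polynomial K) = 0 := CharTwo.two_eq_zero
  have hprime : ∀ i, Prime (p i) := fun i => (hpirr i).prime
  have hBm : B.Monic := by
    rw [hB]; exact Polynomial.monic_prod_of_monic _ _ fun i _ => (hpmonic i).pow _
  have hpB' : ∀ i, p i ^ n i ∣ B := fun i => by
    rw [hB]; exact Finset.dvd_prod_of_mem (fun i => p i ^ n i) (Finset.mem_univ i)
  have hpB : ∀ i, p i ∣ B := fun i => (dvd_pow_self _ (hn i).ne').trans (hpB' i)
  have hpC : ∀ i, p i ∣ C := fun i => by
    rw [hC]; exact (Finset.dvd_prod_of_mem p (Finset.mem_univ i)).mul_left _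
  have hpij : ∀ i j, p i ∣ p j → i = j := fun i j h =>
    hpdist (Polynomial.eq_of_monic_of_associated (hpmonic i) (hpmonic j)
      ((hpirr i).associated_of_dvd (hpirr j) h))
  have hpC2 : ∀ i, ¬ p i ^ 2 ∣ C := by
    intro i h
    rw [hC, ← Finset.mul_prod_erase _ _ (Finset.mem_univ i), mul_left_comm, pow_two,
      mul_dvd_mul_iff_left (hprime i).ne_zero] at h
    rcases (hprime i).dvd_or_dvd h with h | h
    · exact hg i h
    · obtain ⟨j, hj, h⟩ := (hprime i).exists_mem_finset_dvd h
      exact (Finset.mem_erase.1 hj).1 (hpij i j h).symm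
  have hdiv : ∀ r t : Polynomial K, B ^ 2 ∣ r ^ 2 + r * t * B + t ^ 2 * C → B ∣ r ∧ B ∣ t := by
    intro r t h
    have key : ∀ i, p i ^ n i ∣ r ∧ p i ^ n i ∣ t := fun i =>
      usn_div (p i) B C r t (hprime i) (n i) (hpB i) (hpC i) (hpC2 i) (by
        rw [mul_comm, pow_mul]
        exact (pow_dvd_pow_of_dvd (hpB' i) 2).trans h)
    have hco : ((Finset.univ : Finset (Fin m)) : Set (Fin m)).Pairwise
        (Function.onFun IsCoprime fun i => p i ^ n i) := by
      intro i _ j _ hij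
      refine IsCoprime.pow ?_
      rw [(hpirr i).coprime_iff_not_dvd]
      exact fun h => hij (hpij i j h)
    constructor
    · rw [hB]; exact Finset.prod_dvd_of_coprime hco fun i _ => (key i).1
    · rw [hB]; exact Finset.prod_dvd_of_coprime hco fun i _ => (key i).2
  have : Fact (Irreducible q) := ⟨hirr⟩
  obtain ⟨w, hw, hO, hind⟩ := usn_structure B C hBm.ne_zero hdiv q hq hirr
  constructor
  · intro h
    exact usn_forward _ B C w hw hO hind hBm hCnonconst hpole h.1
  · rintro ⟨hB1, hdeg⟩
    have hBirr : Irreducible B := Polynomial.irreducible_of_degree_eq_one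
      (by rw [Polynomial.degree_eq_natDegree hBm.ne_zero, hB1]; rfl)
    obtain ⟨i, hi⟩ : ∃ i, p i = B := by
      have h1 : B ∣ ∏ i, p i ^ n i := dvd_of_eq hB
      obtain ⟨i, -, h⟩ := hBirr.prime.exists_mem_finset_dvd h1
      have h3 := hBirr.prime.dvd_of_dvd_pow h
      exact ⟨i, (Polynomial.eq_of_monic_of_associated hBm (hpmonic i)
        (hBirr.associated_of_dvd (hpirr i) h3)).symm⟩
    have hBC := hpC i
    have hBC2 := hpC2 i
    rw [hi] at hBC hBC2
    obtain ⟨h, hh⟩ := hBC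
    have hh0 : h ≠ 0 := by rintro rfl; simp [hh] at hCnonconst
    have hCd : C.natDegree = 1 + h.natDegree := by
      rw [hh, Polynomial.natDegree_mul hBm.ne_zero hh0, hB1]
    have hlc : C.leadingCoeff = h.leadingCoeff := by
      rw [hh, Polynomial.leadingCoeff_mul, hBm.leadingCoeff, one_mul]
    have hhd : h.natDegree ≤ 1 := by
      rcases hdeg with hd | ⟨hd, -⟩ <;> omega
    obtain ⟨α, hα⟩ : ∃ α : K, h.coeff 1 = α ^ 2 + α := by
      rcases hdeg with hd | ⟨hd, a, ha⟩
      · exact ⟨0, by rw [Polynomial.coeff_eq_zero_of_natDegree_lt (by omega)]; ring⟩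
      · refine ⟨a, ?_⟩
        rw [← ha, hlc, Polynomial.leadingCoeff, show h.natDegree = 1 by omega]
    have hBe := Polynomial.eq_X_add_C_of_natDegree_le_one hB1.le
    rw [show B.coeff 1 = 1 by rw [← hB1]; exact hBm, Polynomial.C_1, one_mul] at hBe
    have hhe := Polynomial.eq_X_add_C_of_natDegree_le_one hhd
    rw [hα] at hhe
    obtain ⟨c, hc⟩ : ∃ c : K, h = Polynomial.C (α ^ 2 + α) * B + Polynomial.C c := by
      refine ⟨h.coeff 0 - (α ^ 2 + α) * B.coeff 0, ?_⟩
      rw [Polynomial.C_sub, Polynomial.C_mul]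
      linear_combination hhe - Polynomial.C (α ^ 2 + α) * hBe
    have hc0 : c ≠ 0 := by
      rintro rfl
      apply hBC2
      rw [hh, hc, pow_two]
      exact mul_dvd_mul_left _ ⟨Polynomial.C (α ^ 2 + α), by simp [mul_comm]⟩
    refine usn_reverse _ B C w hw hO hind hBm hB1
      (Polynomial.C α * B + Polynomial.C c) (c ^ 2) (pow_ne_zero 2 hc0) ?_
    rw [hh, hc]
    simp only [usnNrm, Polynomial.C_add, Polynomial.C_pow]
    clear * - h2
    grind
end
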